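/- arXiv:2002.02128 — 3 statements merged into one kernel-verified Lean document; each statement's English description precedes it below -/
import Mathlib

section
/- Let R be a Noetherian domain and A an 𝔸^{m+1}-fibration over R. Then an m-tuple W = (W₁,…,W_m) of elements of A is an m-tuple residual variable of A over R if and only if A is an 𝔸¹-fibration over R[W]. -/
open TensorProduct

noncomputable section

/-- The residue field `κ(P) = R_P / P R_P` of a commutative ring `R` at a prime ideal `P`. -/
abbrev ResidueFieldAt (R : Type*) [CommRing R] (P : Ideal R) [P.IsPrime] : Type _ :=
  IsLocalRing.ResidueField (Localization.AtPrime P)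

/-- `A ⊗_R κ(P)` is a polynomial ring in `n` variables over `B ⊗_R κ(P)`
for every prime ideal `P` of `R`. -/
def FibersPolynomialOver (R B A : Type*) [CommRing R] [CommRing B] [CommRing A]
    [Algebra R B] [Algebra R A] [Algebra B A] [IsScalarTower R B A] (n : ℕ) : Prop :=
  ∀ (P : Ideal R) (_ : P.IsPrime),
    letI : Algebra (ResidueFieldAt R P ⊗[R] B) (ResidueFieldAt R P ⊗[R] A) :=
      (Algebra.TensorProduct.map (AlgHom.id R (ResidueFieldAt R P))
        (IsScalarTower.toAlgHom R B A)).toRingHom.toAlgebra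
    Nonempty ((ResidueFieldAt R P ⊗[R] A) ≃ₐ[ResidueFieldAt R P ⊗[R] B]
      MvPolynomial (Fin n) (ResidueFieldAt R P ⊗[R] B))

/-- `A` is an `𝔸ⁿ`-fibration over `R`: a finitely generated flat `R`-algebra all of whose
fibres are polynomial rings in `n` variables. -/
def IsAffineFibration (R A : Type*) [CommRing R] [CommRing A] [Algebra R A] (n : ℕ) : Prop :=
  Algebra.FiniteType R A ∧ Module.Flat R A ∧
  ∀ (P : Ideal R) (_ : P.IsPrime),
    Nonempty ((ResidueFieldAt R P ⊗[R] A) ≃ₐ[ResidueFieldAt R P]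
      MvPolynomial (Fin n) (ResidueFieldAt R P))

/-- `W` is an `m`-tuple residual variable of the `𝔸ⁿ`-fibration `A` over `R`. -/
def IsResidualVariable (R A : Type*) [CommRing R] [CommRing A] [Algebra R A]
    (n m : ℕ) (W : Fin m → A) : Prop :=
  AlgebraicIndependent R W ∧
  FibersPolynomialOver R (Algebra.adjoin R (Set.range W)) A (n - m)

/-- A module `M` over `A` is stably free if `M ⊕ Aˢ ≅ Aᵗ` for some `s, t`. -/
def IsStablyFree (A M : Type*) [CommRing A] [AddCommGroup M] [Module A M] : Prop :=
  ∃ s t : ℕ, Nonempty ((M × (Fin s → A)) ≃ₗ[A] (Fin t → A))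

end

/-!
Write `B = R[W]`. If `W` is a residual variable, then `B` is a polynomial ring over `R`, and each
fibre of `A` over `B` is a base change of some `A ⊗ κ(P)` over `B ⊗ κ(P)`. It remains to see that
`A` is flat over `B`, knowing that all `A ⊗ κ(P)` are flat over `B ⊗ κ(P)`. Since `R` is Noetherian,
one may assume that `Tor₁ᴮ(A, Q) = 0` whenever `Q` is killed by an ideal strictly larger than `J`,
and prove it for `Q` killed by `J`. If `J` is not prime, then `Q` is an extension of modules killed
by larger ideals. If `J = P` is prime, one reduces to submodules `K` of a `B`-module `N` which is
torsion free over `R ⧸ P`. The kernel of `A ⊗ K → A ⊗ N` then vanishes over `κ(P)`, so each of its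
elements is killed by some `c ∉ P`, while `c` is injective on `A ⊗ K` because `K / cK` is killed by
`P + (c)`.

Conversely, let `A` be an `𝔸¹`-fibration over `B`. Over `κ(P)`, comparing transcendence degrees in
`κ(P) ⊆ B ⊗ κ(P) ⊆ A ⊗ κ(P)` shows that `W` stays algebraically independent. By flatness and
dévissage over the primes of `R`, `W` is then algebraically independent over `R`. Moreover
`B ⊗ κ(P)` is a UFD, and an `𝔸¹`-fibration `A` over a UFD `B` is a polynomial ring (after Russell
and Sathaye): choose `x` and `b ≠ 0` with `b s ∈ B[x]` for all `s` in a finite generating set of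
`A`, and remove the primes `p` of `b` one at a time. As long as `x` is algebraic modulo `p`, write
`x = c + p y` with `c ∈ B` and replace `x` by `y`. This lowers the power of `p` needed to bring into
`B[x]` a generator that is transcendental modulo `p`, so it stops; and once `x` is transcendental
modulo `p`, `p a ∈ B[x]` implies `a ∈ B[x]`.
-/

namespace AffineFibration

universe u v

section ResidueField

variable {R : Type*} [CommRing R] {P : Ideal R} [P.IsPrime] {X Y : Type*} [AddCommGroup X]
  [Module R X] [AddCommGroup Y] [Module R Y]

lemma exists_smul_eq_zero_of_one_tmul_eq_zero (hX : Module.IsTorsionBySet R X (P : Set R)) {x : X}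
    (hx : (1 : P.ResidueField) ⊗ₜ[R] x = 0) : ∃ c ∉ P, c • x = 0 := by
  let _ : Module (R ⧸ P) X := hX.module
  have : IsScalarTower R (R ⧸ P) X := hX.isScalarTower
  have hx' : TensorProduct.mk (R ⧸ P) P.ResidueField X 1 x = 0 := by
    simpa using congrArg (TensorProduct.mapOfCompatibleSMul (R ⧸ P) R R P.ResidueField X) hx
  rw [IsLocalizedModule.eq_zero_iff (nonZeroDivisors (R ⧸ P))] at hx'
  obtain ⟨⟨c, hc⟩, hcx⟩ := hx'
  obtain ⟨c, rfl⟩ := Ideal.Quotient.mk_surjective c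
  exact ⟨c, fun hcP ↦ nonZeroDivisors.ne_zero hc (Ideal.Quotient.eq_zero_iff_mem.2 hcP), hcx⟩

lemma lTensor_residueField_injective (hY : Module.IsTorsionBySet R Y (P : Set R)) {f : X →ₗ[R] Y}
    (hf : Function.Injective f) : Function.Injective (f.lTensor P.ResidueField) := by
  have hX : Module.IsTorsionBySet R X (P : Set R) := fun x c ↦ hf <| by
    rw [LinearMap.map_smul_of_tower, hY, map_zero]
  let _ : Module (R ⧸ P) X := hX.module
  let _ : Module (R ⧸ P) Y := hY.module
  have : IsScalarTower R (R ⧸ P) X := hX.isScalarTower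
  have : IsScalarTower R (R ⧸ P) Y := hY.isScalarTower
  have : Module.Flat (R ⧸ P) P.ResidueField := IsLocalization.flat _ (nonZeroDivisors (R ⧸ P))
  have hsurj : Function.Surjective (algebraMap R (R ⧸ P)) := Ideal.Quotient.mk_surjective
  let F := f.extendScalarsOfSurjective hsurj
  have : CompatibleSMul R (R ⧸ P) P.ResidueField X := ⟨hsurj.forall.2 fun c s x ↦ by
    rw [algebraMap_smul, algebraMap_smul, TensorProduct.smul_tmul]⟩
  have hcomm (z) :
      TensorProduct.mapOfCompatibleSMul (R ⧸ P) R R P.ResidueField Y (f.lTensor P.ResidueField z) =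
        F.lTensor _ (TensorProduct.mapOfCompatibleSMul (R ⧸ P) R R P.ResidueField X z) := by
    induction z with
    | zero => simp only [map_zero]
    | add z w hz hw => simp only [map_add, hz, hw]
    | tmul => rfl
  refine .of_comp (f := TensorProduct.mapOfCompatibleSMul (R ⧸ P) R R P.ResidueField Y) ?_
  rw [show _ ∘ _ = _ from funext hcomm]
  exact (Module.Flat.lTensor_preserves_injective_linearMap (M := P.ResidueField) F hf).comp
    (TensorProduct.equivOfCompatibleSMul (R ⧸ P) R R P.ResidueField X).injective

end ResidueField

section FlatnessCriterion

variable {R : Type v} {B : Type u} {M : Type*} [CommRing R] [CommRing B] [Algebra R B]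
  [AddCommGroup M] [Module B M]

section Comap

variable {T F N : Type*} [AddCommGroup T] [Module B T] [AddCommGroup F] [Module B F]
  [AddCommGroup N] [Module B N]

lemma restrict_comap_surjective {g : F →ₗ[B] N} (hg : Function.Surjective g)
    (K : Submodule B N) :
    Function.Surjective (g.restrict (p := K.comap g) (q := K) fun _ hx ↦ hx) := fun ⟨y, hy⟩ ↦
  let ⟨x, hx⟩ := hg y
  ⟨⟨x, by rwa [Submodule.mem_comap, hx]⟩, Subtype.ext hx⟩

lemma lTensor_subtype_injective_of_comap {g : F →ₗ[B] N} (hg : Function.Surjective g)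
    {K : Submodule B N} (hK : Function.Injective ((K.comap g).subtype.lTensor M)) :
    Function.Injective (K.subtype.lTensor M) := by
  let g' : K.comap g →ₗ[B] K := g.restrict fun _ hx ↦ hx
  have hg' : Function.Surjective g' := restrict_comap_surjective hg K
  have hker : LinearMap.ker g ≤ K.comap g := LinearMap.ker_le_comap g
  have hexact : Function.Exact (Submodule.inclusion hker) g' := fun x ↦ by
    rw [Subtype.ext_iff]
    exact ⟨fun hx ↦ ⟨⟨x, hx⟩, rfl⟩, fun ⟨y, hy⟩ ↦ hy ▸ y.2⟩
  refine LinearMap.injective_of_surjective_of_injective_of_right_exact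
    ((Submodule.inclusion hker).lTensor M) (g'.lTensor M)
    ((LinearMap.ker g).subtype.lTensor M) (g.lTensor M) LinearMap.id
    ((K.comap g).subtype.lTensor M) (K.subtype.lTensor M) ?_ ?_
    (lTensor_exact M hexact hg') (lTensor_exact M g.exact_subtype_ker_map hg)
    Function.surjective_id hK (LinearMap.lTensor_surjective M hg')
  · rw [← LinearMap.lTensor_comp]; rfl
  · rw [← LinearMap.lTensor_comp, ← LinearMap.lTensor_comp]; rfl

lemma lTensor_subtype_comap_injective {i : T →ₗ[B] F} {q : F →ₗ[B] N}
    (hiq : Function.Exact i q) (hq : Function.Surjective q)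
    (hi : Function.Injective (i.lTensor M)) {K : Submodule B N}
    (hK : Function.Injective (K.subtype.lTensor M)) :
    Function.Injective ((K.comap q).subtype.lTensor M) := by
  let q' : K.comap q →ₗ[B] K := q.restrict fun _ hx ↦ hx
  have hq' : Function.Surjective q' := restrict_comap_surjective hq K
  let i' : T →ₗ[B] K.comap q := i.codRestrict _ fun t ↦ by
    simp only [Submodule.mem_comap, hiq.apply_apply_eq_zero, zero_mem]
  have hexact : Function.Exact i' q' := fun x ↦ by
    rw [Subtype.ext_iff]
    exact (hiq x).trans ⟨fun ⟨t, ht⟩ ↦ ⟨t, Subtype.ext ht⟩, fun ⟨t, ht⟩ ↦ ⟨t, congr($ht)⟩⟩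
  have hcomm₁ : (K.comap q).subtype.lTensor M ∘ₗ i'.lTensor M = i.lTensor M := by
    rw [← LinearMap.lTensor_comp]; rfl
  have hcomm₂ : K.subtype.lTensor M ∘ₗ q'.lTensor M =
      q.lTensor M ∘ₗ (K.comap q).subtype.lTensor M := by
    rw [← LinearMap.lTensor_comp, ← LinearMap.lTensor_comp]; rfl
  rw [injective_iff_map_eq_zero]
  intro x hx
  obtain ⟨t, rfl⟩ := (lTensor_exact M hexact hq' x).1 <| hK <| by
    rw [← LinearMap.comp_apply, hcomm₂, LinearMap.comp_apply, hx, map_zero, map_zero]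
  rw [← LinearMap.comp_apply, hcomm₁] at hx
  rw [(map_eq_zero_iff _ hi).1 hx, map_zero]

end Comap

section FlatModulo

/-- `M` is flat over `B` modulo the ideal `J` of `R` if `Tor₁ᴮ(M, Q) = 0` for all `B`-modules `Q`
annihilated by `J`. To avoid `Tor`, write `Q = N / K`; the vanishing for all `Q` is the injectivity
of `M ⊗ K → M ⊗ N` for all such `N` and `K`. -/
def FlatModulo (B : Type u) (M : Type*) [CommRing B] [Algebra R B] [AddCommGroup M] [Module B M]
    (J : Ideal R) : Prop :=
  ∀ ⦃N : Type max u v⦄ [AddCommGroup N] [Module R N] [Module B N] [IsScalarTower R B N]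
    (K : Submodule B N), J ≤ (K.restrictScalars R).colon Set.univ →
      Function.Injective (K.subtype.lTensor M)

lemma flat_of_flatModulo_bot (h : FlatModulo B M (⊥ : Ideal R)) : Module.Flat B M := by
  refine Module.Flat.iff_lTensor_preserves_injective_linearMap'.{max u v}.2
    fun K N _ _ _ _ f hf ↦ ?_
  let : Module R N := Module.compHom N (algebraMap R B)
  have : IsScalarTower R B N := .of_algebraMap_smul fun _ _ ↦ rfl
  have hcomm : f.lTensor M = (LinearMap.range f).subtype.lTensor M ∘ₗ
      (LinearEquiv.ofInjective f hf).lTensor M := by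
    rw [LinearEquiv.coe_lTensor, ← LinearMap.lTensor_comp]; rfl
  rw [hcomm]
  exact (h _ bot_le).comp (LinearEquiv.injective _)

lemma FlatModulo.of_mul_mem {J : Ideal R} {x y : R} (hxy : x * y ∈ J)
    (hx : FlatModulo B M (J ⊔ Ideal.span {x})) (hy : FlatModulo B M (J ⊔ Ideal.span {y})) :
    FlatModulo B M J := by
  intro N _ _ _ _ K hJ
  let G : Submodule B N := K ⊔ LinearMap.range (LinearMap.lsmul B N (algebraMap R B x))
  have hKG : K ≤ G := le_sup_left
  have hG : Function.Injective (G.subtype.lTensor M) := by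
    refine hx G (sup_le (hJ.trans ?_) ((Ideal.span_singleton_le_iff_mem _).2 ?_))
    · exact Submodule.colon_mono hKG subset_rfl
    · exact Submodule.mem_colon.2 fun n _ ↦ Submodule.mem_sup_right ⟨n, algebraMap_smul B x n⟩
  have hK : Function.Injective ((K.submoduleOf G).subtype.lTensor M) := by
    refine hy _ (sup_le (fun j hj ↦ ?_) ((Ideal.span_singleton_le_iff_mem _).2 ?_))
    · exact Submodule.mem_colon.2 fun n _ ↦ Submodule.mem_colon.1 (hJ hj) n trivial
    · rw [Submodule.mem_colon]
      rintro ⟨n, hn⟩ -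
      obtain ⟨k, hk, _, ⟨l, rfl⟩, rfl⟩ := Submodule.mem_sup.1 hn
      change y • (k + algebraMap R B x • l) ∈ K
      rw [algebraMap_smul, smul_add, smul_smul, mul_comm]
      exact K.add_mem (K.smul_of_tower_mem y hk) (Submodule.mem_colon.1 (hJ hxy) l trivial)
  have hcomm : K.subtype.lTensor M = G.subtype.lTensor M ∘ₗ (K.submoduleOf G).subtype.lTensor M ∘ₗ
      (Submodule.submoduleOfEquivOfLe hKG).symm.lTensor M := by
    simp only [LinearEquiv.coe_lTensor, ← LinearMap.lTensor_comp]; rfl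
  rw [hcomm]
  exact hG.comp (hK.comp (LinearEquiv.injective _))

lemma isTorsionBySet_tensorProduct [Module R M] [IsScalarTower R B M] {S : Set R} {N : Type*}
    [AddCommGroup N] [Module R N] [Module B N] [IsScalarTower R B N]
    (hN : Module.IsTorsionBySet R N S) : Module.IsTorsionBySet R (M ⊗[B] N) S := by
  intro x c
  induction x with
  | zero => rw [smul_zero]
  | add x y hx hy => rw [smul_add, hx, hy, add_zero]
  | tmul m n =>
    rw [← algebraMap_smul B (c : R), ← TensorProduct.tmul_smul, algebraMap_smul,
      hN, TensorProduct.tmul_zero]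

lemma lTensor_subtype_injective_of_flatModulo [Module R M] [IsScalarTower R B M] {P : Ideal R}
    (hP : ∀ c ∉ P, FlatModulo B M (P ⊔ Ideal.span {c})) {N : Type max u v} [AddCommGroup N]
    [Module R N] [Module B N] [IsScalarTower R B N] (hN : Module.IsTorsionBySet R N (P : Set R))
    (hinj : ∀ c ∉ P, Function.Injective fun n : N ↦ c • n) (K : Submodule B N)
    (htors : ∀ x : M ⊗[B] K, K.subtype.lTensor M x = 0 → ∃ c ∉ P, c • x = 0) :
    Function.Injective (K.subtype.lTensor M) := by
  rw [injective_iff_map_eq_zero]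
  intro x hx
  obtain ⟨c, hc, hcx⟩ := htors x hx
  let μ : K →ₗ[B] K := LinearMap.lsmul B K (algebraMap R B c)
  have hμ (k : K) : μ k = c • k := algebraMap_smul B c k
  have hμ_inj : Function.Injective μ := fun k l hkl ↦ by
    rw [hμ, hμ] at hkl
    exact Subtype.ext (hinj c hc congr(($hkl : N)))
  have hrange : Function.Injective ((LinearMap.range μ).subtype.lTensor M) := by
    refine hP c hc _ (sup_le (fun j hj ↦ ?_) ((Ideal.span_singleton_le_iff_mem _).2 ?_))
    · refine Submodule.mem_colon.2 fun k _ ↦ ?_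
      have hjk : j • k = 0 := Subtype.ext (@hN k ⟨j, hj⟩)
      rw [hjk]
      exact zero_mem _
    · exact Submodule.mem_colon.2 fun k _ ↦ ⟨k, hμ k⟩
  have hcomm : μ.lTensor M = (LinearMap.range μ).subtype.lTensor M ∘ₗ
      (LinearEquiv.ofInjective μ hμ_inj).lTensor M := by
    rw [LinearEquiv.coe_lTensor, ← LinearMap.lTensor_comp]; rfl
  have hμM : Function.Injective (μ.lTensor M) := by
    rw [hcomm]
    exact hrange.comp (LinearEquiv.injective _)
  have hμx : μ.lTensor M x = c • x := by
    change ((algebraMap R B c) • (LinearMap.id : K →ₗ[B] K)).lTensor M x = _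
    rw [LinearMap.lTensor_smul, LinearMap.lTensor_id, LinearMap.smul_apply, LinearMap.id_apply,
      algebraMap_smul]
  exact hμM (by rw [hμx, hcx, map_zero])

lemma lTensor_baseChange_injective [Module R M] [IsScalarTower R B M] [Module.Flat R M]
    {X Y : Type*} [AddCommGroup X] [Module R X] [AddCommGroup Y] [Module R Y] (f : X →ₗ[R] Y)
    (hf : Function.Injective f) : Function.Injective ((f.baseChange B).lTensor M) := by
  have hcomm (z : M ⊗[B] (B ⊗[R] X)) :
      AlgebraTensorModule.cancelBaseChange R B B M Y ((f.baseChange B).lTensor M z) =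
        f.lTensor M (AlgebraTensorModule.cancelBaseChange R B B M X z) := by
    induction z with
    | zero => simp only [map_zero]
    | add z w hz hw => simp only [map_add, hz, hw]
    | tmul m y =>
      induction y with
      | zero => simp only [TensorProduct.tmul_zero, map_zero]
      | add y y' hy hy' => simp only [TensorProduct.tmul_add, map_add, hy, hy']
      | tmul b x => simp
  refine .of_comp (f := AlgebraTensorModule.cancelBaseChange R B B M Y) ?_
  rw [show _ ∘ _ = _ from funext hcomm]
  exact (Module.Flat.lTensor_preserves_injective_linearMap f hf).comp (LinearEquiv.injective _)

lemma exact_baseChange_ker_subtype {X Y : Type*} [AddCommGroup X] [Module R X] [AddCommGroup Y]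
    [Module R Y] {q : X →ₗ[R] Y} (hq : Function.Surjective q) :
    Function.Exact ((LinearMap.ker q).subtype.baseChange B) (q.baseChange B) :=
  lTensor_exact B q.exact_subtype_ker_map hq

lemma ker_baseChange_le_comap_liftBaseChange {X Y N : Type*} [AddCommGroup X] [Module R X]
    [AddCommGroup Y] [Module R Y] [AddCommGroup N] [Module R N] [Module B N] [IsScalarTower R B N]
    {q : X →ₗ[R] Y} (hq : Function.Surjective q) {f : X →ₗ[R] N} {K : Submodule B N}
    (h : LinearMap.ker q ≤ (K.restrictScalars R).comap f) :
    LinearMap.ker (q.baseChange B) ≤ K.comap (f.liftBaseChange B) := by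
  rw [LinearMap.exact_iff.1 (exact_baseChange_ker_subtype hq)]
  rintro _ ⟨z, rfl⟩
  induction z with
  | zero => simp only [map_zero, zero_mem]
  | add z w hz hw => rw [map_add]; exact add_mem hz hw
  | tmul b x => simpa using K.smul_mem b (h x.2)

lemma lTensor_subtype_injective_of_baseChange [Module R M] [IsScalarTower R B M] [Module.Flat R M]
    {X Y N : Type*} [AddCommGroup X] [Module R X] [AddCommGroup Y] [Module R Y] [AddCommGroup N]
    [Module R N] [Module B N] [IsScalarTower R B N] {q : X →ₗ[R] Y} (hq : Function.Surjective q)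
    {f : X →ₗ[R] N} (hf : Function.Surjective f) {K : Submodule B N}
    (hker : LinearMap.ker q ≤ (K.restrictScalars R).comap f)
    (h : ∀ L : Submodule B (B ⊗[R] Y), Function.Injective (L.subtype.lTensor M)) :
    Function.Injective (K.subtype.lTensor M) := by
  have hfB : Function.Surjective (f.liftBaseChange B) := fun n ↦
    let ⟨x, hx⟩ := hf n
    ⟨1 ⊗ₜ x, by simpa using hx⟩
  have hqB : Function.Surjective (q.baseChange B) := LinearMap.lTensor_surjective B hq
  have hkerB : LinearMap.ker (q.baseChange B) ≤ K.comap (f.liftBaseChange B) :=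
    ker_baseChange_le_comap_liftBaseChange hq hker
  have hker_inj := lTensor_baseChange_injective (B := B) (M := M) (LinearMap.ker q).subtype
    (Submodule.injective_subtype _)
  have hcomap := lTensor_subtype_comap_injective (exact_baseChange_ker_subtype (B := B) hq) hqB
    hker_inj (h ((K.comap (f.liftBaseChange B)).map (q.baseChange B)))
  rw [Submodule.comap_map_eq_self hkerB] at hcomap
  exact lTensor_subtype_injective_of_comap hfB hcomap

lemma smul_injective_baseChange_finsupp_quotient [Module.Flat R B] {P : Ideal R} [P.IsPrime]
    {ι : Type*} {c : R} (hc : c ∉ P) :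
    Function.Injective fun x : B ⊗[R] (ι →₀ R ⧸ P) ↦ c • x := by
  have hinj : Function.Injective (LinearMap.lsmul R (ι →₀ R ⧸ P) c) := fun x y hxy ↦
    Finsupp.ext fun i ↦ mul_left_cancel₀ (mt Ideal.Quotient.eq_zero_iff_mem.1 hc) <| by
      simpa [Algebra.smul_def] using DFunLike.congr_fun hxy i
  have hcomm : (LinearMap.lsmul R (ι →₀ R ⧸ P) c).lTensor B = LinearMap.lsmul R _ c :=
    TensorProduct.ext' fun b x ↦ TensorProduct.tmul_smul c b x
  have h := Module.Flat.lTensor_preserves_injective_linearMap (M := B) _ hinj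
  rwa [hcomm] at h

lemma FlatModulo.of_isPrime [Module R M] [IsScalarTower R B M] [Module.Flat R M] [Module.Flat R B]
    {P : Ideal R} [P.IsPrime] (hP : ∀ c ∉ P, FlatModulo B M (P ⊔ Ideal.span {c}))
    (htors : ∀ (N : Type max u v) [AddCommGroup N] [Module R N] [Module B N] [IsScalarTower R B N],
      Module.IsTorsionBySet R N (P : Set R) → ∀ (K : Submodule B N) (x : M ⊗[B] K),
        K.subtype.lTensor M x = 0 → ∃ c ∉ P, c • x = 0) :
    FlatModulo B M P := by
  intro N _ _ _ _ K hPK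
  have hq : Function.Surjective (Finsupp.mapRange.linearMap (α := N) P.mkQ) :=
    Finsupp.mapRange_surjective _ (map_zero _) P.mkQ_surjective
  have hker : LinearMap.ker (Finsupp.mapRange.linearMap (α := N) P.mkQ) ≤
      (K.restrictScalars R).comap (Finsupp.linearCombination R id) := fun e he ↦ by
    refine (K.restrictScalars R).sum_mem fun n _ ↦ ?_
    have hen : e n ∈ P := Ideal.Quotient.eq_zero_iff_mem.1 (DFunLike.congr_fun he n)
    exact Submodule.mem_colon.1 (hPK hen) n trivial
  have htorsion : Module.IsTorsionBySet R (B ⊗[R] (N →₀ R ⧸ P)) (P : Set R) := by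
    refine isTorsionBySet_tensorProduct fun x c ↦ Finsupp.ext fun n ↦ ?_
    change (c : R) • x n = 0
    rw [Algebra.smul_def, Ideal.Quotient.algebraMap_eq, Ideal.Quotient.eq_zero_iff_mem.2 c.2,
      zero_mul]
  exact lTensor_subtype_injective_of_baseChange hq (Finsupp.linearCombination_id_surjective R N)
    hker fun L ↦ lTensor_subtype_injective_of_flatModulo hP htorsion
      (fun c hc ↦ smul_injective_baseChange_finsupp_quotient hc) L (htors _ htorsion L)

end FlatModulo

section Fiber

attribute [local instance] Algebra.TensorProduct.rightAlgebra

variable [Module R M] [IsScalarTower R B M] {P : Ideal R} [P.IsPrime]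
  {K N : Type*} [AddCommGroup K] [Module R K] [Module B K] [IsScalarTower R B K]
  [AddCommGroup N] [Module R N] [Module B N] [IsScalarTower R B N]

lemma baseChange_fiber_injective {f : K →ₗ[B] N} (hN : Module.IsTorsionBySet R N (P : Set R))
    (hf : Function.Injective f) : Function.Injective (f.baseChange (P.Fiber B)) := by
  let eK := Algebra.IsPushout.cancelBaseChange R P.ResidueField B (P.Fiber B) K
  let eN := Algebra.IsPushout.cancelBaseChange R P.ResidueField B (P.Fiber B) N
  have hcomm (z : P.ResidueField ⊗[R] K) : f.baseChange (P.Fiber B) (eK.symm z) =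
      eN.symm ((f.restrictScalars R).lTensor P.ResidueField z) := by
    induction z with
    | zero => simp only [map_zero]
    | add z w hz hw => simp only [map_add, hz, hw]
    | tmul => simp [eK, eN]
  refine .of_comp_right (g := eK.symm) ?_ eK.symm.surjective
  rw [show _ ∘ _ = _ from funext hcomm]
  exact eN.symm.injective.comp
    (lTensor_residueField_injective hN (f := f.restrictScalars R) hf)

lemma exists_smul_eq_zero_of_lTensor_eq_zero (hfib : Module.Flat (P.Fiber B) (P.Fiber B ⊗[B] M))
    {f : K →ₗ[B] N} (hN : Module.IsTorsionBySet R N (P : Set R))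
    (hf : Function.Injective f) {x : M ⊗[B] K} (hx : f.lTensor M x = 0) : ∃ c ∉ P, c • x = 0 := by
  have hK : Module.IsTorsionBySet R K (P : Set R) := fun k c ↦ hf <| by
    rw [LinearMap.map_smul_of_tower, hN, map_zero]
  let S := P.Fiber B
  apply exists_smul_eq_zero_of_one_tmul_eq_zero (isTorsionBySet_tensorProduct hK)
  apply (Algebra.IsPushout.cancelBaseChange R P.ResidueField B S (M ⊗[B] K)).symm.injective
  rw [map_zero, Algebra.IsPushout.cancelBaseChange_symm_tmul, map_one]
  apply (AlgebraTensorModule.distribBaseChange B S M K).injective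
  apply Module.Flat.lTensor_preserves_injective_linearMap (M := S ⊗[B] M) (f.baseChange S)
    (baseChange_fiber_injective hN hf)
  have hcomm (z) :
      (f.baseChange S).lTensor (S ⊗[B] M) (AlgebraTensorModule.distribBaseChange B S M K z) =
        AlgebraTensorModule.distribBaseChange B S M N ((f.lTensor M).lTensor S z) := by
    induction z with
    | zero => simp only [map_zero]
    | add z w hz hw => simp only [map_add, hz, hw]
    | tmul s z =>
      induction z with
      | zero => simp only [tmul_zero, map_zero]
      | add z w hz hw => simp only [tmul_add, map_add, hz, hw]
      | tmul => simp
  rw [hcomm]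
  simp [hx]

theorem flat_of_flat_fiber [IsNoetherianRing R] [Module.Flat R B] [Module.Flat R M]
    (h : ∀ (P : Ideal R) [P.IsPrime], Module.Flat (P.Fiber B) (P.Fiber B ⊗[B] M)) :
    Module.Flat B M := by
  refine flat_of_flatModulo_bot (R := R) <|
    IsNoetherian.induction (P := FlatModulo B M) (fun (J : Ideal R) ih ↦ ?_) ⊥
  by_cases hJ : J = ⊤
  · intro N _ _ _ _ K hK
    have : K = ⊤ := top_le_iff.1 fun n _ ↦ by
      simpa using Submodule.mem_colon.1 (hK (hJ ▸ trivial : (1 : R) ∈ J)) n trivial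
    subst this
    exact (Submodule.topEquiv.lTensor M).injective
  by_cases hprime : J.IsPrime
  · refine .of_isPrime (fun c hc ↦ ih _ (left_lt_sup.2 ?_)) fun N _ _ _ _ hN K x hx ↦
      exists_smul_eq_zero_of_lTensor_eq_zero (h J) hN (K.injective_subtype) hx
    rwa [Ideal.span_singleton_le_iff_mem]
  · obtain ⟨x, hx, y, hy, hxy⟩ := (Ideal.not_isPrime_iff.1 hprime).resolve_left hJ
    refine .of_mul_mem hxy (ih _ (left_lt_sup.2 ?_)) (ih _ (left_lt_sup.2 ?_)) <;>
      rwa [Ideal.span_singleton_le_iff_mem]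

end Fiber

end FlatnessCriterion

section Fibres

attribute [local instance] Algebra.TensorProduct.rightAlgebra

variable {R B A : Type*} [CommRing R] [CommRing B] [CommRing A] [Algebra R B] [Algebra R A]
  [Algebra B A] [IsScalarTower R B A]

lemma cancelBaseChangeAlg_tmul_one (T : Type*) [CommRing T] [Algebra R T] (s : T ⊗[R] B) :
    Algebra.IsPushout.cancelBaseChangeAlg R T B (T ⊗[R] B) A (s ⊗ₜ 1) =
      Algebra.TensorProduct.map (AlgHom.id R T) (IsScalarTower.toAlgHom R B A) s := by
  induction s with
  | zero => simp only [zero_tmul, map_zero]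
  | add x y hx hy => simp only [add_tmul, map_add, hx, hy]
  | tmul t b =>
    have hb : b • t ⊗ₜ[R] (1 : B) = t ⊗ₜ b := by
      rw [Algebra.smul_def, Algebra.TensorProduct.right_algebraMap_apply,
        Algebra.TensorProduct.tmul_mul_tmul, one_mul, mul_one]
    rw [← AlgEquiv.eq_symm_apply, Algebra.TensorProduct.map_tmul, AlgHom.id_apply,
      Algebra.IsPushout.cancelBaseChangeAlg_symm_tmul, Algebra.TensorProduct.algebraMap_apply,
      Algebra.algebraMap_self_apply, IsScalarTower.toAlgHom_apply,
      Algebra.algebraMap_eq_smul_one b, ← TensorProduct.smul_tmul, hb]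

lemma fibersPolynomialOver_iff {n : ℕ} :
    FibersPolynomialOver R B A n ↔ ∀ (P : Ideal R) [P.IsPrime],
      Nonempty (P.Fiber B ⊗[B] A ≃ₐ[P.Fiber B] MvPolynomial (Fin n) (P.Fiber B)) := by
  refine forall₂_congr fun P _ ↦ ?_
  let : Algebra (P.Fiber B) (P.Fiber A) :=
    (Algebra.TensorProduct.map (AlgHom.id R P.ResidueField)
      (IsScalarTower.toAlgHom R B A)).toRingHom.toAlgebra
  let e : P.Fiber B ⊗[B] A ≃ₐ[P.Fiber B] P.Fiber A :=
    AlgEquiv.ofRingEquiv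
      (f := (Algebra.IsPushout.cancelBaseChangeAlg R P.ResidueField B (P.Fiber B) A).toRingEquiv)
      (cancelBaseChangeAlg_tmul_one _)
  exact ⟨fun ⟨f⟩ ↦ ⟨e.trans f⟩, fun ⟨f⟩ ↦ ⟨e.symm.trans f⟩⟩

lemma _root_.IsAffineFibration.tensorProduct_field {n : ℕ} (h : IsAffineFibration B A n)
    (K : Type*) [Field K] [Algebra B K] :
    Nonempty (K ⊗[B] A ≃ₐ[K] MvPolynomial (Fin n) K) := by
  let Q : Ideal B := RingHom.ker (algebraMap B K)
  have hQ : Q.IsPrime := RingHom.ker_isPrime _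
  obtain ⟨e⟩ := h.2.2 Q hQ
  let f : Q.ResidueField →ₐ[B] K := Ideal.ResidueField.liftₐ Q (Algebra.ofId B K) le_rfl
    fun s hs ↦ IsUnit.mk0 _ hs
  let : Algebra Q.ResidueField K := f.toAlgebra
  have : IsScalarTower B Q.ResidueField K := .of_algebraMap_eq fun b ↦ (f.commutes b).symm
  exact ⟨(Algebra.TensorProduct.cancelBaseChange B Q.ResidueField K K A).symm.trans <|
    (Algebra.TensorProduct.congr (AlgEquiv.refl : K ≃ₐ[K] K) e).trans <|
    MvPolynomial.algebraTensorAlgEquiv Q.ResidueField K⟩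

lemma _root_.IsAffineFibration.baseChange {n : ℕ} (h : IsAffineFibration B A n)
    (B' : Type*) [CommRing B'] [Algebra B B'] : IsAffineFibration B' (B' ⊗[B] A) n := by
  have := h.1
  have := h.2.1
  refine ⟨inferInstance, inferInstance, fun P _ ↦ ?_⟩
  obtain ⟨e⟩ := h.tensorProduct_field P.ResidueField
  exact ⟨(Algebra.TensorProduct.cancelBaseChange B B' P.ResidueField P.ResidueField A).trans e⟩

lemma _root_.FibersPolynomialOver.fiber {n : ℕ} (h : FibersPolynomialOver R B A n)
    (Q : Ideal B) [Q.IsPrime] :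
    Nonempty (Q.Fiber A ≃ₐ[Q.ResidueField] MvPolynomial (Fin n) Q.ResidueField) := by
  let P : Ideal R := RingHom.ker (algebraMap R Q.ResidueField)
  have : P.IsPrime := RingHom.ker_isPrime _
  obtain ⟨e⟩ := fibersPolynomialOver_iff.1 h P
  let f : P.ResidueField →ₐ[R] Q.ResidueField :=
    Ideal.ResidueField.liftₐ P (Algebra.ofId R _) le_rfl fun s hs ↦ IsUnit.mk0 _ hs
  let F : P.Fiber B →ₐ[R] Q.ResidueField :=
    Algebra.TensorProduct.productMap f (IsScalarTower.toAlgHom R B _)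
  let : Algebra (P.Fiber B) Q.ResidueField := F.toRingHom.toAlgebra
  have : IsScalarTower B (P.Fiber B) Q.ResidueField := .of_algebraMap_eq fun b ↦ by
    change _ = F (1 ⊗ₜ b)
    simp [F]
  exact ⟨(Algebra.TensorProduct.cancelBaseChange B (P.Fiber B) Q.ResidueField _ A).symm.trans <|
    (Algebra.TensorProduct.congr (AlgEquiv.refl : Q.ResidueField ≃ₐ[Q.ResidueField] _) e).trans <|
    MvPolynomial.algebraTensorAlgEquiv (P.Fiber B) Q.ResidueField⟩

theorem _root_.FibersPolynomialOver.isAffineFibration [IsNoetherianRing R] [Algebra.FiniteType R A]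
    [Module.Flat R A] [Module.Flat R B] {n : ℕ} (h : FibersPolynomialOver R B A n) :
    IsAffineFibration B A n := by
  refine ⟨.of_restrictScalars_finiteType R B A, flat_of_flat_fiber (R := R) fun P _ ↦ ?_,
    fun Q _ ↦ h.fiber Q⟩
  obtain ⟨e⟩ := fibersPolynomialOver_iff.1 h P
  exact .of_linearEquiv e.toLinearEquiv

end Fibres

section Domain

attribute [local instance] Algebra.TensorProduct.rightAlgebra

variable {B A : Type*} [CommRing B] [CommRing A] [Algebra B A] {n : ℕ}

lemma _root_.IsAffineFibration.faithfullyFlat (h : IsAffineFibration B A n) :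
    Module.FaithfullyFlat B A := by
  have := h.2.1
  refine .of_comap_surjective fun P ↦ ?_
  obtain ⟨e⟩ := h.2.2 P.asIdeal P.2
  exact P.nontrivial_iff_mem_rangeComap.1 e.symm.injective.nontrivial

lemma exists_C_eq_of_isAlgebraic {K σ : Type*} [Field K] {f : MvPolynomial σ K}
    (hf : IsAlgebraic K f) : ∃ c, MvPolynomial.C c = f := by
  rcases eq_or_ne f 0 with rfl | hf0
  · exact ⟨0, map_zero _⟩
  · obtain ⟨c, -, hc⟩ := MvPolynomial.isUnit_iff_eq_C_of_isReduced.1 (hf.isIntegral.isUnit hf0)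
    exact ⟨c, hc.symm⟩

lemma includeRight_fractionRing_injective [Module.Flat B A] : Function.Injective
    (Algebra.TensorProduct.includeRight : A →ₐ[B] FractionRing B ⊗[B] A) :=
  Algebra.TensorProduct.includeRight_injective (IsFractionRing.injective B (FractionRing B))

variable [IsDomain B]

lemma _root_.IsAffineFibration.isDomain (h : IsAffineFibration B A n) : IsDomain A := by
  have := h.2.1
  obtain ⟨e⟩ := h.tensorProduct_field (FractionRing B)
  have := e.injective.isDomain e.toRingHom
  exact includeRight_fractionRing_injective.isDomain
    (Algebra.TensorProduct.includeRight : A →ₐ[B] FractionRing B ⊗[B] A).toRingHom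

lemma _root_.IsAffineFibration.trdeg_eq (h : IsAffineFibration B A n) :
    Algebra.trdeg B A = n := by
  obtain ⟨e⟩ := h.tensorProduct_field (FractionRing B)
  have := h.2.1
  have := h.faithfullyFlat
  have := h.isDomain
  have := e.injective.isDomain e.toRingHom
  have : FaithfulSMul A (FractionRing B ⊗[B] A) :=
    (faithfulSMul_iff_algebraMap_injective _ _).2 includeRight_fractionRing_injective
  have : Algebra.IsAlgebraic B (FractionRing B) := IsLocalization.isAlgebraic _ (nonZeroDivisors B)
  have : Algebra.IsAlgebraic A (FractionRing B ⊗[B] A) :=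
    Algebra.IsPushout.isAlgebraic B (FractionRing B) ..
  have hA := lift_trdeg_add_eq B A (FractionRing B ⊗[B] A)
  have hK := lift_trdeg_add_eq B (FractionRing B) (FractionRing B ⊗[B] A)
  have he := e.lift_trdeg_eq
  rw [MvPolynomial.trdeg_of_isDomain, Cardinal.mk_fin, Cardinal.lift_natCast,
    Cardinal.lift_natCast, Cardinal.lift_eq_nat_iff] at he
  rw [trdeg_eq_zero (R := B), Cardinal.lift_zero, zero_add, he, Cardinal.lift_natCast, eq_comm,
    Cardinal.lift_eq_nat_iff] at hK
  rwa [trdeg_eq_zero (R := A), Cardinal.lift_zero, add_zero, hK, Cardinal.lift_natCast,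
    Cardinal.lift_eq_nat_iff] at hA

lemma _root_.IsAffineFibration.mem_range_algebraMap_of_isAlgebraic (h : IsAffineFibration B A n)
    {y : A} (hy : IsAlgebraic B y) : y ∈ Set.range (algebraMap B A) := by
  let K := FractionRing B
  have := h.2.1
  have := h.faithfullyFlat
  have := h.isDomain
  obtain ⟨e⟩ := h.tensorProduct_field K
  have hy' : IsAlgebraic K ((1 : K) ⊗ₜ[B] y) := hy.tmul _
  obtain ⟨c, hc⟩ := exists_C_eq_of_isAlgebraic (hy'.algHom e.toAlgHom)
  have hcy : (1 : K) ⊗ₜ[B] y = c ⊗ₜ 1 := e.injective (hc.symm.trans (e.commutes c).symm)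
  obtain ⟨⟨b, s⟩, hs⟩ := IsLocalization.surj (nonZeroDivisors B) c
  have hsy : (s : B) • y = algebraMap B A b := by
    refine includeRight_fractionRing_injective (B := B) ?_
    rw [map_smul, AlgHom.commutes, Algebra.TensorProduct.includeRight_apply, hcy, smul_tmul',
      Algebra.smul_def, mul_comm, hs, Algebra.TensorProduct.algebraMap_apply]
  have hb : b ∈ Ideal.span {(s : B)} := by
    rw [← Ideal.comap_map_eq_self_of_faithfullyFlat (B := A) (Ideal.span _), Ideal.mem_comap,
      Ideal.map_span, Set.image_singleton, Ideal.mem_span_singleton', ← hsy]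
    exact ⟨y, by rw [mul_comm, Algebra.smul_def]⟩
  obtain ⟨r, rfl⟩ := Ideal.mem_span_singleton.1 hb
  refine ⟨r, smul_right_injective A (nonZeroDivisors.coe_ne_zero s) ?_⟩
  simp only [hsy, Algebra.smul_def, map_mul]

lemma exists_smul_eq_tmul {K : Type*} [Field K] [Algebra B K] [IsFractionRing B K] (z : K ⊗[B] A) :
    ∃ s : B, algebraMap B K s ≠ 0 ∧ ∃ x : A, s • z = (1 : K) ⊗ₜ[B] x := by
  obtain ⟨⟨x, s⟩, hx⟩ := IsLocalizedModule.surj (nonZeroDivisors B) (TensorProduct.mk B K A 1) z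
  exact ⟨s, by simp, x, hx⟩

open Polynomial in
lemma _root_.IsAffineFibration.exists_smul_mem_adjoin (h : IsAffineFibration B A 1) :
    ∃ x : A, ∀ a, ∃ b : B, b ≠ 0 ∧ b • a ∈ Algebra.adjoin B {x} := by
  let K := FractionRing B
  have := h.2.1
  obtain ⟨e⟩ := h.tensorProduct_field K
  let e' : K ⊗[B] A ≃ₐ[K] K[X] := e.trans (MvPolynomial.uniqueAlgEquiv K (Fin 1))
  obtain ⟨s, hs, x, hx⟩ := exists_smul_eq_tmul (e'.symm X)
  have hX : e' (1 ⊗ₜ x) = C (algebraMap B K s) * X := by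
    rw [← hx, ← algebraMap_smul K s, map_smul, e'.apply_symm_apply, smul_eq_C_mul]
  refine ⟨x, fun a ↦ ?_⟩
  let g : K[X] := (e' (1 ⊗ₜ a)).comp (C (algebraMap B K s)⁻¹ * X)
  have hg : aeval ((1 : K) ⊗ₜ[B] x) g = 1 ⊗ₜ a := e'.injective <| by
    have hinv : aeval (C (algebraMap B K s) * X) (C (algebraMap B K s)⁻¹ * X) = X := by
      rw [map_mul, aeval_C, aeval_X, algebraMap_eq, ← mul_assoc, ← C_mul, inv_mul_cancel₀ hs, C_1,
        one_mul]
    rw [← aeval_algHom_apply, hX, aeval_comp, hinv, aeval_X_left_apply]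
  obtain ⟨b, hb, hf⟩ := IsLocalization.integerNormalization_spec (nonZeroDivisors B) g
  set f := IsLocalization.integerNormalization (nonZeroDivisors B) g
  refine ⟨b, nonZeroDivisors.ne_zero hb, ?_⟩
  rw [Algebra.adjoin_singleton_eq_range_aeval]
  refine ⟨f, includeRight_fractionRing_injective (B := B) ?_⟩
  calc (1 : K) ⊗ₜ[B] aeval x f = aeval ((1 : K) ⊗ₜ[B] x) (f.map (algebraMap B K)) := by
        rw [aeval_map_algebraMap]
        exact (aeval_algHom_apply Algebra.TensorProduct.includeRight x f).symm
    _ = 1 ⊗ₜ (b • a) := by rw [hf, ← algebraMap_smul K b, map_smul, hg, algebraMap_smul, tmul_smul]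

end Domain

section TranscendentalMod

variable {B A : Type*} [CommRing B] [CommRing A] [Algebra B A] {n : ℕ} {p : B} {x : A}

/-- `x : A` is transcendental modulo `p : B` if its image in `A / pA`, modelled as
`(B ⧸ (p)) ⊗[B] A`, is transcendental over `B ⧸ (p)`. -/
def TranscendentalMod (p : B) (x : A) : Prop :=
  Transcendental (B ⧸ Ideal.span {p}) ((1 : B ⧸ Ideal.span {p}) ⊗ₜ[B] x)

lemma exists_eq_smul_of_one_tmul_eq_zero {M : Type*} [AddCommGroup M] [Module B M] {y : M}
    (hy : (1 : B ⧸ Ideal.span {p}) ⊗ₜ[B] y = 0) : ∃ y', y = p • y' := by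
  have hy' := congrArg (quotTensorEquivQuotSMul M (Ideal.span {p})) hy
  rw [map_zero, ← map_one (Ideal.Quotient.mk _), quotTensorEquivQuotSMul_mk_tmul, one_smul,
    Submodule.Quotient.mk_eq_zero, Submodule.ideal_span_singleton_smul] at hy'
  obtain ⟨y', -, rfl⟩ := hy'
  exact ⟨y', rfl⟩

lemma one_tmul_smul_eq_zero {M : Type*} [AddCommGroup M] [Module B M] (p : B) (y : M) :
    (1 : B ⧸ Ideal.span {p}) ⊗ₜ[B] (p • y) = 0 := by
  rw [← smul_tmul, Algebra.smul_def, Ideal.Quotient.algebraMap_eq, Ideal.Quotient.mk_singleton_self,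
    zero_mul, zero_tmul]

lemma dvd_of_algebraMap_eq_smul [Module.FaithfullyFlat B A] {b : B} {a : A}
    (h : algebraMap B A b = p • a) : p ∣ b := by
  rw [← Ideal.mem_span_singleton,
    ← Ideal.comap_map_eq_self_of_faithfullyFlat (B := A) (Ideal.span {p}), Ideal.mem_comap, h,
    Algebra.smul_def]
  exact Ideal.mul_mem_right _ _ (Ideal.mem_map_of_mem _ (Ideal.mem_span_singleton_self p))

lemma exists_eq_algebraMap_add_smul (h : IsAffineFibration B A n) (hp : Prime p)
    (hx : ¬ TranscendentalMod p x) : ∃ b y, x = algebraMap B A b + p • y := by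
  have := (Ideal.span_singleton_prime hp.ne_zero).2 hp
  obtain ⟨c, hc⟩ := (h.baseChange (B ⧸ Ideal.span {p})).mem_range_algebraMap_of_isAlgebraic
    (not_not.1 hx)
  obtain ⟨b, rfl⟩ := Ideal.Quotient.mk_surjective c
  obtain ⟨y, hy⟩ := exists_eq_smul_of_one_tmul_eq_zero (p := p) (y := x - algebraMap B A b) <| by
    rw [tmul_sub, ← hc, Algebra.algebraMap_eq_smul_one (R := B), tmul_smul, sub_eq_zero,
      Algebra.TensorProduct.algebraMap_apply, smul_tmul', Algebra.smul_def, mul_one]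
    rfl
  exact ⟨b, y, by rw [← hy, add_sub_cancel]⟩

lemma not_transcendentalMod_algebraMap_add_smul [Nontrivial (B ⧸ Ideal.span {p})] (b : B) (y : A) :
    ¬ TranscendentalMod p (algebraMap B A b + p • y) := by
  rw [TranscendentalMod, Transcendental, not_not, tmul_add, one_tmul_smul_eq_zero, add_zero,
    Algebra.algebraMap_eq_smul_one (R := B), tmul_smul]
  exact isAlgebraic_one.smul (Ideal.Quotient.mk _ b)

lemma TranscendentalMod.smul (hx : TranscendentalMod p x) (hp : Prime p) {u : B} (hu : ¬ p ∣ u) :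
    TranscendentalMod p (u • x) := by
  have := (Ideal.span_singleton_prime hp.ne_zero).2 hp
  refine fun halg ↦ hx ?_
  rw [tmul_smul, ← algebraMap_smul (B ⧸ Ideal.span {p}) u] at halg
  refine halg.of_smul (mem_nonZeroDivisors_of_ne_zero ?_)
  rwa [Ideal.Quotient.algebraMap_eq, Ne, Ideal.Quotient.eq_zero_iff_dvd]

lemma exists_eq_algebraMap_add_smul_of_mem_adjoin {b : B} {y z : A}
    (hz : z ∈ Algebra.adjoin B {algebraMap B A b + p • y}) :
    ∃ c, ∃ g ∈ Algebra.adjoin B {y}, z = algebraMap B A c + p • g := by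
  induction hz using Algebra.adjoin_induction with
  | mem z hz => exact ⟨b, y, Algebra.self_mem_adjoin_singleton B y, hz⟩
  | algebraMap c => exact ⟨c, 0, zero_mem _, by rw [smul_zero, add_zero]⟩
  | add z z' _ _ hz hz' =>
    obtain ⟨c, g, hg, rfl⟩ := hz
    obtain ⟨c', g', hg', rfl⟩ := hz'
    exact ⟨c + c', g + g', add_mem hg hg', by rw [map_add, smul_add, add_add_add_comm]⟩
  | mul z z' _ _ hz hz' =>
    obtain ⟨c, g, hg, rfl⟩ := hz
    obtain ⟨c', g', hg', rfl⟩ := hz'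
    refine ⟨c * c', c • g' + c' • g + p • (g * g'), ?_, ?_⟩
    · exact add_mem (add_mem (Subalgebra.smul_mem _ hg' c) (Subalgebra.smul_mem _ hg c'))
        (Subalgebra.smul_mem _ (mul_mem hg hg') p)
    · simp only [Algebra.smul_def, map_mul]
      ring

variable [IsDomain B] in
lemma TranscendentalMod.mem_adjoin_of_smul_mem [Module.Flat B A] (hx : TranscendentalMod p x)
    (hp : p ≠ 0) {a : A} (ha : p • a ∈ Algebra.adjoin B {x}) : a ∈ Algebra.adjoin B {x} := by
  rw [Algebra.adjoin_singleton_eq_range_aeval] at ha ⊢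
  obtain ⟨f, hf⟩ := ha
  have hf0 : f.map (algebraMap B (B ⧸ Ideal.span {p})) = 0 := by
    refine (transcendental_iff.1 hx) _ ?_
    rw [Polynomial.aeval_map_algebraMap]
    exact (Polynomial.aeval_algHom_apply Algebra.TensorProduct.includeRight x f).trans
      ((congrArg _ hf).trans (one_tmul_smul_eq_zero p a))
  obtain ⟨g, rfl⟩ : Polynomial.C p ∣ f := by
    refine (Polynomial.C_dvd_iff_dvd_coeff p f).2 fun i ↦ ?_
    rw [← Ideal.Quotient.eq_zero_iff_dvd, ← Ideal.Quotient.algebraMap_eq, ← Polynomial.coeff_map,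
      hf0, Polynomial.coeff_zero]
  refine ⟨g, smul_right_injective A hp ?_⟩
  change p • Polynomial.aeval x g = p • a
  rw [← map_smul, Polynomial.smul_eq_C_mul]
  exact hf

variable [IsDomain B] in
lemma exists_adjoin_le_transcendentalMod (h : IsAffineFibration B A n) (hp : Prime p) {t : A}
    (ht : TranscendentalMod p t) {k : ℕ} (hk : p ^ k • t ∈ Algebra.adjoin B {x}) :
    ∃ y, Algebra.adjoin B {x} ≤ Algebra.adjoin B {y} ∧ TranscendentalMod p y := by
  have := (Ideal.span_singleton_prime hp.ne_zero).2 hp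
  have := h.2.1
  have := h.faithfullyFlat
  induction k generalizing x with
  | zero =>
    refine ⟨x, le_rfl, by_contra fun hx ↦ ?_⟩
    obtain ⟨b, y, rfl⟩ := exists_eq_algebraMap_add_smul h hp hx
    obtain ⟨c, g, -, hcg⟩ := exists_eq_algebraMap_add_smul_of_mem_adjoin hk
    rw [pow_zero, one_smul] at hcg
    exact not_transcendentalMod_algebraMap_add_smul c g (hcg ▸ ht)
  | succ k ih =>
    by_cases hx : TranscendentalMod p x
    · exact ⟨x, le_rfl, hx⟩
    obtain ⟨b, y, rfl⟩ := exists_eq_algebraMap_add_smul h hp hx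
    obtain ⟨c, g, hg, hcg⟩ := exists_eq_algebraMap_add_smul_of_mem_adjoin hk
    rw [pow_succ', mul_smul] at hcg
    obtain ⟨c, rfl⟩ : p ∣ c := dvd_of_algebraMap_eq_smul (a := p ^ k • t - g) <| by
      rw [smul_sub, hcg, add_sub_cancel_right]
    have hcg' : p ^ k • t = algebraMap B A c + g := smul_right_injective A hp.ne_zero <| by
      change p • p ^ k • t = p • (algebraMap B A c + g)
      rw [hcg, map_mul, ← Algebra.smul_def, smul_add]
    obtain ⟨z, hyz, hz⟩ := ih (x := y) (hcg' ▸ add_mem (Subalgebra.algebraMap_mem _ c) hg)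
    refine ⟨z, le_trans ?_ hyz, hz⟩
    rw [Algebra.adjoin_le_iff, Set.singleton_subset_iff]
    exact add_mem (Subalgebra.algebraMap_mem _ b)
      (Subalgebra.smul_mem _ (Algebra.self_mem_adjoin_singleton B y) p)

lemma _root_.IsAffineFibration.exists_transcendental [IsDomain B] (h : IsAffineFibration B A n)
    (hn : n ≠ 0) {S : Set A} (hS : Algebra.adjoin B S = ⊤) : ∃ s ∈ S, Transcendental B s := by
  have := h.isDomain
  have htr : Algebra.Transcendental B A := by
    rw [← trdeg_ne_zero_iff, h.trdeg_eq]
    exact_mod_cast hn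
  by_contra! halg
  have halg' := Algebra.isAlgebraic_adjoin_iff.2 fun s hs ↦ not_not.1 (halg s hs)
  obtain ⟨a, ha⟩ := htr
  exact ha (halg' a (hS ▸ Algebra.mem_top))

lemma exists_transcendentalMod (h : IsAffineFibration B A n) (hn : n ≠ 0) (hp : Prime p)
    {S : Set A} (hS : Algebra.adjoin B S = ⊤) : ∃ s ∈ S, TranscendentalMod p s := by
  have := (Ideal.span_singleton_prime hp.ne_zero).2 hp
  obtain ⟨_, ⟨s, hs, rfl⟩, hps⟩ := (h.baseChange (B ⧸ Ideal.span {p})).exists_transcendental hn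
    (Algebra.TensorProduct.adjoin_one_tmul_image_eq_top S hS)
  exact ⟨s, hs, hps⟩

lemma exists_adjoin_singleton_eq_top [IsDomain B] [UniqueFactorizationMonoid B]
    (h : IsAffineFibration B A n) (hn : n ≠ 0) {S : Set A} (hS : Algebra.adjoin B S = ⊤) {b : B}
    (hb : b ≠ 0) (hx : ∀ s ∈ S, b • s ∈ Algebra.adjoin B {x}) :
    ∃ y : A, Algebra.adjoin B {y} = ⊤ := by
  have := h.2.1
  induction b using UniqueFactorizationMonoid.induction_on_prime generalizing x with
  | h₁ => exact absurd rfl hb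
  | h₂ b hu =>
    refine ⟨x, top_le_iff.1 (hS ▸ Algebra.adjoin_le fun s hs ↦ ?_)⟩
    have := Subalgebra.smul_mem _ (hx s hs) (↑hu.unit⁻¹ : B)
    rwa [smul_smul, hu.val_inv_mul, one_smul] at this
  | h₃ a p ha hp ih =>
    obtain ⟨s, hs, hps⟩ := exists_transcendentalMod h hn hp hS
    obtain ⟨u, hu, hpu⟩ :=
      (FiniteMultiplicity.of_prime_left hp hb).exists_eq_pow_mul_and_not_dvd
    have hxs := hx s hs
    rw [hu, mul_smul] at hxs
    obtain ⟨y, hxy, hy⟩ := exists_adjoin_le_transcendentalMod h hp (hps.smul hp hpu) hxs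
    refine ih ha (x := y) fun s hs ↦ hy.mem_adjoin_of_smul_mem hp.ne_zero ?_
    rw [smul_smul]
    exact hxy (hx s hs)

lemma exists_smul_mem_of_finset [IsDomain B] {T : Subalgebra B A}
    (hT : ∀ a, ∃ b : B, b ≠ 0 ∧ b • a ∈ T) (S : Finset A) :
    ∃ b : B, b ≠ 0 ∧ ∀ s ∈ S, b • s ∈ T := by
  choose f hf0 hf using hT
  refine ⟨∏ s ∈ S, f s, Finset.prod_ne_zero_iff.2 fun s _ ↦ hf0 s, fun s hs ↦ ?_⟩
  obtain ⟨c, hc⟩ := Finset.dvd_prod_of_mem f hs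
  rw [hc, mul_comm, mul_smul]
  exact T.smul_mem (hf s) c

theorem _root_.IsAffineFibration.nonempty_algEquiv_mvPolynomial [IsDomain B]
    [UniqueFactorizationMonoid B] (h : IsAffineFibration B A 1) :
    Nonempty (A ≃ₐ[B] MvPolynomial (Fin 1) B) := by
  obtain ⟨S, hS⟩ := h.1
  obtain ⟨x, hx⟩ := h.exists_smul_mem_adjoin
  obtain ⟨b, hb, hbS⟩ := exists_smul_mem_of_finset hx S
  obtain ⟨y, hy⟩ := exists_adjoin_singleton_eq_top h one_ne_zero hS hb hbS
  obtain ⟨_, rfl, hy'⟩ := h.exists_transcendental one_ne_zero hy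
  rw [Algebra.adjoin_singleton_eq_range_aeval, AlgHom.range_eq_top] at hy
  exact ⟨(AlgEquiv.ofBijective _ ⟨transcendental_iff_injective.1 hy', hy⟩).symm.trans
    (MvPolynomial.uniqueAlgEquiv B (Fin 1)).symm⟩

end TranscendentalMod

section AlgebraicIndependence

attribute [local instance] Algebra.TensorProduct.rightAlgebra

section Noetherian

variable {R : Type*} [CommRing R] [IsNoetherianRing R] {M N : Type*} [AddCommGroup M] [Module R M]
  [AddCommGroup N] [Module R N] [Module.Flat R M] [Module.Flat R N]

lemma lTensor_injective_of_residueField {φ : M →ₗ[R] N}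
    (hφ : ∀ (P : Ideal R) [P.IsPrime], Function.Injective (φ.lTensor P.ResidueField))
    (X : Type*) [AddCommGroup X] [Module R X] [hX : Module.Finite R X] :
    Function.Injective (φ.lTensor X) := by
  induction hX using IsNoetherianRing.induction_on_isQuotientEquivQuotientPrime R with
  | subsingleton X => exact Function.injective_of_subsingleton _
  | quotient X P e =>
    let f : X →ₗ[R] P.asIdeal.ResidueField :=
      (IsScalarTower.toAlgHom R (R ⧸ P.asIdeal) P.asIdeal.ResidueField).toLinearMap ∘ₗ e
    have hf : Function.Injective f :=
      (IsFractionRing.injective (R ⧸ P.asIdeal) P.asIdeal.ResidueField).comp e.injective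
    have hcomm : f.rTensor N ∘ₗ φ.lTensor X = φ.lTensor P.asIdeal.ResidueField ∘ₗ f.rTensor M := by
      rw [LinearMap.rTensor_comp_lTensor, LinearMap.lTensor_comp_rTensor]
    refine .of_comp (f := f.rTensor N) ?_
    rw [← LinearMap.coe_comp, hcomm]
    exact (hφ P.asIdeal).comp (Module.Flat.rTensor_preserves_injective_linearMap f hf)
  | exact X₁ X₂ X₃ f g hf hg hfg ih₁ ih₃ =>
    have hf' := Module.Flat.rTensor_preserves_injective_linearMap (M := N) f hf
    have hcomm {X Y : Type _} [AddCommGroup X] [Module R X] [AddCommGroup Y] [Module R Y]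
        (u : X →ₗ[R] Y) (z : X ⊗[R] M) :
        φ.lTensor Y (u.rTensor M z) = u.rTensor N (φ.lTensor X z) := by
      rw [← LinearMap.comp_apply, ← LinearMap.comp_apply, LinearMap.rTensor_comp_lTensor,
        LinearMap.lTensor_comp_rTensor]
    refine (injective_iff_map_eq_zero _).2 fun z hz ↦ ?_
    obtain ⟨y, rfl⟩ := (rTensor_exact M hfg hg z).1 <| (map_eq_zero_iff _ ih₃).1 <| by
      rw [hcomm, hz, map_zero]
    rw [hcomm, map_eq_zero_iff _ hf', map_eq_zero_iff _ ih₁] at hz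
    rw [hz, map_zero]

lemma injective_of_lTensor_residueField_injective {φ : M →ₗ[R] N}
    (hφ : ∀ (P : Ideal R) [P.IsPrime], Function.Injective (φ.lTensor P.ResidueField)) :
    Function.Injective φ := fun x y hxy ↦
  (TensorProduct.lid R M).symm.injective <| lTensor_injective_of_residueField hφ R <| by
    rw [TensorProduct.lid_symm_apply, TensorProduct.lid_symm_apply, LinearMap.lTensor_tmul,
      LinearMap.lTensor_tmul, hxy]

lemma algebraicIndependent_of_residueField {A ι : Type*} [CommRing A] [Algebra R A]
    [Module.Flat R A] {W : ι → A} (hW : ∀ (P : Ideal R) [P.IsPrime],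
      AlgebraicIndependent P.ResidueField fun i ↦ (1 : P.ResidueField) ⊗ₜ[R] W i) :
    AlgebraicIndependent R W := by
  let φ : MvPolynomial ι R →ₐ[R] A := MvPolynomial.aeval W
  refine injective_of_lTensor_residueField_injective (φ := φ.toLinearMap) fun P _ ↦ ?_
  let κ := P.ResidueField
  let e := MvPolynomial.algebraTensorAlgEquiv (σ := ι) R κ
  have hcomm : Algebra.TensorProduct.map (AlgHom.id κ κ) φ =
      (MvPolynomial.aeval fun i ↦ (1 : κ) ⊗ₜ[R] W i).comp e.toAlgHom := by
    ext i
    simp [e, φ]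
  change Function.Injective (Algebra.TensorProduct.map (AlgHom.id κ κ) φ)
  rw [hcomm, AlgHom.coe_comp]
  exact Function.Injective.comp (hW P) e.injective

end Noetherian

variable {R B A : Type*} [CommRing R] [CommRing B] [CommRing A] [Algebra R B] [Algebra R A]
  [Algebra B A] [IsScalarTower R B A] {m d n : ℕ} {W : Fin m → B}

lemma _root_.IsAffineFibration.of_algEquiv {A' : Type*} [CommRing A'] [Algebra R A']
    (h : IsAffineFibration R A n) (e : A ≃ₐ[R] A') : IsAffineFibration R A' n := by
  have := h.1
  have := h.2.1
  refine ⟨.equiv h.1 e, .of_linearEquiv e.symm.toLinearEquiv, fun P _ ↦ ?_⟩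
  obtain ⟨f⟩ := h.2.2 P ‹_›
  exact ⟨(Algebra.TensorProduct.congr .refl e.symm).trans f⟩

lemma algebraicIndependent_of_isAffineFibration [IsDomain R] (hA : IsAffineFibration R A (m + d))
    (hBA : IsAffineFibration B A d) (hW : Algebra.adjoin R (Set.range W) = ⊤) :
    AlgebraicIndependent R W := by
  have := hA.isDomain
  have := hA.faithfullyFlat
  have := hBA.faithfullyFlat
  have := (FaithfulSMul.algebraMap_injective B A).isDomain (algebraMap B A)
  have : FaithfulSMul R B := .tower_bot R B A
  have htr := lift_trdeg_add_eq R B A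
  rw [hA.trdeg_eq, hBA.trdeg_eq, Cardinal.lift_natCast, Cardinal.lift_natCast, Nat.cast_add,
    Cardinal.add_nat_inj, Cardinal.lift_eq_nat_iff] at htr
  have halg : Algebra.IsAlgebraic (Algebra.adjoin R (Set.range W)) B :=
    ⟨fun b ↦ isAlgebraic_algebraMap (⟨b, hW ▸ Algebra.mem_top⟩ : Algebra.adjoin R (Set.range W))⟩
  refine (Algebra.IsAlgebraic.isTranscendenceBasis_of_lift_le_trdeg_of_finite R W ?_).1
  rw [htr, Cardinal.mk_fin, Cardinal.lift_natCast, Cardinal.lift_natCast]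

lemma adjoin_range_one_tmul_eq_top (K : Type*) [CommRing K] [Algebra R K]
    (hW : Algebra.adjoin R (Set.range W) = ⊤) :
    Algebra.adjoin K (Set.range fun i ↦ (1 : K) ⊗ₜ[R] W i) = ⊤ := by
  rw [← Algebra.TensorProduct.adjoin_one_tmul_image_eq_top _ hW, ← Set.range_comp]
  rfl

lemma algebraicIndependent_one_tmul (hA : IsAffineFibration R A (m + d))
    (hBA : IsAffineFibration B A d) (hW : Algebra.adjoin R (Set.range W) = ⊤)
    (K : Type*) [CommRing K] [IsDomain K] [Algebra R K] :
    AlgebraicIndependent K fun i ↦ (1 : K) ⊗ₜ[R] W i :=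
  algebraicIndependent_of_isAffineFibration
    ((hA.baseChange K).of_algEquiv
      (Algebra.IsPushout.cancelBaseChangeAlg R K B (K ⊗[R] B) A).symm)
    (hBA.baseChange (K ⊗[R] B)) (adjoin_range_one_tmul_eq_top K hW)

lemma tensorProductMap_toAlgHom_injective [Module.FaithfullyFlat B A]
    (K : Type*) [CommRing K] [Algebra R K] :
    Function.Injective
      (Algebra.TensorProduct.map (AlgHom.id K K) (IsScalarTower.toAlgHom R B A)) := by
  have := (Algebra.IsPushout.cancelBaseChangeAlg R K B (K ⊗[R] B) A).injective.comp
    (FaithfulSMul.algebraMap_injective (K ⊗[R] B) ((K ⊗[R] B) ⊗[B] A))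
  convert this
  ext x
  exact (cancelBaseChangeAlg_tmul_one K x).symm

lemma _root_.IsAffineFibration.algebraicIndependent [IsNoetherianRing R]
    (hA : IsAffineFibration R A (m + d)) (hBA : IsAffineFibration B A d)
    (hW : Algebra.adjoin R (Set.range W) = ⊤) : AlgebraicIndependent R (algebraMap B A ∘ W) := by
  have := hA.2.1
  have := hBA.faithfullyFlat
  refine algebraicIndependent_of_residueField fun P _ ↦ ?_
  exact (algebraicIndependent_one_tmul hA hBA hW P.ResidueField).map'
    (f := Algebra.TensorProduct.map (AlgHom.id _ _) (IsScalarTower.toAlgHom R B A))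
    (tensorProductMap_toAlgHom_injective _)

theorem _root_.IsAffineFibration.fibersPolynomialOver (hA : IsAffineFibration R A (m + 1))
    (hBA : IsAffineFibration B A 1) (hW : Algebra.adjoin R (Set.range W) = ⊤) :
    FibersPolynomialOver R B A 1 := by
  refine fibersPolynomialOver_iff.2 fun P _ ↦ ?_
  let κ := P.ResidueField
  have hsurj := adjoin_range_one_tmul_eq_top κ hW
  rw [Algebra.adjoin_range_eq_range_aeval, AlgHom.range_eq_top] at hsurj
  let e : MvPolynomial (Fin m) κ ≃ₐ[κ] P.Fiber B :=
    .ofBijective _ ⟨algebraicIndependent_one_tmul hA hBA hW κ, hsurj⟩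
  have : IsDomain (P.Fiber B) := e.symm.toMulEquiv.isDomain _
  have : UniqueFactorizationMonoid (P.Fiber B) :=
    e.toMulEquiv.uniqueFactorizationMonoid inferInstance
  exact (hBA.baseChange (P.Fiber B)).nonempty_algEquiv_mvPolynomial

end AlgebraicIndependence

lemma adjoin_range_subtype_mk_eq_top {R A ι : Type*} [CommRing R] [CommRing A] [Algebra R A]
    (W : ι → A) : Algebra.adjoin R (Set.range fun i ↦
      (⟨W i, Algebra.subset_adjoin ⟨i, rfl⟩⟩ : Algebra.adjoin R (Set.range W))) = ⊤ := by
  rw [← Algebra.adjoin_adjoin_coe_preimage]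
  congr 1
  ext x
  simp only [Set.mem_range, Set.mem_preimage, Subtype.ext_iff]

end AffineFibration

open AffineFibration in
theorem residualVariable_iff_isAffineFibration_one_general
    (R A : Type*) [CommRing R] [IsNoetherianRing R] [CommRing A] [Algebra R A]
    (m : ℕ) (hA : IsAffineFibration R A (m + 1)) (W : Fin m → A) :
    IsResidualVariable R A (m + 1) m W ↔
      IsAffineFibration ↥(Algebra.adjoin R (Set.range W)) A 1 := by
  unfold IsResidualVariable
  rw [Nat.add_sub_cancel_left]
  constructor
  · rintro ⟨hW, hfib⟩
    have := hA.1
    have := hA.2.1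
    have : Module.Flat R (Algebra.adjoin R (Set.range W)) :=
      .of_linearEquiv hW.aevalEquiv.symm.toLinearEquiv
    exact hfib.isAffineFibration
  · intro h
    have hW := adjoin_range_subtype_mk_eq_top (R := R) W
    have hind := hA.algebraicIndependent h hW
    exact ⟨hind, hA.fibersPolynomialOver h hW⟩

/-- Let `R` be a Noetherian domain and `A` an `𝔸^{m+1}`-fibration over `R`.  An `m`-tuple
`W` of elements of `A` is an `m`-tuple residual variable of `A` over `R` if and only if
`A` is an `𝔸¹`-fibration over `R[W]`. -/
theorem residualVariable_iff_isAffineFibration_one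
    (R A : Type*) [CommRing R] [IsDomain R] [IsNoetherianRing R]
    [CommRing A] [Algebra R A]
    (m : ℕ) (hA : IsAffineFibration R A (m + 1)) (W : Fin m → A) :
    IsResidualVariable R A (m + 1) m W ↔
      IsAffineFibration ↥(Algebra.adjoin R (Set.range W)) A 1 :=
  residualVariable_iff_isAffineFibration_one_general R A m hA W
end

section
/- Let R be a Noetherian domain such that either R contains ℚ or R is seminormal (i.e., for all b, c ∈ R with b³ = c², there exists a ∈ R with a² = b and a³ = c). Let A be an 𝔸^{m+1}-fibration over R such that Ω_R(A) is a stably free A-module. Then for an m-tuple W = (W₁,…,W_m) of elements of A, the following are equivalent: (I) W is an m-tuple residual variable of A over R; (II) A is isomorphic, as an R[W]-algebra, to a polynomial ring in one variable over R[W] (and hence A is a polynomial ring in m+1 variables over R). -/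
open TensorProduct

/-! Write `κ[W]` for the subalgebra of a fibre `κ ⊗ A` generated by `W`. An isomorphism
`Ω_R(A) ⊕ A^s ≃ A^t` turns `a ↦ det (da, dW, e)`, where `e` is the standard basis of `A^s`, into a
derivation `D` of `A` that kills `W`. On a fibre, `D` takes a unit, hence constant, value at every
variable complementary to `W`; so every fibre has a variable `x` with `D x = 1` (a slice), and two
such slices differ by an element of `κ[W]`.

If `R` contains `ℚ`, then `D` induces a bijection `A / R[W] → A` on every fibre, hence globally; a
solution `s` of `D s = 1` differs from each fibrewise slice by an element of `κ[W]`, so it is a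
variable on all fibres and therefore over `R`.

If `R` is a seminormal domain with fraction field `K`, the class of a generic slice in
`K ⊗ A / R[W]` does not depend on the slice. Valuation rings of `K` compare it with the
slices of the other fibres: over a valuation ring it has no pole, and its residue comes from the
residue field of the centre. Seminormality then forces it to come from `A / R[W]`, and any lift
to `A` is a variable.
-/

namespace ResidualVariable

universe u v w u'

open IsLocalRing (ResidueField)

section FibreCriteria

variable {R : Type u} [CommRing R] {M : Type v} {N : Type w} [AddCommGroup M] [Module R M]
  [AddCommGroup N] [Module R N]

theorem lTensor_rTensor_apply {X Y : Type*} [AddCommGroup X] [Module R X] [AddCommGroup Y]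
    [Module R Y] (φ : M →ₗ[R] N) (g : X →ₗ[R] Y) (z : X ⊗[R] M) :
    φ.lTensor Y (g.rTensor M z) = g.rTensor N (φ.lTensor X z) :=
  LinearMap.congr_fun
    ((φ.lTensor_comp_rTensor (f := g)).trans (φ.rTensor_comp_lTensor (f := g)).symm) z

theorem lTensor_injective_of_injective {X Y : Type*} [AddCommGroup X] [Module R X]
    [AddCommGroup Y] [Module R Y] [Module.Flat R M] {φ : M →ₗ[R] N} (j : X →ₗ[R] Y)
    (hj : Function.Injective j) (hφ : Function.Injective (φ.lTensor Y)) :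
    Function.Injective (φ.lTensor X) := by
  refine Function.Injective.of_comp (f := j.rTensor N) fun z z' h ↦ ?_
  refine Module.Flat.rTensor_preserves_injective_linearMap (M := M) j hj (hφ ?_)
  simpa only [lTensor_rTensor_apply, Function.comp_apply] using h

theorem lTensor_injective_of_exact {X Y Z : Type*} [AddCommGroup X] [Module R X]
    [AddCommGroup Y] [Module R Y] [AddCommGroup Z] [Module R Z] [Module.Flat R N]
    {φ : M →ₗ[R] N} {f : X →ₗ[R] Y} {g : Y →ₗ[R] Z} (hf : Function.Injective f)
    (hg : Function.Surjective g) (hfg : Function.Exact f g)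
    (hX : Function.Injective (φ.lTensor X)) (hZ : Function.Injective (φ.lTensor Z)) :
    Function.Injective (φ.lTensor Y) := by
  refine (injective_iff_map_eq_zero _).mpr fun z hz ↦ ?_
  have hgz : g.rTensor M z = 0 := hZ (by rw [lTensor_rTensor_apply, hz, map_zero, map_zero])
  obtain ⟨y, rfl⟩ := (rTensor_exact M hfg hg z).mp hgz
  have hy : φ.lTensor X y = 0 := Module.Flat.rTensor_preserves_injective_linearMap (M := N) f hf
    (by rw [← lTensor_rTensor_apply, hz, map_zero])
  rw [hX (hy.trans (map_zero _).symm), map_zero]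

theorem exists_injective_quotient_field {P : Ideal R} {k : Type*} [Field k] [Algebra R k]
    (hk : RingHom.ker (algebraMap R k) = P) :
    ∃ ι : (R ⧸ P) →ₗ[R] k, Function.Injective ι := by
  have h : ∀ a ∈ P, Algebra.ofId R k a = 0 := fun _ ha ↦ hk.ge ha
  exact ⟨(Ideal.Quotient.liftₐ P (Algebra.ofId R k) h).toLinearMap,
    RingHom.lift_injective_of_ker_le_ideal P h hk.le⟩

theorem flat_quotient_range_of_lTensor_injective [Module.Flat R N] {φ : M →ₗ[R] N}
    (h : ∀ I : Ideal R, Function.Injective (φ.lTensor (R ⧸ I))) :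
    Module.Flat R (N ⧸ LinearMap.range φ) := by
  refine Module.Flat.iff_rTensor_injective'.mpr fun I ↦ (injective_iff_map_eq_zero _).mpr ?_
  let π := (LinearMap.range φ).mkQ
  have hφπ : Function.Exact φ π := LinearMap.exact_map_mkQ_range φ
  have hπ : Function.Surjective π := Submodule.mkQ_surjective _
  have hI : Function.Exact I.subtype I.mkQ := LinearMap.exact_subtype_mkQ I
  intro z hz
  obtain ⟨n, rfl⟩ := π.lTensor_surjective I hπ z
  obtain ⟨m, hm⟩ := (lTensor_exact R hφπ hπ (I.subtype.rTensor N n)).mp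
    ((lTensor_rTensor_apply π I.subtype n).trans hz)
  have hm0 : I.mkQ.rTensor M m = 0 := h I <| by
    rw [lTensor_rTensor_apply, hm, map_zero]
    exact (rTensor_exact N hI I.mkQ_surjective).apply_apply_eq_zero n
  obtain ⟨m', rfl⟩ := (rTensor_exact M hI I.mkQ_surjective m).mp hm0
  have hm' : φ.lTensor I m' = n :=
    Module.Flat.rTensor_preserves_injective_linearMap (M := N) I.subtype
      I.subtype_injective (by rw [← hm, lTensor_rTensor_apply])
  rw [← hm']
  exact (lTensor_exact I hφπ hπ).apply_apply_eq_zero m'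

variable [IsNoetherianRing R]

theorem lTensor_injective_of_fibers [Module.Flat R M] [Module.Flat R N] {φ : M →ₗ[R] N}
    (h : ∀ P : Ideal R, P.IsPrime → ∃ (k : Type u') (_ : Field k) (_ : Algebra R k),
      RingHom.ker (algebraMap R k) = P ∧ Function.Injective (φ.lTensor k))
    (X : Type*) [AddCommGroup X] [Module R X] [hX : Module.Finite R X] :
    Function.Injective (φ.lTensor X) := by
  induction hX using IsNoetherianRing.induction_on_isQuotientEquivQuotientPrime R with
  | subsingleton => exact Function.injective_of_subsingleton _
  | quotient _ p e =>
    obtain ⟨k, _, _, hk, hinj⟩ := h p.1 p.2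
    obtain ⟨ι, hι⟩ := exists_injective_quotient_field hk
    exact lTensor_injective_of_injective (ι ∘ₗ e.toLinearMap) (hι.comp e.injective) hinj
  | exact _ _ _ f g hf hg hfg hX hZ => exact lTensor_injective_of_exact hf hg hfg hX hZ

theorem subsingleton_of_fibers {Q : Type*} [AddCommGroup Q] [Module R Q] [Module.Flat R Q]
    (h : ∀ P : Ideal R, P.IsPrime → ∃ (k : Type u') (_ : Field k) (_ : Algebra R k),
      RingHom.ker (algebraMap R k) = P ∧ Subsingleton (k ⊗[R] Q)) :
    Subsingleton Q := by
  have hinj : Function.Injective ((0 : Q →ₗ[R] Q).lTensor R) := by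
    refine lTensor_injective_of_fibers (fun P hP ↦ ?_) R
    obtain ⟨k, _, _, hk, _⟩ := h P hP
    exact ⟨k, _, _, hk, Function.injective_of_subsingleton _⟩
  have : Subsingleton (R ⊗[R] Q) := ⟨fun x y ↦ hinj (by simp)⟩
  exact (TensorProduct.lid R Q).symm.injective.subsingleton

theorem flat_quotient_range_of_fibers [Module.Flat R M] [Module.Flat R N] {φ : M →ₗ[R] N}
    (h : ∀ P : Ideal R, P.IsPrime → ∃ (k : Type u') (_ : Field k) (_ : Algebra R k),
      RingHom.ker (algebraMap R k) = P ∧ Function.Injective (φ.lTensor k)) :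
    Module.Flat R (N ⧸ LinearMap.range φ) :=
  flat_quotient_range_of_lTensor_injective fun _ ↦ lTensor_injective_of_fibers h _

theorem bijective_of_fibers [Module.Flat R M] [Module.Flat R N] {φ : M →ₗ[R] N}
    (h : ∀ P : Ideal R, P.IsPrime → ∃ (k : Type u') (_ : Field k) (_ : Algebra R k),
      RingHom.ker (algebraMap R k) = P ∧ Function.Bijective (φ.lTensor k)) :
    Function.Bijective φ := by
  have hinj : ∀ P : Ideal R, P.IsPrime → ∃ (k : Type u') (_ : Field k) (_ : Algebra R k),
      RingHom.ker (algebraMap R k) = P ∧ Function.Injective (φ.lTensor k) := fun P hP ↦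
    let ⟨k, i, j, hk, hφ⟩ := h P hP
    ⟨k, i, j, hk, hφ.injective⟩
  refine ⟨?_, ?_⟩
  · refine Function.Injective.of_comp (f := (TensorProduct.lid R N).symm) ?_
    have hcomp : (TensorProduct.lid R N).symm ∘ φ = φ.lTensor R ∘ (TensorProduct.lid R M).symm := by
      ext; simp
    rw [hcomp]
    exact (lTensor_injective_of_fibers hinj R).comp (TensorProduct.lid R M).symm.injective
  · have : Module.Flat R (N ⧸ LinearMap.range φ) := flat_quotient_range_of_fibers hinj
    have : Subsingleton (N ⧸ LinearMap.range φ) := by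
      refine subsingleton_of_fibers (R := R) fun P hP ↦ ?_
      obtain ⟨k, i, j, hk, hφ⟩ := h P hP
      refine ⟨k, i, j, hk, ⟨fun y y' ↦ ?_⟩⟩
      suffices ∀ y : k ⊗[R] (N ⧸ LinearMap.range φ), y = 0 by rw [this y, this y']
      refine fun y ↦ ?_
      obtain ⟨n, rfl⟩ := (LinearMap.range φ).mkQ.lTensor_surjective k
        (Submodule.mkQ_surjective _) y
      obtain ⟨m, rfl⟩ := hφ.surjective n
      exact (lTensor_exact k (LinearMap.exact_map_mkQ_range φ)
        (Submodule.mkQ_surjective _)).apply_apply_eq_zero m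
    exact LinearMap.range_eq_top.mp (Submodule.Quotient.subsingleton_iff.mp this)

end FibreCriteria

section TensorImage

variable {R : Type*} [CommRing R] {M M' : Type*} [AddCommGroup M] [Module R M] [AddCommGroup M']
  [Module R M'] (Q : Type*) [AddCommGroup Q] [Module R Q]

/-- The image of `N ⊗ Q` in `M ⊗ Q`, for a submodule `N` of `M`. -/
def tensorImage (N : Submodule R M) : Submodule R (M ⊗[R] Q) :=
  LinearMap.range (N.subtype.rTensor Q)

variable {Q}

theorem tmul_mem_tensorImage {N : Submodule R M} {x : M} (hx : x ∈ N) (q : Q) :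
    x ⊗ₜ[R] q ∈ tensorImage Q N :=
  ⟨(⟨x, hx⟩ : N) ⊗ₜ q, rfl⟩

theorem tensorImage_induction {N : Submodule R M} {p : M ⊗[R] Q → Prop} (zero : p 0)
    (tmul : ∀ x ∈ N, ∀ q, p (x ⊗ₜ q)) (add : ∀ y z, p y → p z → p (y + z)) {y : M ⊗[R] Q}
    (hy : y ∈ tensorImage Q N) : p y := by
  obtain ⟨z, rfl⟩ := hy
  induction z with
  | zero => rwa [map_zero]
  | tmul x q => exact tmul x x.2 q
  | add a b ha hb => rw [map_add]; exact add _ _ ha hb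

@[simp]
theorem tensorImage_top : tensorImage Q (⊤ : Submodule R M) = ⊤ :=
  LinearMap.range_eq_top.mpr (LinearMap.rTensor_surjective Q fun x ↦ ⟨⟨x, trivial⟩, rfl⟩)

theorem rTensor_mem_tensorImage {f : M →ₗ[R] M'} {N : Submodule R M} {N' : Submodule R M'}
    (h : N ≤ N'.comap f) {y : M ⊗[R] Q} (hy : y ∈ tensorImage Q N) :
    f.rTensor Q y ∈ tensorImage Q N' :=
  tensorImage_induction (p := fun y ↦ f.rTensor Q y ∈ tensorImage Q N') (by simp)
    (fun x hx q ↦ tmul_mem_tensorImage (show f x ∈ N' from h hx) q)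
    (fun _ _ hy hz ↦ by rw [map_add]; exact add_mem hy hz) hy

theorem tensorImage_mono {N N' : Submodule R M} (h : N ≤ N') :
    tensorImage Q N ≤ tensorImage Q N' := fun y hy ↦ by
  simpa using rTensor_mem_tensorImage (f := LinearMap.id) h hy

theorem lTensor_mem_tensorImage {Q' : Type*} [AddCommGroup Q'] [Module R Q'] (g : Q →ₗ[R] Q')
    {N : Submodule R M} {y : M ⊗[R] Q} (hy : y ∈ tensorImage Q N) :
    g.lTensor M y ∈ tensorImage Q' N := by
  obtain ⟨z, rfl⟩ := hy
  exact ⟨g.lTensor N z, by simp only [← LinearMap.comp_apply, LinearMap.rTensor_comp_lTensor,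
    LinearMap.lTensor_comp_rTensor]⟩

theorem tensorImage_range (f : M →ₗ[R] M') :
    tensorImage Q (LinearMap.range f) = LinearMap.range (f.rTensor Q) := by
  conv_rhs => rw [← f.subtype_comp_codRestrict _ f.mem_range_self, LinearMap.rTensor_comp]
  exact (LinearMap.range_comp_of_range_eq_top _ (LinearMap.range_eq_top.mpr
    (LinearMap.rTensor_surjective Q f.surjective_rangeRestrict))).symm

theorem mem_tensorImage_iff_rTensor_mkQ_eq_zero {N : Submodule R M} {y : M ⊗[R] Q} :
    y ∈ tensorImage Q N ↔ N.mkQ.rTensor Q y = 0 :=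
  (rTensor_exact Q (LinearMap.exact_subtype_mkQ N) N.mkQ_surjective y).symm

variable [Module.Flat R Q]

theorem tensorImage_ker (f : M →ₗ[R] M') :
    tensorImage Q (LinearMap.ker f) = LinearMap.ker (f.rTensor Q) :=
  (Module.Flat.rTensor_exact Q (LinearMap.exact_subtype_ker_map f)).linearMap_ker_eq.symm

theorem mem_tensorImage_comap_iff {f : M →ₗ[R] M'} {N : Submodule R M'} {y : M ⊗[R] Q} :
    y ∈ tensorImage Q (N.comap f) ↔ f.rTensor Q y ∈ tensorImage Q N := by
  rw [mem_tensorImage_iff_rTensor_mkQ_eq_zero (N := N), ← LinearMap.rTensor_comp_apply,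
    ← LinearMap.mem_ker, ← tensorImage_ker, LinearMap.ker_comp, Submodule.ker_mkQ]

theorem mem_tensorImage_inf {N N' : Submodule R M} {y : M ⊗[R] Q} (hN : y ∈ tensorImage Q N)
    (hN' : y ∈ tensorImage Q N') : y ∈ tensorImage Q (N ⊓ N') := by
  obtain ⟨z, rfl⟩ := hN
  exact rTensor_mem_tensorImage (N' := N ⊓ N') (fun x hx ↦ ⟨x.2, hx⟩)
    (mem_tensorImage_comap_iff (f := N.subtype).mpr hN')

theorem mem_tensorImage_finset_inf {ι : Type*} {s : Finset ι} {N : ι → Submodule R M}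
    {y : M ⊗[R] Q} (h : ∀ i ∈ s, y ∈ tensorImage Q (N i)) : y ∈ tensorImage Q (s.inf N) :=
  Finset.inf_induction (p := fun N ↦ y ∈ tensorImage Q N) (by simp)
    (fun _ hN _ hN' ↦ mem_tensorImage_inf hN hN') h

end TensorImage

section TensorImageField

variable {R : Type*} [CommRing R] {K : Type*} [Field K] [Algebra R K] {Q : Type*}
  [AddCommGroup Q] [Module R Q]

theorem smul_mem_tensorImage {N N' : Submodule R K} {c : K} (h : ∀ x ∈ N, c * x ∈ N')
    {y : K ⊗[R] Q} (hy : y ∈ tensorImage Q N) : c • y ∈ tensorImage Q N' :=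
  rTensor_mem_tensorImage (f := LinearMap.mulLeft R c) h hy

theorem exists_tmul_of_mem_tensorImage_one {y : K ⊗[R] Q}
    (hy : y ∈ tensorImage Q (1 : Submodule R K)) : ∃ q : Q, y = 1 ⊗ₜ q := by
  refine tensorImage_induction (p := fun y ↦ ∃ q : Q, y = 1 ⊗ₜ q) ⟨0, by simp⟩ ?_ ?_ hy
  · intro x hx q
    obtain ⟨r, rfl⟩ := Submodule.mem_one.mp hx
    exact ⟨r • q, by rw [Algebra.algebraMap_eq_smul_one, smul_tmul]⟩
  · rintro _ _ ⟨q, rfl⟩ ⟨q', rfl⟩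
    exact ⟨q + q', (tmul_add _ _ _).symm⟩

theorem exists_smul_mem_tensorImage (S : Submonoid R) {N N' : Submodule R K}
    (h : ∀ x ∈ N, ∃ r ∈ S, r • x ∈ N') {y : K ⊗[R] Q} (hy : y ∈ tensorImage Q N) :
    ∃ r ∈ S, r • y ∈ tensorImage Q N' := by
  refine tensorImage_induction (p := fun y ↦ ∃ r ∈ S, r • y ∈ tensorImage Q N')
    ⟨1, S.one_mem, by simp⟩ ?_ ?_ hy
  · intro x hx q
    obtain ⟨r, hr, hrx⟩ := h x hx
    exact ⟨r, hr, tmul_mem_tensorImage hrx q⟩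
  · rintro y z ⟨r, hr, hy⟩ ⟨s, hs, hz⟩
    refine ⟨r * s, S.mul_mem hr hs, ?_⟩
    have hrs : (r * s) • (y + z) = s • r • y + r • s • z := by
      rw [smul_add, smul_smul, smul_smul, mul_comm s r]
    rw [hrs]
    exact add_mem (Submodule.smul_mem _ _ hy) (Submodule.smul_mem _ _ hz)

theorem mem_tensorImage_div [Module.Flat R Q] {N J : Submodule R K} (hJ : J.FG) {y : K ⊗[R] Q}
    (h : ∀ c ∈ J, c • y ∈ tensorImage Q N) : y ∈ tensorImage Q (N / J) := by
  obtain ⟨s, rfl⟩ := hJ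
  refine tensorImage_mono ?_ (mem_tensorImage_finset_inf (s := s)
    (N := fun c ↦ N.comap (LinearMap.mulLeft R c)) fun c hc ↦ mem_tensorImage_comap_iff.mpr
      (h c (Submodule.subset_span hc)))
  refine fun x hx ↦ Submodule.mem_div_iff_forall_mul_mem.mpr fun c hc ↦ ?_
  induction hc using Submodule.span_induction with
  | mem c hc =>
    rw [mul_comm]
    exact Finset.inf_le (f := fun c ↦ N.comap (LinearMap.mulLeft R c)) hc hx
  | zero => simp
  | add a b _ _ ha hb => rw [mul_add]; exact add_mem ha hb
  | smul r c _ hc => rw [mul_smul_comm]; exact N.smul_mem r hc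

end TensorImageField

section ValuationSubring

variable (R : Type*) [CommRing R] {K : Type*} [Field K] [Algebra R K] (V : ValuationSubring K)
  [Algebra R V] [IsScalarTower R V K]

/-- A valuation ring `V` of `K` containing the image of `R`, as an `R`-submodule of `K`. -/
def valuationIntegers : Submodule R K where
  carrier := {x | x ∈ V}
  add_mem' := V.add_mem _ _
  zero_mem' := V.zero_mem
  smul_mem' r x hx := by
    rw [← algebraMap_smul V r x]
    exact V.mul_mem _ _ (algebraMap R V r).2 hx

/-- The maximal ideal of a valuation ring `V` of `K` containing the image of `R`, as an
`R`-submodule of `K`. -/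
def valuationIdeal : Submodule R K where
  carrier := {x | V.valuation x < 1}
  add_mem' {a b} ha hb := (V.valuation.map_add a b).trans_lt (max_lt ha hb)
  zero_mem' := by simp
  smul_mem' r x hx := by
    have hr : V.valuation (algebraMap R V r : K) ≤ 1 := V.valuation_le_one _
    rw [← algebraMap_smul V r x]
    exact (map_mul V.valuation _ _).trans_lt ((mul_le_of_le_one_left' hr).trans_lt hx)

variable {R V}

@[simp]
theorem mem_valuationIntegers {x : K} : x ∈ valuationIntegers R V ↔ x ∈ V := Iff.rfl

@[simp]
theorem mem_valuationIdeal {x : K} : x ∈ valuationIdeal R V ↔ V.valuation x < 1 := Iff.rfl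

end ValuationSubring

theorem exists_valuationSubring_center {R K : Type*} [CommRing R] [Field K] [Algebra R K]
    (S : Subalgebra R K) (p : Ideal S) [p.IsPrime] :
    ∃ (V : ValuationSubring K) (_ : Algebra R V) (_ : IsScalarTower R V K),
      S.toSubmodule ≤ valuationIntegers R V ∧ ∀ s : S, V.valuation (s : K) < 1 ↔ s ∈ p := by
  let L := LocalSubring.ofPrime S.toSubring p
  obtain ⟨V, hLV, hlocal⟩ := L.exists_le_valuationSubring
  have hSV : S.toSubring ≤ V.toSubring := (LocalSubring.le_ofPrime S.toSubring p).trans hLV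
  let _ : Algebra R V :=
    ((algebraMap R K).codRestrict V fun r ↦ hSV (S.algebraMap_mem r)).toAlgebra
  refine ⟨V, inferInstance, .of_algebraMap_eq fun _ ↦ rfl, fun x hx ↦ hSV hx, fun s ↦ ?_⟩
  have hs : IsUnit (⟨s, hSV s.2⟩ : V) ↔ IsUnit (algebraMap S.toSubring L.toSubring s) :=
    ⟨hlocal.1 (algebraMap S.toSubring L.toSubring s), fun h ↦ h.map (Subring.inclusion hLV)⟩
  rw [← V.valuation_lt_one_iff ⟨s, hSV s.2⟩, IsLocalRing.mem_maximalIdeal, mem_nonunits_iff, hs,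
    IsLocalization.AtPrime.isUnit_to_map_iff L.toSubring (show Ideal S.toSubring from p) s]
  exact not_not

section LocalDescent

variable {R K : Type*} [CommRing R] [Field K] [Algebra R K] (O : Subalgebra R K) [IsLocalRing O]

/-- The maximal ideal of a local `R`-subalgebra `O` of `K`, as an `R`-submodule of `K`. -/
def maximalSubmodule : Submodule R K :=
  ((IsLocalRing.maximalIdeal O).restrictScalars R).map O.val.toLinearMap

variable {O}

theorem coe_mem_maximalSubmodule {x : O} :
    (x : K) ∈ maximalSubmodule O ↔ x ∈ IsLocalRing.maximalIdeal O := by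
  simp [maximalSubmodule]

theorem maximalSubmodule_le : maximalSubmodule O ≤ O.toSubmodule := by
  rintro _ ⟨x, -, rfl⟩
  exact x.2

theorem mul_mem_maximalSubmodule {x y : K} (hx : x ∈ O) (hy : y ∈ maximalSubmodule O) :
    x * y ∈ maximalSubmodule O := by
  obtain ⟨y, hy, rfl⟩ := hy
  exact ⟨⟨x, hx⟩ * y, Ideal.mul_mem_left _ _ hy, rfl⟩

theorem inv_mem_of_notMem_maximalSubmodule {x : K} (hx : x ∈ O) (hx' : x ∉ maximalSubmodule O) :
    x⁻¹ ∈ O := by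
  obtain ⟨y, hy⟩ := isUnit_iff_exists_inv.mp
    (IsLocalRing.notMem_maximalIdeal.mp (mt coe_mem_maximalSubmodule.mpr hx' :
      (⟨x, hx⟩ : O) ∉ IsLocalRing.maximalIdeal O))
  rw [inv_eq_of_mul_eq_one_right (congrArg Subtype.val hy)]
  exact y.2

variable (O) in
/-- The endomorphism ring `(𝔪 : 𝔪)` of the maximal ideal `𝔪` of `O`, as an `R`-subalgebra of `K`. -/
def multiplierRing : Subalgebra R K :=
  (maximalSubmodule O / maximalSubmodule O).toSubalgebra
    (Submodule.mem_div_iff_forall_mul_mem.mpr fun y hy ↦ by rwa [one_mul])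
    fun x y hx hy ↦ Submodule.mem_div_iff_forall_mul_mem.mpr fun z hz ↦ by
      rw [Submodule.mem_div_iff_forall_mul_mem] at hx hy
      rw [mul_assoc]
      exact hx _ (hy z hz)

theorem mem_multiplierRing {x : K} :
    x ∈ multiplierRing O ↔ ∀ y ∈ maximalSubmodule O, x * y ∈ maximalSubmodule O :=
  Submodule.mem_div_iff_forall_mul_mem

theorem le_multiplierRing : O ≤ multiplierRing O := fun _ hx ↦
  mem_multiplierRing.mpr fun _ hy ↦ mul_mem_maximalSubmodule hx hy

variable (O) in
/-- The maximal ideal `𝔪` of `O`, as an ideal of `(𝔪 : 𝔪)`. -/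
def multiplierIdeal : Ideal (multiplierRing O) where
  carrier := {x | (x : K) ∈ maximalSubmodule O}
  add_mem' := (maximalSubmodule O).add_mem
  zero_mem' := (maximalSubmodule O).zero_mem
  smul_mem' c x hx := mem_multiplierRing.mp c.2 x hx

theorem multiplierIdeal_isRadical (hsn : ∀ x : K, x ^ 2 ∈ O → x ^ 3 ∈ O → x ∈ O) :
    (multiplierIdeal O).IsRadical := by
  refine (Ideal.isRadical_iff_pow_one_lt 2 one_lt_two).mpr fun s hs ↦ ?_
  replace hs : (s : K) ^ 2 ∈ maximalSubmodule O := hs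
  have hs3 : (s : K) ^ 3 ∈ maximalSubmodule O := by
    rw [pow_succ' (s : K) 2]
    exact mem_multiplierRing.mp s.2 _ hs
  have hsO : (s : K) ∈ O := hsn s (maximalSubmodule_le hs) (maximalSubmodule_le hs3)
  have hsq : (⟨(s : K), hsO⟩ : O) ^ 2 ∈ IsLocalRing.maximalIdeal O := coe_mem_maximalSubmodule.mp hs
  exact coe_mem_maximalSubmodule.mpr (Ideal.IsPrime.mem_of_pow_mem inferInstance 2 hsq)

theorem isNoetherianRing_multiplierRing [IsNoetherianRing O]
    (hO : IsLocalRing.maximalIdeal O ≠ ⊥) : IsNoetherianRing (multiplierRing O) := by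
  obtain ⟨y, hy, hy0⟩ := Submodule.exists_mem_ne_zero_of_ne_bot hO
  let _ : Algebra O (multiplierRing O) := (Subalgebra.inclusion le_multiplierRing).toAlgebra
  let mulRight : multiplierRing O →ₗ[O] O :=
    { toFun s := ⟨s * y, maximalSubmodule_le
        (mem_multiplierRing.mp s.2 y (coe_mem_maximalSubmodule.mpr hy))⟩
      map_add' s s' := Subtype.ext (add_mul (s : K) s' y)
      map_smul' a s := Subtype.ext (mul_assoc (a : K) s y) }
  have hinj : Function.Injective mulRight := fun s s' h ↦ Subtype.ext <|
    mul_right_cancel₀ (b := (y : K)) (by simpa using hy0) (congrArg Subtype.val h)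
  have := isNoetherian_of_injective mulRight hinj
  exact isNoetherian_of_tower O this

theorem div_maximalSubmodule_le_multiplierRing
    (h : ∀ x ∈ maximalSubmodule O, x ≠ 0 → x⁻¹ ∉ O.toSubmodule / maximalSubmodule O) :
    O.toSubmodule / maximalSubmodule O ≤ (multiplierRing O).toSubmodule := by
  refine fun x hx ↦ mem_multiplierRing.mpr fun y hy ↦ ?_
  have hdiv {z : K} : z ∈ O.toSubmodule / maximalSubmodule O ↔
    ∀ y ∈ maximalSubmodule O, z * y ∈ O := Submodule.mem_div_iff_forall_mul_mem
  by_contra hxy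
  have hx0 : x ≠ 0 := by rintro rfl; simp at hxy
  have hy0 : y ≠ 0 := by rintro rfl; simp at hxy
  have hinv := inv_mem_of_notMem_maximalSubmodule (hdiv.mp hx y hy) hxy
  refine h y hy hy0 (hdiv.mpr fun z hz ↦ ?_)
  have hyz : y⁻¹ * z = (x * y)⁻¹ * (x * z) := by field_simp
  rw [hyz]
  exact O.mul_mem hinv (hdiv.mp hx z hz)

end LocalDescent

section Descent

variable {R K : Type*} [CommRing R] [Field K] [Algebra R K] {Q : Type*} [AddCommGroup Q]
  [Module R Q]

/-- A valuation ring `V` of `K` is centred on the ideal `P` of `R`. -/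
def IsCentredOn (V : ValuationSubring K) (P : Ideal R) : Prop :=
  ∀ r : R, V.valuation (algebraMap R K r) < 1 ↔ r ∈ P

/-- The first of the two valuative conditions for an element of `K ⊗ Q` to come from `Q`: over
each valuation ring containing `R`, clearing the denominators of `τ` with a nonunit
yields an element that vanishes modulo the maximal ideal. -/
def HasValuativelyTrivialPoles (τ : K ⊗[R] Q) : Prop :=
  ∀ (V : ValuationSubring K) [Algebra R V] [IsScalarTower R V K] (c : K), V.valuation c < 1 →
    c • τ ∈ tensorImage Q (valuationIntegers R V) → c • τ ∈ tensorImage Q (valuationIdeal R V)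

/-- The second valuative condition: the residues of `τ` at the valuation rings centred on `P` all
come from one element `r⁻¹ ⊗ ξ` of `R_P ⊗ Q`. -/
def HasRationalResidueAt (P : Ideal R) (τ : K ⊗[R] Q) : Prop :=
  ∃ r ∉ P, ∃ ξ : Q, ∀ (V : ValuationSubring K) [Algebra R V] [IsScalarTower R V K],
    IsCentredOn V P → τ ∈ tensorImage Q (valuationIntegers R V) →
      r • τ - 1 ⊗ₜ ξ ∈ tensorImage Q (valuationIdeal R V)

section Local

variable {O : Subalgebra R K} [IsLocalRing O] [Module.Flat R Q]

theorem mem_tensorImage_of_principal {t : K ⊗[R] Q} {x : K} (hx : x ∈ maximalSubmodule O)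
    (hx0 : x ≠ 0) (hxinv : x⁻¹ ∈ O.toSubmodule / maximalSubmodule O)
    (hpole : HasValuativelyTrivialPoles t)
    (ht : t ∈ tensorImage Q (O.toSubmodule / maximalSubmodule O)) :
    t ∈ tensorImage Q O.toSubmodule := by
  obtain ⟨V, _, _, hOV, hV⟩ := exists_valuationSubring_center O (IsLocalRing.maximalIdeal O)
  have hxt : x • t ∈ tensorImage Q O.toSubmodule := smul_mem_tensorImage (fun y hy ↦ by
    rw [mul_comm]; exact Submodule.mem_div_iff_forall_mul_mem.mp hy x hx) ht
  have hVx : V.valuation x < 1 := by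
    obtain ⟨x, hx, rfl⟩ := hx
    exact (hV x).mpr hx
  have hxtV := hpole V x hVx (tensorImage_mono hOV hxt)
  rw [← inv_smul_smul₀ hx0 t]
  refine smul_mem_tensorImage (fun z hz ↦ ?_) (mem_tensorImage_inf hxt hxtV)
  exact Submodule.mem_div_iff_forall_mul_mem.mp hxinv z
    (coe_mem_maximalSubmodule.mpr ((hV ⟨z, hz.1⟩).mp hz.2))

theorem mem_tensorImage_of_mem_multiplierRing [IsNoetherianRing (multiplierRing O)]
    (hsn : ∀ x : K, x ^ 2 ∈ O → x ^ 3 ∈ O → x ∈ O) {t η : K ⊗[R] Q}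
    (ht : t ∈ tensorImage Q (multiplierRing O).toSubmodule) (hη : η ∈ tensorImage Q O.toSubmodule)
    (hres : ∀ (V : ValuationSubring K) [Algebra R V] [IsScalarTower R V K],
      IsCentredOn V ((IsLocalRing.maximalIdeal O).comap (algebraMap R O)) →
        t ∈ tensorImage Q (valuationIntegers R V) → t - η ∈ tensorImage Q (valuationIdeal R V)) :
    t ∈ tensorImage Q O.toSubmodule := by
  let S := multiplierRing O
  let N (p : Ideal S) : Submodule R K := (p.restrictScalars R).map S.val.toLinearMap
  have hfin := (multiplierIdeal O).finite_minimalPrimes_of_isNoetherianRing S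
  have hOS : O.toSubmodule ≤ S.toSubmodule := le_multiplierRing
  have hmem : ∀ p ∈ hfin.toFinset, t - η ∈ tensorImage Q (N p) := by
    intro p hp
    obtain ⟨⟨hp, hIp⟩, -⟩ := hfin.mem_toFinset.mp hp
    obtain ⟨V, _, _, hSV, hV⟩ := exists_valuationSubring_center S p
    have hcentre : p.comap (Subalgebra.inclusion le_multiplierRing) =
        IsLocalRing.maximalIdeal O := by
      refine ((IsLocalRing.maximalIdeal.isMaximal O).eq_of_le
        (Ideal.comap_ne_top _ hp.ne_top) fun x hx ↦ hIp ?_).symm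
      exact coe_mem_maximalSubmodule.mpr hx
    have hVt := hres V (fun r ↦ by
      rw [← hcentre]
      exact hV (algebraMap R S r)) (tensorImage_mono hSV ht)
    refine tensorImage_mono ?_
      (mem_tensorImage_inf (sub_mem ht (tensorImage_mono hOS hη)) hVt)
    exact fun x hx ↦ ⟨⟨x, hx.1⟩, (hV ⟨x, hx.1⟩).mp hx.2, rfl⟩
  have hle : S.toSubmodule ⊓ hfin.toFinset.inf N ≤ O.toSubmodule := by
    rintro x ⟨hxS, hxN⟩
    have hxI : (⟨x, hxS⟩ : S) ∈ multiplierIdeal O := by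
      rw [← (multiplierIdeal_isRadical hsn).radical, ← Ideal.sInf_minimalPrimes, Submodule.mem_sInf]
      intro p hp
      obtain ⟨s, hs, rfl⟩ := Finset.inf_le (f := N) (hfin.mem_toFinset.mpr hp) hxN
      exact hs
    exact maximalSubmodule_le hxI
  have hsub : t - η ∈ tensorImage Q O.toSubmodule :=
    tensorImage_mono hle (mem_tensorImage_inf (sub_mem ht (tensorImage_mono hOS hη))
      (mem_tensorImage_finset_inf hmem))
  simpa using add_mem hsub hη

theorem mem_tensorImage_of_isLocalRing [IsNoetherianRing O]
    (hO : IsLocalRing.maximalIdeal O ≠ ⊥) (hsn : ∀ x : K, x ^ 2 ∈ O → x ^ 3 ∈ O → x ∈ O)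
    {t η : K ⊗[R] Q} (ht : t ∈ tensorImage Q (O.toSubmodule / maximalSubmodule O))
    (hη : η ∈ tensorImage Q O.toSubmodule) (hpole : HasValuativelyTrivialPoles t)
    (hres : ∀ (V : ValuationSubring K) [Algebra R V] [IsScalarTower R V K],
      IsCentredOn V ((IsLocalRing.maximalIdeal O).comap (algebraMap R O)) →
        t ∈ tensorImage Q (valuationIntegers R V) → t - η ∈ tensorImage Q (valuationIdeal R V)) :
    t ∈ tensorImage Q O.toSubmodule := by
  by_cases h : ∃ x ∈ maximalSubmodule O, x ≠ 0 ∧ x⁻¹ ∈ O.toSubmodule / maximalSubmodule O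
  · obtain ⟨x, hx, hx0, hxinv⟩ := h
    exact mem_tensorImage_of_principal hx hx0 hxinv hpole ht
  · push Not at h
    have := isNoetherianRing_multiplierRing hO
    exact mem_tensorImage_of_mem_multiplierRing hsn
      (tensorImage_mono (div_maximalSubmodule_le_multiplierRing h) ht) hη hres

end Local

theorem HasValuativelyTrivialPoles.smul {τ : K ⊗[R] Q} (h : HasValuativelyTrivialPoles τ) (a : R) :
    HasValuativelyTrivialPoles (a • τ) := by
  intro V _ _ c hc hcτ
  have ha : V.valuation (algebraMap R K a) ≤ 1 := by
    rw [IsScalarTower.algebraMap_apply R V K]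
    exact V.valuation_le_one _
  have hca : c • a • τ = (c * algebraMap R K a) • τ := by rw [mul_smul, algebraMap_smul]
  rw [hca] at hcτ ⊢
  exact h V _ (by rw [map_mul]; exact (mul_le_of_le_one_right' ha).trans_lt hc) hcτ

theorem exists_isPrime_forall_mem_iff_smul_mem [IsNoetherianRing R] {M : Type*} [AddCommGroup M]
    [Module R M] {N : Submodule R M} {x : M} (hx : x ∉ N) :
    ∃ (P : Ideal R) (a : R), P.IsPrime ∧ ∀ r, r ∈ P ↔ r • a • x ∈ N := by
  let y : M ⧸ N := N.mkQ x
  have hy : y ≠ 0 := by simpa [y] using hx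
  obtain ⟨P, hP, -⟩ := exists_le_isAssociatedPrime_of_isNoetherianRing R
    (⟨y, Submodule.mem_span_singleton_self y⟩ : Submodule.span R {y})
    (by simpa [Subtype.ext_iff] using hy)
  obtain ⟨hP, ⟨z, hz⟩, rfl⟩ := (isAssociatedPrime_iff).mp hP
  obtain ⟨a, rfl⟩ := Submodule.mem_span_singleton.mp hz
  refine ⟨_, a, hP, fun r ↦ ?_⟩
  rw [Submodule.mem_colon_singleton, Submodule.mem_bot, Subtype.ext_iff]
  change r • a • N.mkQ x = 0 ↔ _
  rw [← map_smul, ← map_smul, Submodule.mkQ_apply, Submodule.Quotient.mk_eq_zero]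

section LocalizationAt

theorem algebraMap_ne_zero_of_notMem [IsFractionRing R K] {P : Ideal R} {s : R} (hs : s ∉ P) :
    algebraMap R K s ≠ 0 := by
  rw [Ne, FaithfulSMul.algebraMap_eq_zero_iff]
  exact (ne_of_mem_of_not_mem P.zero_mem hs).symm

variable [IsDomain R] [IsFractionRing R K] (P : Ideal R) [P.IsPrime]

variable (K) in
/-- The localization `R_P`, as a subalgebra of the field of fractions `K` of `R`. -/
noncomputable abbrev localizationAt : Subalgebra R K :=
  Localization.subalgebra.ofField K P.primeCompl P.primeCompl_le_nonZeroDivisors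

variable {P}

theorem mem_localizationAt {x : K} :
    x ∈ localizationAt K P ↔ ∃ s ∈ P.primeCompl, s • x ∈ (1 : Submodule R K) := by
  constructor
  · rintro ⟨a, s, hs, rfl⟩
    refine ⟨s, hs, Submodule.mem_one.mpr ⟨a, ?_⟩⟩
    have := algebraMap_ne_zero_of_notMem (K := K) hs
    rw [Algebra.smul_def]
    field_simp
  · rintro ⟨s, hs, hx⟩
    obtain ⟨a, ha⟩ := Submodule.mem_one.mp hx
    refine ⟨a, s, hs, ?_⟩
    have := algebraMap_ne_zero_of_notMem (K := K) hs
    rw [ha, Algebra.smul_def]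
    field_simp

instance : IsLocalRing (localizationAt K P) :=
  have := Localization.subalgebra.isLocalization_ofField K P.primeCompl
    P.primeCompl_le_nonZeroDivisors
  IsLocalization.AtPrime.isLocalRing _ P

instance [IsNoetherianRing R] : IsNoetherianRing (localizationAt K P) :=
  have := Localization.subalgebra.isLocalization_ofField K P.primeCompl
    P.primeCompl_le_nonZeroDivisors
  IsLocalization.isNoetherianRing P.primeCompl _ inferInstance

variable (K P) in
theorem comap_maximalIdeal_localizationAt :
    (IsLocalRing.maximalIdeal (localizationAt K P)).comap (algebraMap R (localizationAt K P)) =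
      P :=
  have := Localization.subalgebra.isLocalization_ofField K P.primeCompl
    P.primeCompl_le_nonZeroDivisors
  IsLocalization.AtPrime.under_maximalIdeal _ P

variable (K P) in
theorem exists_isCentredOn : ∃ (V : ValuationSubring K) (_ : Algebra R V)
    (_ : IsScalarTower R V K), IsCentredOn V P := by
  let O := localizationAt K P
  obtain ⟨V, _, _, -, hV⟩ := exists_valuationSubring_center O (IsLocalRing.maximalIdeal O)
  refine ⟨V, inferInstance, inferInstance, fun r ↦ (hV (algebraMap R O r)).trans ?_⟩
  rw [← Ideal.mem_comap, comap_maximalIdeal_localizationAt]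

theorem mem_localizationAt_of_pow
    (hsn : ∀ x : K, x ^ 2 ∈ (1 : Submodule R K) → x ^ 3 ∈ (1 : Submodule R K) →
      x ∈ (1 : Submodule R K)) {x : K} (h2 : x ^ 2 ∈ localizationAt K P)
    (h3 : x ^ 3 ∈ localizationAt K P) : x ∈ localizationAt K P := by
  obtain ⟨r, hr, h2⟩ := mem_localizationAt.mp h2
  obtain ⟨s, hs, h3⟩ := mem_localizationAt.mp h3
  refine mem_localizationAt.mpr ⟨r * s, mul_mem hr hs, hsn _ ?_ ?_⟩
  · rw [smul_pow, show (r * s) ^ 2 = (r * s ^ 2) * r by ring, mul_smul]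
    exact Submodule.smul_mem _ _ h2
  · rw [smul_pow, show (r * s) ^ 3 = (r ^ 3 * s ^ 2) * s by ring, mul_smul]
    exact Submodule.smul_mem _ _ h3

theorem mem_tensorImage_localizationAt_div [IsNoetherianRing R] [Module.Flat R Q] {t : K ⊗[R] Q}
    (h : ∀ r ∈ P, r • t ∈ tensorImage Q (1 : Submodule R K)) :
    t ∈ tensorImage Q
      ((localizationAt K P).toSubmodule / maximalSubmodule (localizationAt K P)) := by
  let O := localizationAt K P
  let J : Submodule R K := Submodule.map (Algebra.linearMap R K) P
  have hJ : J.FG := (IsNoetherian.noetherian P).map _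
  refine tensorImage_mono (fun x hx ↦ Submodule.mem_div_iff_forall_mul_mem.mpr ?_)
    (mem_tensorImage_div (N := O.toSubmodule) hJ ?_)
  · rintro _ ⟨y, hy, rfl⟩
    obtain ⟨s, hs, hsy⟩ := mem_localizationAt.mp y.2
    obtain ⟨p, hp⟩ := Submodule.mem_one.mp hsy
    have hpP : p ∈ P := by
      rw [← comap_maximalIdeal_localizationAt K P, Ideal.mem_comap,
        show algebraMap R O p = s • y from Subtype.ext hp]
      exact Submodule.smul_of_tower_mem _ s hy
    have hxp := Submodule.mem_div_iff_forall_mul_mem.mp hx _ ⟨p, hpP, rfl⟩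
    obtain ⟨r, hr, hrx⟩ := mem_localizationAt.mp hxp
    refine mem_localizationAt.mpr ⟨r * s, mul_mem hr hs, ?_⟩
    rwa [mul_smul, ← mul_smul_comm, show s • (O.val.toLinearMap y : K) = _ from hp.symm]
  · rintro _ ⟨p, hp, rfl⟩
    refine tensorImage_mono (Submodule.one_le.mpr O.one_mem) ?_
    simpa using h p hp

theorem exists_residue_smul {τ : K ⊗[R] Q} (hpole : HasValuativelyTrivialPoles τ)
    (hres : HasRationalResidueAt P τ) (a : R) :
    ∃ η ∈ tensorImage Q (localizationAt K P).toSubmodule, ∀ (V : ValuationSubring K)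
      [Algebra R V] [IsScalarTower R V K], IsCentredOn V P →
        a • τ ∈ tensorImage Q (valuationIntegers R V) →
          a • τ - η ∈ tensorImage Q (valuationIdeal R V) := by
  by_cases ha : a ∈ P
  · refine ⟨0, zero_mem _, fun V _ _ hV haτ ↦ ?_⟩
    rw [← algebraMap_smul K a τ] at haτ ⊢
    rw [sub_zero]
    exact hpole V _ ((hV a).mpr ha) haτ
  · obtain ⟨r, hr, ξ, hξ⟩ := hres
    have ha0 := algebraMap_ne_zero_of_notMem (K := K) ha
    have hr0 := algebraMap_ne_zero_of_notMem (K := K) hr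
    have har : algebraMap R K a * (algebraMap R K r)⁻¹ ∈ localizationAt K P := ⟨a, r, hr, rfl⟩
    refine ⟨_, tmul_mem_tensorImage har ξ, fun V _ _ hV haτ ↦ ?_⟩
    have hunit {s : R} (hs : s ∉ P) : V.valuation (algebraMap R K s) = 1 := by
      refine le_antisymm ?_ (not_lt.mp (mt (hV s).mp hs))
      rw [IsScalarTower.algebraMap_apply R V K]
      exact V.valuation_le_one _
    have hτ : τ ∈ tensorImage Q (valuationIntegers R V) := by
      rw [← inv_smul_smul₀ ha0 τ, algebraMap_smul]
      refine smul_mem_tensorImage (fun x hx ↦ ?_) haτ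
      rw [mem_valuationIntegers, ← V.valuation_le_one_iff, map_mul, map_inv₀, hunit ha, inv_one,
        one_mul]
      exact (V.valuation_le_one_iff x).mpr hx
    have heq : a • τ - (algebraMap R K a * (algebraMap R K r)⁻¹) ⊗ₜ ξ =
        (algebraMap R K a * (algebraMap R K r)⁻¹) • (r • τ - 1 ⊗ₜ ξ) := by
      rw [smul_sub, smul_tmul', smul_eq_mul, mul_one, ← algebraMap_smul K r τ, smul_smul,
        inv_mul_cancel_right₀ hr0, algebraMap_smul]
    rw [heq]
    refine smul_mem_tensorImage (fun x hx ↦ ?_) (hξ V hV hτ)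
    rwa [mem_valuationIdeal, map_mul, map_mul, map_inv₀, hunit ha, hunit hr, inv_one, one_mul,
      one_mul]

end LocalizationAt

theorem exists_eq_one_tmul_of_valuative [IsDomain R] [IsNoetherianRing R] [IsFractionRing R K]
    [Module.Flat R Q] (hsn : ∀ x : K, x ^ 2 ∈ (1 : Submodule R K) → x ^ 3 ∈ (1 : Submodule R K) →
      x ∈ (1 : Submodule R K)) {τ : K ⊗[R] Q} (hpole : HasValuativelyTrivialPoles τ)
    (hres : ∀ P : Ideal R, P.IsPrime → HasRationalResidueAt P τ) :
    ∃ ξ : Q, τ = 1 ⊗ₜ ξ := by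
  refine exists_tmul_of_mem_tensorImage_one (by_contra fun hτ ↦ ?_)
  obtain ⟨P, a, hP, hPa⟩ := exists_isPrime_forall_mem_iff_smul_mem hτ
  let O := localizationAt K P
  have hO : IsLocalRing.maximalIdeal O ≠ ⊥ := by
    intro hbot
    have hPbot : P = ⊥ := by
      rw [← comap_maximalIdeal_localizationAt K P, hbot]
      exact (RingHom.injective_iff_ker_eq_bot _).mp (FaithfulSMul.algebraMap_injective R O)
    obtain ⟨r, hr, hrτ⟩ := exists_smul_mem_tensorImage (N := ⊤) (N' := (1 : Submodule R K))
      (nonZeroDivisors R) (fun x _ ↦ by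
        obtain ⟨⟨b, s⟩, hs⟩ := IsLocalization.surj (nonZeroDivisors R) x
        exact ⟨s, s.2, Submodule.mem_one.mpr ⟨b, by rw [← hs, Algebra.smul_def, mul_comm]⟩⟩)
      (y := a • τ) (by simp)
    exact nonZeroDivisors.ne_zero hr (by simpa [hPbot] using (hPa r).mpr hrτ)
  obtain ⟨η, hη, hV⟩ := exists_residue_smul hpole (hres P hP) a
  have ht : a • τ ∈ tensorImage Q O.toSubmodule :=
    mem_tensorImage_of_isLocalRing hO (fun _ ↦ mem_localizationAt_of_pow hsn)
      (mem_tensorImage_localizationAt_div fun r hr ↦ (hPa r).mp hr) hη (hpole.smul a)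
      (by rwa [comap_maximalIdeal_localizationAt])
  obtain ⟨s, hs, hst⟩ := exists_smul_mem_tensorImage P.primeCompl
    (fun _ ↦ mem_localizationAt.mp) ht
  exact hs ((hPa s).mpr hst)

theorem mem_one_of_pow_mem_one [IsDomain R] [IsFractionRing R K]
    (hsn : ∀ b c : R, b ^ 3 = c ^ 2 → ∃ a : R, a ^ 2 = b ∧ a ^ 3 = c) {x : K}
    (h2 : x ^ 2 ∈ (1 : Submodule R K)) (h3 : x ^ 3 ∈ (1 : Submodule R K)) :
    x ∈ (1 : Submodule R K) := by
  obtain ⟨b, hb⟩ := Submodule.mem_one.mp h2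
  obtain ⟨c, hc⟩ := Submodule.mem_one.mp h3
  obtain ⟨a, rfl, rfl⟩ := hsn b c (IsFractionRing.injective R K (by
    rw [map_pow, map_pow, hb, hc, ← pow_mul, ← pow_mul]))
  rw [map_pow] at hb hc
  obtain rfl | hx := eq_or_ne x 0
  · exact zero_mem _
  refine Submodule.mem_one.mpr ⟨a, mul_left_cancel₀ (pow_ne_zero 2 hx) ?_⟩
  rw [← pow_succ, ← hc, pow_succ (algebraMap R K a) 2, hb]

end Descent

section IsVariable

variable {σ : Type*} {k : Type*} [CommRing k] {C : Type*} [CommRing C] [Algebra k C] {W : σ → C}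
  {x y : C}

variable (k W) in
/-- The element `x` is a complementary variable of the family `W`: the `k`-algebra `C` is the
polynomial ring in `x` and the `W i`. -/
def IsVariable (x : C) : Prop :=
  Function.Bijective (MvPolynomial.aeval (R := k) fun o : Option σ ↦ o.elim x W)

theorem aeval_option_elim (p : MvPolynomial (Option σ) k) :
    MvPolynomial.aeval (fun o : Option σ ↦ o.elim x W) p =
      (MvPolynomial.optionEquivLeft k σ p).eval₂ (MvPolynomial.aeval W : _ →ₐ[k] C) x := by
  induction p using MvPolynomial.induction_on with
  | C a => simp
  | add p q hp hq => rw [map_add, map_add, Polynomial.eval₂_add, hp, hq]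
  | mul_X p o hp =>
    rw [map_mul, map_mul, Polynomial.eval₂_mul, hp]
    cases o <;> simp

theorem isVariable_iff_bijective_eval₂ :
    IsVariable k W x ↔
      Function.Bijective (Polynomial.eval₂ (MvPolynomial.aeval W : _ →ₐ[k] C).toRingHom x) := by
  have hcomp : ⇑(MvPolynomial.aeval (R := k) fun o : Option σ ↦ o.elim x W) =
      Polynomial.eval₂ (MvPolynomial.aeval W : _ →ₐ[k] C).toRingHom x ∘
        MvPolynomial.optionEquivLeft k σ := funext aeval_option_elim
  rw [IsVariable, hcomp]
  exact Function.Bijective.of_comp_iff _ (AlgEquiv.bijective _)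

theorem isVariable_of_ringEquiv (e : Polynomial (MvPolynomial σ k) ≃+* C)
    (hX : e Polynomial.X = x) (hC : ∀ g, e (Polynomial.C g) = MvPolynomial.aeval W g) :
    IsVariable k W x := by
  refine isVariable_iff_bijective_eval₂.mpr ?_
  convert e.bijective
  rw [← Polynomial.coe_eval₂RingHom]
  refine congrArg DFunLike.coe (Polynomial.ringHom_ext (g := e.toRingHom) (fun g ↦ ?_) ?_)
  · simpa using (hC g).symm
  · simpa using hX.symm

theorem eval₂_aeval_eq_comp (e : Polynomial (MvPolynomial σ k) ≃+* C)
    (hC : ∀ g, e (Polynomial.C g) = MvPolynomial.aeval W g) (p : Polynomial (MvPolynomial σ k)) :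
    p.eval₂ (MvPolynomial.aeval W : _ →ₐ[k] C).toRingHom y = e (p.comp (e.symm y)) := by
  have hring : Polynomial.eval₂RingHom (MvPolynomial.aeval W : _ →ₐ[k] C).toRingHom y =
      e.toRingHom.comp (Polynomial.compRingHom (e.symm y)) := by
    refine Polynomial.ringHom_ext (fun g ↦ ?_) ?_
    · simpa using (hC g).symm
    · simp
  exact RingHom.congr_fun hring p

namespace IsVariable

theorem exists_ringEquiv (h : IsVariable k W x) :
    ∃ e : Polynomial (MvPolynomial σ k) ≃+* C, e Polynomial.X = x ∧
      ∀ g, e (Polynomial.C g) = MvPolynomial.aeval W g :=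
  ⟨RingEquiv.ofBijective (Polynomial.eval₂RingHom _ _) (isVariable_iff_bijective_eval₂.mp h),
    Polynomial.eval₂_X _ _, fun _ ↦ Polynomial.eval₂_C _ _⟩

theorem map_algEquiv {C' : Type*} [CommRing C'] [Algebra k C'] (h : IsVariable k W x)
    (e : C ≃ₐ[k] C') : IsVariable k (fun i ↦ e (W i)) (e x) := by
  have hcomp : (MvPolynomial.aeval fun o : Option σ ↦ o.elim (e x) fun i ↦ e (W i)) =
      (e : C →ₐ[k] C').comp (MvPolynomial.aeval fun o : Option σ ↦ o.elim x W) := by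
    ext o
    cases o <;> simp
  rw [IsVariable, hcomp]
  exact e.bijective.comp h

theorem aeval_injective (h : IsVariable k W x) :
    Function.Injective (MvPolynomial.aeval (R := k) W) := by
  obtain ⟨e, -, hC⟩ := h.exists_ringEquiv
  refine fun g g' hg ↦ Polynomial.C_injective (e.injective ?_)
  rw [hC, hC, hg]

theorem aeval_injective_of_notMem [IsDomain k] (h : IsVariable k W x)
    (hy : y ∉ Set.range (MvPolynomial.aeval (R := k) W)) :
    Function.Injective (MvPolynomial.aeval (R := k) fun o : Option σ ↦ o.elim y W) := by
  obtain ⟨e, -, hC⟩ := h.exists_ringEquiv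
  refine (injective_iff_map_eq_zero _).mpr fun p hp ↦ ?_
  rw [aeval_option_elim] at hp
  replace hp := (eval₂_aeval_eq_comp e hC _).symm.trans hp
  rw [EmbeddingLike.map_eq_zero_iff, Polynomial.comp_eq_zero_iff] at hp
  obtain hp | ⟨-, hp⟩ := hp
  · simpa using hp
  · exact (hy ⟨(e.symm y).coeff 0, by rw [← hC, ← hp, e.apply_symm_apply]⟩).elim

theorem exists_eq_mul_add [IsDomain k] (h : IsVariable k W x) (hy : IsVariable k W y) :
    ∃ a b : MvPolynomial σ k, y = MvPolynomial.aeval W a * x + MvPolynomial.aeval W b := by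
  obtain ⟨e, hX, hC⟩ := h.exists_ringEquiv
  obtain ⟨p, hp⟩ := (isVariable_iff_bijective_eval₂.mp hy).2 x
  rw [eval₂_aeval_eq_comp e hC, ← hX, e.injective.eq_iff] at hp
  have hdeg := congrArg Polynomial.natDegree hp
  rw [Polynomial.natDegree_comp, Polynomial.natDegree_X] at hdeg
  refine ⟨(e.symm y).coeff 1, (e.symm y).coeff 0, ?_⟩
  rw [← hC, ← hC, ← hX, ← map_mul, ← map_add, ← Polynomial.eq_X_add_C_of_natDegree_le_one
    (Nat.eq_one_of_mul_eq_one_left hdeg).le, e.apply_symm_apply]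

theorem smul_add_aeval (h : IsVariable k W x) {c : k} (hc : IsUnit c) (g : MvPolynomial σ k) :
    IsVariable k W (c • x + MvPolynomial.aeval W g) := by
  obtain ⟨e, hX, hC⟩ := h.exists_ringEquiv
  let _ : Invertible (MvPolynomial.C (σ := σ) c) := (hc.map MvPolynomial.C).invertible
  refine isVariable_of_ringEquiv
    ((Polynomial.algEquivCMulXAddC (MvPolynomial.C c) g).toRingEquiv.trans e) ?_ fun g' ↦ ?_
  · simp [hC, hX, Algebra.smul_def]
  · simp [hC]

theorem exists_eq_algebraMap_of_isUnit [IsReduced k] (h : IsVariable k W x) {z : C}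
    (hz : IsUnit z) : ∃ c : k, IsUnit c ∧ z = algebraMap k C c := by
  let e := AlgEquiv.ofBijective _ h
  obtain ⟨c, hc, hcz⟩ := MvPolynomial.isUnit_iff_eq_C_of_isReduced.mp (hz.map e.symm)
  refine ⟨c, hc, ?_⟩
  rw [← e.apply_symm_apply z, hcz]
  exact e.commutes c

end IsVariable

section Derivation

variable {D : Derivation k C C} (hD : ∀ i, D (W i) = 0)

include hD

theorem derivation_aeval_eq_zero (g : MvPolynomial σ k) : D (MvPolynomial.aeval W g) = 0 := by
  induction g using MvPolynomial.induction_on with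
  | C a => simp
  | add p q hp hq => rw [map_add, map_add, hp, hq, add_zero]
  | mul_X p n hp => rw [map_mul, Derivation.leibniz, hp]; simp [hD]

theorem derivation_eval₂ (p : Polynomial (MvPolynomial σ k)) :
    D (p.eval₂ (MvPolynomial.aeval W : _ →ₐ[k] C).toRingHom x) =
      p.derivative.eval₂ (MvPolynomial.aeval W : _ →ₐ[k] C).toRingHom x * D x := by
  induction p using Polynomial.induction_on' with
  | add p q hp hq => simp only [Polynomial.eval₂_add, map_add, hp, hq, add_mul]
  | monomial n a =>
    simp only [Polynomial.eval₂_monomial, Polynomial.derivative_monomial, Derivation.leibniz,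
      Derivation.leibniz_pow, AlgHom.toRingHom_eq_coe, RingHom.coe_coe,
      derivation_aeval_eq_zero hD, map_mul, map_natCast]
    simp only [smul_eq_mul, nsmul_eq_mul, mul_zero, add_zero]
    ring

theorem IsVariable.derivation_eq_zero (h : IsVariable k W x) (hx : D x = 0) : D = 0 := by
  ext z
  obtain ⟨p, rfl⟩ := (isVariable_iff_bijective_eval₂.mp h).2 z
  rw [derivation_eval₂ hD, hx, mul_zero, Derivation.coe_zero, Pi.zero_apply]

theorem IsVariable.exists_eq_add_aeval [IsDomain k] (h : IsVariable k W x) (hy : IsVariable k W y)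
    (hDx : D x = 1) (hDy : D y = 1) : ∃ g : MvPolynomial σ k, y = x + MvPolynomial.aeval W g := by
  obtain ⟨a, b, hab⟩ := h.exists_eq_mul_add hy
  have hDab := congrArg D hab
  rw [map_add, Derivation.leibniz, derivation_aeval_eq_zero hD, derivation_aeval_eq_zero hD, hDx,
    hDy] at hDab
  have ha : MvPolynomial.aeval W a = (1 : C) := by simpa using hDab.symm
  exact ⟨b, by rw [hab, ha, one_mul]⟩

end Derivation

end IsVariable

section BaseChange

variable {σ : Type*} {R : Type*} [CommRing R] {A : Type*} [CommRing A] [Algebra R A] {W : σ → A}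

theorem lTensor_aeval (k : Type*) [CommRing k] [Algebra R k] (z : k ⊗[R] MvPolynomial σ R) :
    (MvPolynomial.aeval (R := R) W).toLinearMap.lTensor k z =
      MvPolynomial.aeval (R := k) ((1 : k) ⊗ₜ[R] W ·)
        (MvPolynomial.algebraTensorAlgEquiv R k z) := by
  induction z with
  | zero => simp
  | add a b ha hb => rw [map_add, map_add, map_add, ha, hb]
  | tmul a p =>
    rw [MvPolynomial.algebraTensorAlgEquiv_tmul, map_smul, MvPolynomial.aeval_map_algebraMap,
      MvPolynomial.aeval_one_tmul, LinearMap.lTensor_tmul, smul_tmul']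
    simp

theorem isVariable_one_tmul_iff {k : Type*} [CommRing k] [Algebra R k] {x : A} :
    IsVariable k ((1 : k) ⊗ₜ[R] W ·) (1 ⊗ₜ x) ↔ Function.Bijective
      ((MvPolynomial.aeval (R := R) fun o : Option σ ↦ o.elim x W).toLinearMap.lTensor k) := by
  have helim : (fun o : Option σ ↦ o.elim ((1 : k) ⊗ₜ[R] x) ((1 : k) ⊗ₜ[R] W ·)) =
      ((1 : k) ⊗ₜ[R] ((·.elim x W) : Option σ → A) ·) := by
    ext o
    cases o <;> rfl
  have hcomp : ⇑((MvPolynomial.aeval (R := R) fun o : Option σ ↦ o.elim x W).toLinearMap.lTensor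
      k) = MvPolynomial.aeval (R := k) (fun o : Option σ ↦ o.elim ((1 : k) ⊗ₜ[R] x)
        ((1 : k) ⊗ₜ[R] W ·)) ∘ MvPolynomial.algebraTensorAlgEquiv R k :=
    funext fun z ↦ by rw [helim]; exact lTensor_aeval k z
  rw [hcomp, IsVariable]
  exact (Function.Bijective.of_comp_iff _ (AlgEquiv.bijective _)).symm

theorem IsVariable.one_tmul {x : A} (h : IsVariable R W x) (k : Type*) [CommRing k]
    [Algebra R k] : IsVariable k ((1 : k) ⊗ₜ[R] W ·) (1 ⊗ₜ x) :=
  isVariable_one_tmul_iff.mpr (LinearEquiv.lTensor k (LinearEquiv.ofBijective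
    (MvPolynomial.aeval (R := R) fun o : Option σ ↦ o.elim x W).toLinearMap h)).bijective

variable {k k' : Type*} [CommRing k] [Algebra R k] [CommRing k'] [Algebra R k']

variable (A) in
/-- The map `k ⊗ A → k' ⊗ A` induced by `f : k → k'`. -/
noncomputable abbrev coeffMap (f : k →ₐ[R] k') : k ⊗[R] A →ₐ[R] k' ⊗[R] A :=
  Algebra.TensorProduct.map f (AlgHom.id R A)

theorem IsVariable.coeffMap {x : k ⊗[R] A} (h : IsVariable k ((1 : k) ⊗ₜ[R] W ·) x)
    (f : k →ₐ[R] k') : IsVariable k' ((1 : k') ⊗ₜ[R] W ·) (coeffMap A f x) := by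
  let _ : Algebra k k' := f.toAlgebra
  have : IsScalarTower R k k' := .of_algebraMap_eq fun r ↦ (f.commutes r).symm
  let e := Algebra.TensorProduct.cancelBaseChange R k k' k' A
  have he (z : k ⊗[R] A) : e (1 ⊗ₜ z) = ResidualVariable.coeffMap A f z := by
    induction z with
    | zero => simp
    | add a b ha hb => rw [tmul_add, map_add, map_add, ha, hb]
    | tmul a b => simp [e, Algebra.smul_def, RingHom.algebraMap_toAlgebra]
  convert (h.one_tmul k').map_algEquiv e using 2
  · rw [he, Algebra.TensorProduct.map_tmul, map_one, AlgHom.id_apply]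
  · exact (he x).symm

/-- The `k`-derivation of `k ⊗ A` induced by an `R`-derivation of `A`. -/
noncomputable def derivationBaseChange (k : Type*) [CommRing k] [Algebra R k]
    (D : Derivation R A A) : Derivation k (k ⊗[R] A) (k ⊗[R] A) :=
  Derivation.mk' ((D : A →ₗ[R] A).baseChange k) fun a b ↦ by
    induction a with
    | zero => simp
    | add x y hx hy => rw [add_mul, map_add, hx, hy, map_add, add_smul, smul_add]; abel
    | tmul x y =>
      induction b with
      | zero => simp
      | add z w hz hw => rw [mul_add, map_add, hz, hw, map_add, add_smul, smul_add]; abel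
      | tmul z w => simp [tmul_add, mul_comm]

@[simp]
theorem derivationBaseChange_tmul (D : Derivation R A A) (c : k) (a : A) :
    derivationBaseChange k D (c ⊗ₜ a) = c ⊗ₜ D a := rfl

theorem derivationBaseChange_coeffMap (D : Derivation R A A) (f : k →ₐ[R] k') (z : k ⊗[R] A) :
    derivationBaseChange k' D (coeffMap A f z) = coeffMap A f (derivationBaseChange k D z) := by
  induction z with
  | zero => simp
  | add x y hx hy => simp only [map_add, hx, hy]
  | tmul x y => simp

theorem isVariable_of_fibers [IsNoetherianRing R] [Module.Flat R A] {s : A}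
    (h : ∀ P : Ideal R, P.IsPrime → ∃ (k : Type u') (_ : Field k) (_ : Algebra R k),
      RingHom.ker (algebraMap R k) = P ∧ IsVariable k ((1 : k) ⊗ₜ[R] W ·) (1 ⊗ₜ s)) :
    IsVariable R W s :=
  bijective_of_fibers (φ := (MvPolynomial.aeval fun o : Option σ ↦ o.elim s W).toLinearMap)
    fun P hP ↦
      let ⟨k, i, j, hk, hs⟩ := h P hP
      ⟨k, i, j, hk, isVariable_one_tmul_iff.mp hs⟩

end BaseChange

section Jacobian

open scoped KaehlerDifferential

theorem exists_basis_kaehlerDifferential {ι k B : Type*} [CommRing k] [CommRing B] [Algebra k B]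
    {v : ι → B} (hv : Function.Bijective (MvPolynomial.aeval (R := k) v)) :
    ∃ b : Module.Basis ι B Ω[B⁄k], ∀ i, b i = KaehlerDifferential.D k B (v i) := by
  let _ : Algebra (MvPolynomial ι k) B := (MvPolynomial.aeval v).toAlgebra
  have : IsScalarTower k (MvPolynomial ι k) B :=
    .of_algebraMap_eq fun r ↦ ((MvPolynomial.aeval v).commutes r).symm
  have : Algebra.FormallyEtale (MvPolynomial ι k) B :=
    .of_equiv (AlgEquiv.ofBijective (Algebra.ofId (MvPolynomial ι k) B) hv)
  refine ⟨((KaehlerDifferential.mvPolynomialBasis k ι).baseChange B).map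
    (KaehlerDifferential.tensorKaehlerEquivOfFormallyEtale k (MvPolynomial ι k) B), fun i ↦ ?_⟩
  simp [RingHom.algebraMap_toAlgebra]

variable {σ R A : Type*} [CommRing R] [CommRing A] [Algebra R A] {s : ℕ}

/-- The vectors `(dx, 0)`, `(dW i, 0)` and `(0, e j)` of `Ω ⊕ Aˢ`; their determinant in a basis
of `Ω ⊕ Aˢ` is the Jacobian of `x` and the `W i`. -/
noncomputable def jacobianFamily (R : Type*) [CommRing R] [Algebra R A] (s : ℕ) (W : σ → A)
    (x : A) : Option σ ⊕ Fin s → Ω[A⁄R] × (Fin s → A) :=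
  Sum.elim (fun o ↦ (KaehlerDifferential.D R A (o.elim x W), 0)) fun j ↦ (0, Pi.single j 1)

theorem IsVariable.exists_basis_eq_jacobianFamily {W : σ → A} {x : A} (h : IsVariable R W x)
    (s : ℕ) : ∃ b : Module.Basis (Option σ ⊕ Fin s) A (Ω[A⁄R] × (Fin s → A)),
      ⇑b = jacobianFamily R s W x := by
  obtain ⟨b, hb⟩ := exists_basis_kaehlerDifferential h
  refine ⟨b.prod (Pi.basisFun A (Fin s)), funext fun i ↦ ?_⟩
  rcases i with o | j
  · simp [jacobianFamily, hb]
  · simp [jacobianFamily]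

theorem update_jacobianFamily [DecidableEq σ] (W : σ → A) (x y : A) :
    Function.update (jacobianFamily R s W x) (.inl none) (KaehlerDifferential.D R A y, 0) =
      jacobianFamily R s W y := by
  refine funext fun i ↦ ?_
  rcases i with (_ | i) | j <;> simp [jacobianFamily, Function.update_of_ne]

variable [Fintype σ] [DecidableEq σ]

/-- The derivation sending `x` to the Jacobian determinant of `x` and the `W i`, computed in a
basis of `Ω ⊕ Aˢ`. -/
noncomputable def jacobianDerivation
    (b : Module.Basis (Option σ ⊕ Fin s) A (Ω[A⁄R] × (Fin s → A))) (W : σ → A) :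
    Derivation R A A :=
  (b.det.toMultilinearMap.toLinearMap (jacobianFamily R s W 0) (.inl none) ∘ₗ
    LinearMap.inl A Ω[A⁄R] (Fin s → A)).compDer (KaehlerDifferential.D R A)

variable (b : Module.Basis (Option σ ⊕ Fin s) A (Ω[A⁄R] × (Fin s → A))) (W : σ → A)

theorem jacobianDerivation_apply (x : A) :
    jacobianDerivation b W x = b.det (jacobianFamily R s W x) :=
  congrArg b.det (update_jacobianFamily W 0 x)

theorem jacobianDerivation_eq_zero (i : σ) : jacobianDerivation b W (W i) = 0 := by
  rw [jacobianDerivation_apply]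
  exact b.det.map_eq_zero_of_eq _ (i := .inl none) (j := .inl (some i)) rfl (by simp)

theorem IsVariable.isUnit_jacobianDerivation {x : A} {W : σ → A} (h : IsVariable R W x) :
    IsUnit (jacobianDerivation b W x) := by
  obtain ⟨b', hb'⟩ := h.exists_basis_eq_jacobianFamily s
  rw [jacobianDerivation_apply, ← hb']
  exact b.isUnit_det b'

end Jacobian

section JacobianBaseChange

open scoped KaehlerDifferential

variable {σ R A : Type*} [CommRing R] [CommRing A] [Algebra R A] {s : ℕ}

attribute [local instance] Algebra.TensorProduct.rightAlgebra

variable (A) in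
/-- The base change of `Ω ⊕ Aˢ` along `R → k` is the corresponding module of `k ⊗ A`. -/
noncomputable def kaehlerProdBaseChange (k : Type*) [CommRing k] [Algebra R k] (s : ℕ) :
    (k ⊗[R] A) ⊗[A] (Ω[A⁄R] × (Fin s → A)) ≃ₗ[k ⊗[R] A] Ω[k ⊗[R] A⁄k] × (Fin s → k ⊗[R] A) :=
  TensorProduct.prodRight A (k ⊗[R] A) (k ⊗[R] A) Ω[A⁄R] (Fin s → A) ≪≫ₗ
    (KaehlerDifferential.tensorKaehlerEquiv R k A (k ⊗[R] A)).prodCongr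
      (TensorProduct.piScalarRight A (k ⊗[R] A) (k ⊗[R] A) (Fin s))

theorem kaehlerProdBaseChange_jacobianFamily (k : Type*) [CommRing k] [Algebra R k] (W : σ → A)
    (x : A) (i : Option σ ⊕ Fin s) :
    kaehlerProdBaseChange A k s (1 ⊗ₜ jacobianFamily R s W x i) =
      jacobianFamily k s ((1 : k) ⊗ₜ[R] W ·) (1 ⊗ₜ x) i := by
  have halg (a : A) : algebraMap A (k ⊗[R] A) a = 1 ⊗ₜ a := rfl
  rcases i with (_ | i) | j
  · simp [kaehlerProdBaseChange, jacobianFamily, halg]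
  · simp [kaehlerProdBaseChange, jacobianFamily, halg]
  · have hsingle : (fun i ↦ (Pi.single j (1 : A) : Fin s → A) i • (1 : k ⊗[R] A)) =
        Pi.single j 1 :=
      funext fun i ↦ by rcases eq_or_ne i j with rfl | hij <;> simp [*]
    simpa [kaehlerProdBaseChange, jacobianFamily] using hsingle

/-- The base change of a basis of `Ω ⊕ Aˢ` along `R → k`. -/
noncomputable def basisBaseChange {ι : Type*} (b : Module.Basis ι A (Ω[A⁄R] × (Fin s → A)))
    (k : Type*) [CommRing k] [Algebra R k] :
    Module.Basis ι (k ⊗[R] A) (Ω[k ⊗[R] A⁄k] × (Fin s → k ⊗[R] A)) :=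
  (b.baseChange (k ⊗[R] A)).map (kaehlerProdBaseChange A k s)

theorem derivationBaseChange_jacobianDerivation [Fintype σ] [DecidableEq σ]
    (b : Module.Basis (Option σ ⊕ Fin s) A (Ω[A⁄R] × (Fin s → A))) (W : σ → A)
    (k : Type*) [CommRing k] [Algebra R k] :
    derivationBaseChange k (jacobianDerivation b W) =
      jacobianDerivation (basisBaseChange b k) ((1 : k) ⊗ₜ[R] W ·) := by
  have htmul (x : A) : (1 : k) ⊗ₜ jacobianDerivation b W x =
      jacobianDerivation (basisBaseChange b k) ((1 : k) ⊗ₜ[R] W ·) (1 ⊗ₜ x) := by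
    simp_rw [jacobianDerivation_apply, Module.Basis.det_apply]
    refine ((algebraMap A (k ⊗[R] A)).map_det _).trans (congrArg Matrix.det ?_)
    ext i j
    simp only [Module.Basis.toMatrix_apply, basisBaseChange, Module.Basis.map_repr,
      ← kaehlerProdBaseChange_jacobianFamily, LinearEquiv.trans_apply,
      LinearEquiv.symm_apply_apply, Module.Basis.baseChange_repr_tmul]
    exact Algebra.algebraMap_eq_smul_one (R := A) (A := k ⊗[R] A) _
  ext z
  induction z with
  | zero => simp
  | add x y hx hy => rw [map_add, map_add, hx, hy]
  | tmul c x =>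
    rw [← mul_one c, ← smul_eq_mul, ← smul_tmul', Derivation.map_smul, Derivation.map_smul,
      derivationBaseChange_tmul, htmul]

theorem exists_derivation_isUnit [Finite σ] (hΩ : IsStablyFree A Ω[A⁄R]) (W : σ → A)
    {k₀ : Type*} [CommRing k₀] [Algebra R k₀] [Nontrivial (k₀ ⊗[R] A)] {x₀ : k₀ ⊗[R] A}
    (hx₀ : IsVariable k₀ ((1 : k₀) ⊗ₜ[R] W ·) x₀) :
    ∃ D : Derivation R A A, (∀ i, D (W i) = 0) ∧ ∀ (k : Type u) [CommRing k] [Algebra R k]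
      (x : k ⊗[R] A), IsVariable k ((1 : k) ⊗ₜ[R] W ·) x →
        IsUnit (derivationBaseChange k D x) := by
  classical
  have := Fintype.ofFinite σ
  obtain ⟨s, t, ⟨e⟩⟩ := hΩ
  let b := Module.Basis.ofEquivFun e
  obtain ⟨b₀, -⟩ := hx₀.exists_basis_eq_jacobianFamily s
  let b' := b.reindex ((basisBaseChange b k₀).indexEquiv b₀)
  refine ⟨jacobianDerivation b' W, jacobianDerivation_eq_zero b' W, fun k _ _ x hx ↦ ?_⟩
  rw [derivationBaseChange_jacobianDerivation]
  exact hx.isUnit_jacobianDerivation _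

end JacobianBaseChange

section Slice

theorem exists_derivative_eq {S : Type*} [CommRing S] [Algebra ℚ S] (p : Polynomial S) :
    ∃ q : Polynomial S, Polynomial.derivative q = p := by
  induction p using Polynomial.induction_on' with
  | add p q hp hq =>
    obtain ⟨p', rfl⟩ := hp
    obtain ⟨q', rfl⟩ := hq
    exact ⟨p' + q', Polynomial.derivative_add⟩
  | monomial n a =>
    have hn : ((n + 1 : ℕ) : ℚ) ≠ 0 := by positivity
    refine ⟨((n + 1 : ℕ) : ℚ)⁻¹ • Polynomial.monomial (n + 1) a, ?_⟩
    rw [Polynomial.derivative_smul, Polynomial.derivative_monomial_succ, inv_smul_eq_iff₀ hn,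
      Nat.cast_smul_eq_nsmul, Polynomial.smul_monomial, nsmul_eq_mul, mul_comm, Nat.cast_succ]

namespace IsVariable

variable {σ k C : Type*} [Field k] [CommRing C] [Algebra k C] {W : σ → C} {x : C}
  {D : Derivation k C C}

theorem exists_derivation_eq_one (h : IsVariable k W x) (hx : IsUnit (D x)) :
    ∃ y, IsVariable k W y ∧ D y = 1 := by
  obtain ⟨c, hc, hDx⟩ := h.exists_eq_algebraMap_of_isUnit hx
  refine ⟨_, h.smul_add_aeval hc.inv 0, ?_⟩
  rw [map_zero, add_zero, Derivation.map_smul, hDx, Algebra.algebraMap_eq_smul_one,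
    inv_smul_smul₀ hc.ne_zero]

theorem exists_aeval_eq_of_derivation_eq_zero [CharZero k] (h : IsVariable k W x)
    (hD : ∀ i, D (W i) = 0) (hx : D x = 1) {z : C} (hz : D z = 0) :
    ∃ g, MvPolynomial.aeval (R := k) W g = z := by
  obtain ⟨p, rfl⟩ := (isVariable_iff_bijective_eval₂.mp h).2 z
  have hp : Polynomial.derivative p = 0 := by
    refine (isVariable_iff_bijective_eval₂.mp h).1 ?_
    rw [Polynomial.eval₂_zero, ← hz, derivation_eval₂ hD, hx, mul_one]
  rw [Polynomial.eq_C_of_derivative_eq_zero hp, Polynomial.eval₂_C]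
  exact ⟨_, rfl⟩

theorem derivation_surjective [CharZero k] (h : IsVariable k W x) (hD : ∀ i, D (W i) = 0)
    (hx : D x = 1) : Function.Surjective D := fun z ↦ by
  obtain ⟨p, rfl⟩ := (isVariable_iff_bijective_eval₂.mp h).2 z
  obtain ⟨q, rfl⟩ := exists_derivative_eq p
  exact ⟨_, (derivation_eval₂ hD q).trans (by rw [hx, mul_one])⟩

end IsVariable

variable {σ : Type*} {R : Type u} [CommRing R] {A : Type*} [CommRing A] [Algebra R A]

/-- The derivation `D` kills the family `W`, and on every fibre it takes the value `1` at some
variable complementary to `W`. -/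
structure HasFibrewiseSlices (D : Derivation R A A) (W : σ → A) : Prop where
  apply_eq_zero (i : σ) : D (W i) = 0
  exists_slice_residueField (P : Ideal R) [P.IsPrime] : ∃ x : P.ResidueField ⊗[R] A,
    IsVariable P.ResidueField ((1 : P.ResidueField) ⊗ₜ[R] W ·) x ∧
      derivationBaseChange P.ResidueField D x = 1

theorem exists_hasFibrewiseSlices [Finite σ] (hΩ : IsStablyFree A (KaehlerDifferential R A))
    {W : σ → A} (hW : ∀ (P : Ideal R) [P.IsPrime], ∃ x : P.ResidueField ⊗[R] A,
      IsVariable P.ResidueField ((1 : P.ResidueField) ⊗ₜ[R] W ·) x) :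
    ∃ D : Derivation R A A, HasFibrewiseSlices D W := by
  cases subsingleton_or_nontrivial R with
  | inl _ =>
    have : Subsingleton A := Module.subsingleton R A
    exact ⟨0, fun _ ↦ rfl, fun P hP ↦ (hP.ne_top (Subsingleton.elim _ _)).elim⟩
  | inr _ =>
    obtain ⟨P, _⟩ := Ideal.exists_maximal R
    obtain ⟨x₀, hx₀⟩ := hW P
    have : Nontrivial (P.ResidueField ⊗[R] A) := hx₀.1.nontrivial
    obtain ⟨D, hDW, hD⟩ := exists_derivation_isUnit hΩ W hx₀
    refine ⟨D, hDW, fun P _ ↦ ?_⟩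
    obtain ⟨x, hx⟩ := hW P
    exact hx.exists_derivation_eq_one (hD P.ResidueField x hx)

namespace HasFibrewiseSlices

variable {D : Derivation R A A} {W : σ → A}

theorem derivationBaseChange_one_tmul (h : HasFibrewiseSlices D W) (k : Type*) [CommRing k]
    [Algebra R k] (i : σ) : derivationBaseChange k D (1 ⊗ₜ W i) = 0 := by
  rw [derivationBaseChange_tmul, h.apply_eq_zero, tmul_zero]

theorem exists_slice (h : HasFibrewiseSlices D W) (k : Type*) [Field k] [Algebra R k] :
    ∃ x : k ⊗[R] A, IsVariable k ((1 : k) ⊗ₜ[R] W ·) x ∧ derivationBaseChange k D x = 1 := by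
  let P := RingHom.ker (algebraMap R k)
  have : P.IsPrime := RingHom.ker_isPrime _
  let f : P.ResidueField →ₐ[R] k := Ideal.ResidueField.liftₐ P (Algebra.ofId R k) le_rfl
    fun r hr ↦ isUnit_iff_ne_zero.mpr hr
  obtain ⟨x, hx, hDx⟩ := h.exists_slice_residueField P
  exact ⟨_, hx.coeffMap f, by rw [derivationBaseChange_coeffMap, hDx, map_one]⟩

end HasFibrewiseSlices

/-- The `R`-module `A / R[W]`. -/
abbrev AdjoinQuotient (R : Type*) [CommRing R] [Algebra R A] (W : σ → A) : Type _ :=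
  A ⧸ LinearMap.range (MvPolynomial.aeval (R := R) W).toLinearMap

/-- The quotient map `A → A / R[W]`. -/
noncomputable abbrev adjoinMkQ (R : Type*) [CommRing R] [Algebra R A] (W : σ → A) :
    A →ₗ[R] AdjoinQuotient R W :=
  (LinearMap.range (MvPolynomial.aeval (R := R) W).toLinearMap).mkQ

theorem lTensor_adjoinMkQ_eq_zero_iff {W : σ → A} {k : Type*} [CommRing k] [Algebra R k]
    {z : k ⊗[R] A} : (adjoinMkQ R W).lTensor k z = 0 ↔
      ∃ g, MvPolynomial.aeval (R := k) ((1 : k) ⊗ₜ[R] W ·) g = z := by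
  have hexact := lTensor_exact k
    (LinearMap.exact_map_mkQ_range (MvPolynomial.aeval (R := R) W).toLinearMap)
    (Submodule.mkQ_surjective _)
  rw [hexact z]
  exact (MvPolynomial.algebraTensorAlgEquiv R k).surjective.exists.trans (by
    simp only [Set.mem_range, lTensor_aeval]) |>.symm

theorem flat_adjoinQuotient [IsNoetherianRing R] [Module.Flat R A] {W : σ → A}
    (hW : ∀ (P : Ideal R) [P.IsPrime], Function.Injective
      (MvPolynomial.aeval (R := P.ResidueField) ((1 : P.ResidueField) ⊗ₜ[R] W ·))) :
    Module.Flat R (AdjoinQuotient R W) :=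
  flat_quotient_range_of_fibers fun P hP ↦ ⟨P.ResidueField, inferInstance, inferInstance,
    P.ker_algebraMap_residueField, by
      convert (hW P).comp (MvPolynomial.algebraTensorAlgEquiv R P.ResidueField).injective
      exact funext (lTensor_aeval P.ResidueField)⟩

end Slice

section Rat

variable {σ : Type*} {R : Type u} [CommRing R] {A : Type*} [CommRing A] [Algebra R A]
  {D : Derivation R A A} {W : σ → A}

/-- The map `A / R[W] → A` induced by a derivation of `A` that kills `W`. -/
noncomputable def derivationAdjoinQuotient (hD : ∀ i, D (W i) = 0) : AdjoinQuotient R W →ₗ[R] A :=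
  Submodule.liftQ _ (D : A →ₗ[R] A) <| LinearMap.range_le_ker_iff.mpr <|
    LinearMap.ext (derivation_aeval_eq_zero hD)

theorem lTensor_derivationAdjoinQuotient (hD : ∀ i, D (W i) = 0) (k : Type*) [CommRing k]
    [Algebra R k] (z : k ⊗[R] A) :
    (derivationAdjoinQuotient hD).lTensor k ((adjoinMkQ R W).lTensor k z) =
      derivationBaseChange k D z := by
  rw [← LinearMap.lTensor_comp_apply]
  exact congrArg (LinearMap.lTensor k · z) (Submodule.liftQ_mkQ _ _ _)

namespace HasFibrewiseSlices

variable [IsNoetherianRing R] [Module.Flat R A] (h : HasFibrewiseSlices D W)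

include h

theorem flat_adjoinQuotient : Module.Flat R (AdjoinQuotient R W) :=
  ResidualVariable.flat_adjoinQuotient fun P _ ↦
    let ⟨_, hx, _⟩ := h.exists_slice P.ResidueField
    hx.aeval_injective

theorem isVariable_of_apply_eq_one [Algebra ℚ R] {s : A} (hs : D s = 1) : IsVariable R W s :=
  isVariable_of_fibers fun P _ ↦ by
    have : CharZero P.ResidueField := algebraRat.charZero _
    refine ⟨P.ResidueField, inferInstance, inferInstance, P.ker_algebraMap_residueField, ?_⟩
    obtain ⟨x, hx, hDx⟩ := h.exists_slice P.ResidueField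
    have hDs : derivationBaseChange P.ResidueField D (1 ⊗ₜ s - x) = 0 := by
      rw [map_sub, hDx, derivationBaseChange_tmul, hs, Algebra.TensorProduct.one_def, sub_self]
    obtain ⟨g, hg⟩ := hx.exists_aeval_eq_of_derivation_eq_zero
      (h.derivationBaseChange_one_tmul _) hDx hDs
    simpa [hg] using hx.smul_add_aeval isUnit_one g

theorem bijective_derivationAdjoinQuotient [Algebra ℚ R] :
    Function.Bijective (derivationAdjoinQuotient h.apply_eq_zero) := by
  have := h.flat_adjoinQuotient
  refine bijective_of_fibers fun P _ ↦
    ⟨P.ResidueField, inferInstance, inferInstance, P.ker_algebraMap_residueField, ?_⟩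
  have : CharZero P.ResidueField := algebraRat.charZero _
  obtain ⟨x, hx, hDx⟩ := h.exists_slice P.ResidueField
  have hW := h.derivationBaseChange_one_tmul P.ResidueField
  refine ⟨(injective_iff_map_eq_zero _).mpr fun q hq ↦ ?_, fun z ↦ ?_⟩
  · obtain ⟨z, rfl⟩ := LinearMap.lTensor_surjective _ (Submodule.mkQ_surjective _) q
    rw [lTensor_derivationAdjoinQuotient] at hq
    exact lTensor_adjoinMkQ_eq_zero_iff.mpr (hx.exists_aeval_eq_of_derivation_eq_zero hW hDx hq)
  · obtain ⟨y, rfl⟩ := hx.derivation_surjective hW hDx z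
    exact ⟨_, lTensor_derivationAdjoinQuotient h.apply_eq_zero _ y⟩

theorem exists_isVariable_of_rat [Algebra ℚ R] : ∃ s, IsVariable R W s := by
  obtain ⟨q, hq⟩ := h.bijective_derivationAdjoinQuotient.2 1
  obtain ⟨s, rfl⟩ := Submodule.mkQ_surjective _ q
  exact ⟨s, h.isVariable_of_apply_eq_one hq⟩

end HasFibrewiseSlices

end Rat

section CoeffMap

variable {R : Type*} [CommRing R] {A : Type*} [CommRing A] [Algebra R A]
  {k k' : Type*} [CommRing k] [Algebra R k] [CommRing k'] [Algebra R k']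

theorem coeffMap_one_tmul (f : k →ₐ[R] k') (a : A) : coeffMap A f (1 ⊗ₜ a) = 1 ⊗ₜ a := by
  rw [Algebra.TensorProduct.map_tmul, map_one, AlgHom.id_apply]

theorem coeffMap_smul (f : k →ₐ[R] k') (c : k) (z : k ⊗[R] A) :
    coeffMap A f (c • z) = f c • coeffMap A f z := by
  rw [Algebra.smul_def, map_mul, Algebra.smul_def]
  simp

theorem coeffMap_aeval {τ : Type*} (f : k →ₐ[R] k') (F : τ → k ⊗[R] A) (q : MvPolynomial τ k) :
    coeffMap A f (MvPolynomial.aeval F q) =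
      MvPolynomial.aeval (fun t ↦ coeffMap A f (F t)) (MvPolynomial.map (f : k →+* k') q) := by
  induction q using MvPolynomial.induction_on with
  | C a => simp
  | add p q hp hq => simp only [map_add, hp, hq]
  | mul_X p n hp => simp only [map_mul, hp, MvPolynomial.map_X, MvPolynomial.aeval_X]

theorem coeffMap_injective [Module.Flat R A] {f : k →ₐ[R] k'} (hf : Function.Injective f) :
    Function.Injective (coeffMap A f) :=
  Module.Flat.rTensor_preserves_injective_linearMap f.toLinearMap hf

theorem coeffMap_surjective {f : k →ₐ[R] k'} (hf : Function.Surjective f) :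
    Function.Surjective (coeffMap A f) :=
  LinearMap.rTensor_surjective A (g := f.toLinearMap) hf

theorem option_elim_coeffMap {σ : Type*} {W : σ → A} (f : k →ₐ[R] k') (x : k ⊗[R] A) :
    (fun o : Option σ ↦ o.elim (coeffMap A f x) ((1 : k') ⊗ₜ[R] W ·)) =
      fun o ↦ coeffMap A f (o.elim x ((1 : k) ⊗ₜ[R] W ·)) := by
  ext o
  cases o
  · rfl
  · exact (coeffMap_one_tmul f _).symm

end CoeffMap

section ValuationRing

section Maps

variable (R A V K : Type*) [CommRing R] [CommRing A] [Algebra R A] [CommRing V] [Algebra R V]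
  [CommRing K] [Algebra R K] [Algebra V K] [IsScalarTower R V K]

/-- The map `V ⊗ A → K ⊗ A` to the generic fibre. -/
noncomputable abbrev genericMap : V ⊗[R] A →ₐ[R] K ⊗[R] A :=
  coeffMap A (IsScalarTower.toAlgHom R V K)

/-- The map `V ⊗ A → κ ⊗ A` to the fibre over the residue field `κ` of `V`. -/
noncomputable abbrev residueMap [IsLocalRing V] : V ⊗[R] A →ₐ[R] ResidueField V ⊗[R] A :=
  coeffMap A (IsScalarTower.toAlgHom R V (ResidueField V))

variable {R A V K}

theorem genericMap_injective [Module.Flat R A] [IsFractionRing V K] :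
    Function.Injective (genericMap R A V K) :=
  coeffMap_injective (IsFractionRing.injective V K)

theorem residueMap_surjective [IsLocalRing V] : Function.Surjective (residueMap R A V) :=
  coeffMap_surjective (f := IsScalarTower.toAlgHom R V (ResidueField V))
    IsLocalRing.residue_surjective

end Maps

variable {R A V K : Type*} [CommRing R] [CommRing A] [Algebra R A] [CommRing V] [IsDomain V]
  [ValuationRing V] [Field K] [Algebra V K] [IsFractionRing V K]

variable (V) in
theorem exists_eq_smul_map_of_ne_zero {τ : Type*} {q : MvPolynomial τ K} (hq : q ≠ 0) :
    ∃ (w : K) (q₀ : MvPolynomial τ V), w ≠ 0 ∧ q = w • MvPolynomial.map (algebraMap V K) q₀ ∧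
      ∃ d, q₀.coeff d = 1 := by
  obtain ⟨d, hd, hmax⟩ := Finset.exists_max_image q.support
    (fun d ↦ ValuationRing.valuation V K (q.coeff d)) (MvPolynomial.support_nonempty.mpr hq)
  have hw : q.coeff d ≠ 0 := MvPolynomial.mem_support_iff.mp hd
  have hint : (q.coeff d)⁻¹ • q ∈ Set.range (MvPolynomial.map (σ := τ) (algebraMap V K)) := by
    rw [MvPolynomial.mem_range_map_iff_coeffs_subset]
    intro c hc
    obtain ⟨d', -, rfl⟩ := MvPolynomial.mem_coeffs_iff.mp hc
    rw [MvPolynomial.coeff_smul]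
    refine (ValuationRing.mem_integer_iff V K _).mp ?_
    rw [Valuation.mem_integer_iff, smul_eq_mul, map_mul, map_inv₀]
    by_cases hd' : d' ∈ q.support
    · exact inv_mul_le_one_of_le₀ (hmax d' hd') zero_le
    · simp [MvPolynomial.notMem_support_iff.mp hd']
  obtain ⟨q₀, hq₀⟩ := hint
  refine ⟨q.coeff d, q₀, hw, by rw [hq₀, smul_inv_smul₀ hw], d, IsFractionRing.injective V K ?_⟩
  rw [← MvPolynomial.coeff_map, hq₀, MvPolynomial.coeff_smul, smul_eq_mul, map_one,
    inv_mul_cancel₀ hw]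

variable [Algebra R V] [Algebra R K] [IsScalarTower R V K] [Module.Flat R A]

-- A relation `v • h = F(q₀)` with `q₀` primitive forces `v` to be a unit: modulo the maximal
-- ideal, `q₀` would otherwise be a nonzero relation between the residues of the `F t`.
theorem aeval_surjective_of_residueField {τ : Type*} {F : τ → V ⊗[R] A}
    (hK : Function.Surjective (MvPolynomial.aeval (R := K) fun t ↦ genericMap R A V K (F t)))
    (hk : Function.Injective
      (MvPolynomial.aeval (R := ResidueField V) fun t ↦ residueMap R A V (F t))) :
    Function.Surjective (MvPolynomial.aeval (R := V) F) := fun h ↦ by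
  obtain ⟨q, hq⟩ := hK (genericMap R A V K h)
  obtain rfl | hq0 := eq_or_ne q 0
  · exact ⟨0, genericMap_injective (K := K) (by rw [← hq, map_zero, map_zero, map_zero])⟩
  obtain ⟨w, q₀, hw, rfl, d, hd⟩ := exists_eq_smul_map_of_ne_zero V hq0
  replace hq : w • genericMap R A V K (MvPolynomial.aeval F q₀) = genericMap R A V K h := by
    rw [← hq, coeffMap_aeval, map_smul]
    rfl
  obtain ⟨v, rfl⟩ | ⟨v, hv⟩ := ValuationRing.isInteger_or_isInteger V w
  · refine ⟨v • q₀, genericMap_injective (K := K) ?_⟩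
    rw [map_smul, coeffMap_smul, ← hq]
    rfl
  have hvh : v • h = MvPolynomial.aeval F q₀ := genericMap_injective (K := K) (by
    rw [coeffMap_smul, ← hq, IsScalarTower.coe_toAlgHom', hv, inv_smul_smul₀ hw])
  have hvu : IsUnit v := by
    by_contra hvu
    have hv0 : IsScalarTower.toAlgHom R V (ResidueField V) v = 0 :=
      (IsLocalRing.residue_eq_zero_iff v).mpr hvu
    have hres := congrArg (residueMap R A V) hvh
    rw [coeffMap_smul, hv0, zero_smul, coeffMap_aeval] at hres
    have hcoeff := congrArg (MvPolynomial.coeff d) (hk (hres.symm.trans (map_zero _).symm))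
    rw [MvPolynomial.coeff_map, hd] at hcoeff
    simp at hcoeff
  exact ⟨(↑hvu.unit⁻¹ : V) • q₀, by rw [map_smul, ← hvh, smul_smul, hvu.val_inv_mul, one_smul]⟩

theorem isVariable_residueField {σ : Type*} {W : σ → A} {f : V ⊗[R] A}
    (hf : IsVariable K ((1 : K) ⊗ₜ[R] W ·) (genericMap R A V K f))
    {x : ResidueField V ⊗[R] A}
    (hx : IsVariable (ResidueField V) ((1 : ResidueField V) ⊗ₜ[R] W ·) x)
    (hfx : residueMap R A V f ∉ Set.range
      (MvPolynomial.aeval (R := ResidueField V) ((1 : ResidueField V) ⊗ₜ[R] W ·))) :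
    IsVariable (ResidueField V) ((1 : ResidueField V) ⊗ₜ[R] W ·) (residueMap R A V f) := by
  have hinj := hx.aeval_injective_of_notMem hfx
  refine ⟨hinj, fun y ↦ ?_⟩
  obtain ⟨h, rfl⟩ := residueMap_surjective y
  rw [IsVariable, option_elim_coeffMap] at hf
  rw [option_elim_coeffMap] at hinj ⊢
  obtain ⟨q, rfl⟩ := aeval_surjective_of_residueField hf.2 hinj h
  exact ⟨_, (coeffMap_aeval _ _ q).symm⟩

end ValuationRing

section ValuativeCriterion

variable {R K : Type*} [CommRing R] [Field K] [Algebra R K] {V : ValuationSubring K}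
  [Algebra R V] [IsScalarTower R V K]

theorem valuationIntegers_eq_range :
    valuationIntegers R V = LinearMap.range (IsScalarTower.toAlgHom R V K).toLinearMap := by
  ext x
  exact ⟨fun hx ↦ ⟨⟨x, hx⟩, rfl⟩, by rintro ⟨v, rfl⟩; exact v.2⟩

theorem IsCentredOn.ker_algebraMap_residueField {P : Ideal R} (h : IsCentredOn V P) :
    RingHom.ker (algebraMap R (ResidueField V)) = P := by
  ext r
  rw [← h r, RingHom.mem_ker, IsScalarTower.algebraMap_apply R V (ResidueField V),
    IsScalarTower.algebraMap_apply R V K]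
  exact (IsLocalRing.residue_eq_zero_iff _).trans (V.valuation_lt_one_iff _)

variable {A : Type*} [CommRing A] [Algebra R A]

theorem exists_lTensor_genericMap_eq {Q : Type*} [AddCommGroup Q] [Module R Q] {g : A →ₗ[R] Q}
    (hg : Function.Surjective g) {y : K ⊗[R] Q} (hy : y ∈ tensorImage Q (valuationIntegers R V)) :
    ∃ f : V ⊗[R] A, g.lTensor K (genericMap R A V K f) = y := by
  rw [valuationIntegers_eq_range, tensorImage_range] at hy
  obtain ⟨z, rfl⟩ := hy
  obtain ⟨f, rfl⟩ := LinearMap.lTensor_surjective V hg z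
  refine ⟨f, ?_⟩
  rw [← LinearMap.comp_apply, LinearMap.rTensor_comp_lTensor, ← LinearMap.lTensor_comp_rTensor]
  rfl

theorem genericMap_mem_tensorImage [Module.Flat R A] {f : V ⊗[R] A} (hf : residueMap R A V f = 0) :
    genericMap R A V K f ∈ tensorImage A (valuationIdeal R V) := by
  have hker : f ∈ tensorImage A
      (LinearMap.ker (IsScalarTower.toAlgHom R V (ResidueField V)).toLinearMap) := by
    rwa [tensorImage_ker]
  exact rTensor_mem_tensorImage (f := (IsScalarTower.toAlgHom R V K).toLinearMap)
    (N' := valuationIdeal R V)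
    (fun v hv ↦ (V.valuation_lt_one_iff v).mp ((IsLocalRing.residue_eq_zero_iff v).mp hv)) hker

variable {σ : Type*} {W : σ → A}

theorem exists_eq_add_aeval_of_lTensor_adjoinMkQ_eq {k : Type*} [CommRing k] [Algebra R k]
    {y z : k ⊗[R] A} (h : (adjoinMkQ R W).lTensor k y = (adjoinMkQ R W).lTensor k z) :
    ∃ g, y = z + MvPolynomial.aeval (R := k) ((1 : k) ⊗ₜ[R] W ·) g := by
  obtain ⟨g, hg⟩ := lTensor_adjoinMkQ_eq_zero_iff.mp (by rw [map_sub, h, sub_self] :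
    (adjoinMkQ R W).lTensor k (y - z) = 0)
  exact ⟨g, by rw [hg, add_sub_cancel]⟩

theorem lTensor_adjoinMkQ_genericMap_mem [Module.Flat R A] {f : V ⊗[R] A}
    (hf : residueMap R A V f ∈ Set.range
      (MvPolynomial.aeval (R := ResidueField V) ((1 : ResidueField V) ⊗ₜ[R] W ·))) :
    (adjoinMkQ R W).lTensor K (genericMap R A V K f) ∈
      tensorImage (AdjoinQuotient R W) (valuationIdeal R V) := by
  obtain ⟨g, hg⟩ := hf
  obtain ⟨g, rfl⟩ := MvPolynomial.map_surjective
    (IsScalarTower.toAlgHom R V (ResidueField V) : V →+* ResidueField V)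
    IsLocalRing.residue_surjective g
  let f₀ : V ⊗[R] A := MvPolynomial.aeval ((1 : V) ⊗ₜ[R] W ·) g
  have hf₀ : residueMap R A V (f - f₀) = 0 := by
    simp only [map_sub, f₀, coeffMap_aeval, coeffMap_one_tmul, hg, sub_self]
  have hgf₀ : (adjoinMkQ R W).lTensor K (genericMap R A V K f₀) = 0 :=
    lTensor_adjoinMkQ_eq_zero_iff.mpr ⟨_, by
      simp only [f₀, coeffMap_aeval, coeffMap_one_tmul]; rfl⟩
  have hmem := lTensor_mem_tensorImage (adjoinMkQ R W) (genericMap_mem_tensorImage hf₀)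
  rwa [map_sub, map_sub, hgf₀, sub_zero] at hmem

theorem exists_smul_eq_one_tmul (P : Ideal R) [P.IsPrime] (z : P.ResidueField ⊗[R] A) :
    ∃ r ∉ P, ∃ a : A, r • z = 1 ⊗ₜ a := by
  have hz : z ∈ tensorImage A (⊤ : Submodule R P.ResidueField) := by simp
  obtain ⟨r, hr, hrz⟩ := exists_smul_mem_tensorImage P.primeCompl (N' := 1) (fun c _ ↦ by
    obtain ⟨⟨b, r⟩, hbr⟩ := IsLocalization.surj (nonZeroDivisors (R ⧸ P)) c
    obtain ⟨b, rfl⟩ := Ideal.Quotient.mk_surjective b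
    obtain ⟨r, hr⟩ := r
    obtain ⟨r, rfl⟩ := Ideal.Quotient.mk_surjective r
    refine ⟨r, fun h ↦ nonZeroDivisors.ne_zero hr (Ideal.Quotient.eq_zero_iff_mem.mpr h),
      Submodule.mem_one.mpr ⟨b, ?_⟩⟩
    rw [Algebra.smul_def, mul_comm]
    exact hbr.symm) hz
  exact ⟨r, hr, exists_tmul_of_mem_tensorImage_one hrz⟩

end ValuativeCriterion

namespace HasFibrewiseSlices

variable {R : Type u} {K A : Type*} [CommRing R] [Field K] [Algebra R K] [CommRing A]
  [Algebra R A] [Module.Flat R A] {σ : Type*} {D : Derivation R A A} {W : σ → A}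

section Residue

variable {V : ValuationSubring K} [Algebra R V] [IsScalarTower R V K]

theorem derivationBaseChange_residueMap {f g : V ⊗[R] A}
    (hf : derivationBaseChange K D (genericMap R A V K f) = genericMap R A V K g) :
    derivationBaseChange (ResidueField V) D (residueMap R A V f) = residueMap R A V g := by
  rw [derivationBaseChange_coeffMap] at hf ⊢
  rw [genericMap_injective hf]

theorem isVariable_residueMap (h : HasFibrewiseSlices D W) {f : V ⊗[R] A}
    (hf : IsVariable K ((1 : K) ⊗ₜ[R] W ·) (genericMap R A V K f))
    (hDf : derivationBaseChange K D (genericMap R A V K f) = 1) :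
    IsVariable (ResidueField V) ((1 : ResidueField V) ⊗ₜ[R] W ·) (residueMap R A V f) ∧
      derivationBaseChange (ResidueField V) D (residueMap R A V f) = 1 := by
  obtain ⟨x, hx, -⟩ := h.exists_slice (ResidueField V)
  have hDf' : derivationBaseChange (ResidueField V) D (residueMap R A V f) = 1 := by
    rw [derivationBaseChange_residueMap (hDf.trans (map_one _).symm), map_one]
  refine ⟨isVariable_residueField hf hx ?_, hDf'⟩
  rintro ⟨g, hg⟩
  rw [← hg, derivation_aeval_eq_zero (h.derivationBaseChange_one_tmul _)] at hDf'
  have : Nontrivial (ResidueField V ⊗[R] A) := hx.1.nontrivial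
  exact zero_ne_one hDf'

end Residue

-- If `c` is a nonunit and the residue of `c • x` were a variable, it would be a variable
-- killed by `D`.
theorem hasValuativelyTrivialPoles (h : HasFibrewiseSlices D W) {x : K ⊗[R] A}
    (hx : IsVariable K ((1 : K) ⊗ₜ[R] W ·) x) (hDx : derivationBaseChange K D x = 1) :
    HasValuativelyTrivialPoles ((adjoinMkQ R W).lTensor K x) := by
  intro V _ _ c hc hcx
  obtain rfl | hc0 := eq_or_ne c 0
  · rw [zero_smul]
    exact zero_mem _
  obtain ⟨f, hf⟩ := exists_lTensor_genericMap_eq (Submodule.mkQ_surjective _) hcx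
  rw [← hf]
  refine lTensor_adjoinMkQ_genericMap_mem (by_contra fun hfW ↦ ?_)
  obtain ⟨g, hg⟩ := exists_eq_add_aeval_of_lTensor_adjoinMkQ_eq
    (hf.trans (((adjoinMkQ R W).baseChange K).map_smul c x).symm)
  obtain ⟨y, hy, hDy⟩ := h.exists_slice (ResidueField V)
  have hvar := isVariable_residueField (hg ▸ hx.smul_add_aeval (isUnit_iff_ne_zero.mpr hc0) g)
    hy hfW
  let c' : V := ⟨c, (V.valuation_le_one_iff c).mp hc.le⟩
  have hc' : IsScalarTower.toAlgHom R V (ResidueField V) c' = 0 :=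
    (IsLocalRing.residue_eq_zero_iff _).mpr ((V.valuation_lt_one_iff _).mpr hc)
  have hDf := derivationBaseChange_residueMap (D := D) (f := f) (g := c' • 1) (by
    rw [hg, map_add, derivation_aeval_eq_zero (h.derivationBaseChange_one_tmul K), add_zero,
      Derivation.map_smul, hDx, coeffMap_smul, map_one]
    rfl)
  rw [coeffMap_smul, hc', zero_smul] at hDf
  have hD0 := hvar.derivation_eq_zero (h.derivationBaseChange_one_tmul _) hDf
  have : Nontrivial (ResidueField V ⊗[R] A) := hy.1.nontrivial
  exact zero_ne_one (hDy.symm.trans (by rw [hD0, Derivation.zero_apply])).symm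

theorem hasRationalResidueAt (h : HasFibrewiseSlices D W) {x : K ⊗[R] A}
    (hx : IsVariable K ((1 : K) ⊗ₜ[R] W ·) x) (hDx : derivationBaseChange K D x = 1)
    (P : Ideal R) [P.IsPrime] : HasRationalResidueAt P ((adjoinMkQ R W).lTensor K x) := by
  obtain ⟨y, hy, hDy⟩ := h.exists_slice_residueField P
  obtain ⟨r, hr, a, ha⟩ := exists_smul_eq_one_tmul P y
  refine ⟨r, hr, adjoinMkQ R W a, fun V _ _ hV hτ ↦ ?_⟩
  obtain ⟨f, hf⟩ := exists_lTensor_genericMap_eq (Submodule.mkQ_surjective _) hτ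
  obtain ⟨g, hg⟩ := exists_eq_add_aeval_of_lTensor_adjoinMkQ_eq hf
  obtain ⟨hfvar, hDf⟩ := h.isVariable_residueMap (f := f)
    (by simpa [hg] using hx.smul_add_aeval isUnit_one g)
    (by rw [hg, map_add, hDx, derivation_aeval_eq_zero (h.derivationBaseChange_one_tmul K),
      add_zero])
  let φ : P.ResidueField →ₐ[R] ResidueField V := Ideal.ResidueField.liftₐ P (Algebra.ofId R _)
    hV.ker_algebraMap_residueField.ge fun s hs ↦ isUnit_iff_ne_zero.mpr fun h0 ↦
      hs (hV.ker_algebraMap_residueField.le h0)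
  obtain ⟨g', hg'⟩ := (hy.coeffMap φ).exists_eq_add_aeval (h.derivationBaseChange_one_tmul _)
    hfvar (by rw [derivationBaseChange_coeffMap, hDy, map_one]) hDf
  have hra : r • coeffMap A φ y = 1 ⊗ₜ a := by rw [← map_smul, ha, coeffMap_one_tmul]
  have hmem := lTensor_adjoinMkQ_genericMap_mem (W := W) (f := r • f - 1 ⊗ₜ a)
    ⟨algebraMap R _ r • g', by
      rw [map_smul, algebraMap_smul, map_sub, map_smul, hg', coeffMap_one_tmul, smul_add, hra,
        add_sub_cancel_left]⟩
  rwa [map_sub, map_sub, map_smul, map_smul, hf, coeffMap_one_tmul, LinearMap.lTensor_tmul] at hmem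

theorem exists_isVariable_of_seminormal [IsDomain R] [IsNoetherianRing R]
    (hsn : ∀ b c : R, b ^ 3 = c ^ 2 → ∃ a : R, a ^ 2 = b ∧ a ^ 3 = c)
    (h : HasFibrewiseSlices D W) : ∃ s, IsVariable R W s := by
  have := h.flat_adjoinQuotient
  obtain ⟨x, hx, hDx⟩ := h.exists_slice (FractionRing R)
  obtain ⟨ξ, hξ⟩ := exists_eq_one_tmul_of_valuative (fun _ ↦ mem_one_of_pow_mem_one hsn)
    (h.hasValuativelyTrivialPoles hx hDx) fun P _ ↦ h.hasRationalResidueAt hx hDx P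
  obtain ⟨s, rfl⟩ := Submodule.mkQ_surjective _ ξ
  obtain ⟨g, hg⟩ := exists_eq_add_aeval_of_lTensor_adjoinMkQ_eq
    ((LinearMap.lTensor_tmul _ _ _ _).trans hξ.symm)
  refine ⟨s, isVariable_of_fibers fun P _ ↦ ?_⟩
  obtain ⟨V, _, _, hV⟩ := exists_isCentredOn (FractionRing R) P
  refine ⟨ResidueField V, inferInstance, inferInstance, hV.ker_algebraMap_residueField, ?_⟩
  rw [← coeffMap_one_tmul (IsScalarTower.toAlgHom R V (ResidueField V))]
  refine (h.isVariable_residueMap (f := (1 : V) ⊗ₜ s) ?_ ?_).1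
  · rw [coeffMap_one_tmul, hg]
    simpa using hx.smul_add_aeval isUnit_one g
  · rw [coeffMap_one_tmul, hg, map_add, hDx,
      derivation_aeval_eq_zero (h.derivationBaseChange_one_tmul _), add_zero]

end HasFibrewiseSlices

theorem injective_of_surjective_ringEnd {S : Type*} [CommRing S] [IsNoetherianRing S]
    (f : S →+* S) (hf : Function.Surjective f) : Function.Injective f := by
  let I : ℕ →o Ideal S := ⟨fun n ↦ RingHom.ker (f ^ n), monotone_nat_of_le_succ fun n x hx ↦ by
    rw [RingHom.mem_ker, RingHom.coe_pow] at hx ⊢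
    rw [Function.iterate_succ_apply', hx, map_zero]⟩
  obtain ⟨n, hn⟩ := monotone_stabilizes_iff_noetherian.mpr ‹_› I
  refine (injective_iff_map_eq_zero f).mpr fun x hx ↦ ?_
  obtain ⟨y, rfl⟩ := hf.iterate n x
  have hy : y ∈ I n := by
    rw [hn (n + 1) n.le_succ]
    simpa only [I, OrderHom.coe_mk, RingHom.mem_ker, RingHom.coe_pow,
      Function.iterate_succ_apply'] using hx
  simpa only [I, OrderHom.coe_mk, RingHom.mem_ker, RingHom.coe_pow] using hy

section AdjoinEquiv

variable {σ : Type*} {k C : Type*} [CommRing k] [CommRing C] [Algebra k C] {W : σ → C}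

theorem exists_isVariable_iff_nonempty_algEquiv {B : Type*} [CommRing B] [Algebra B C]
    (φ : MvPolynomial σ k ≃+* B) (hφ : ∀ g, algebraMap B C (φ g) = MvPolynomial.aeval W g) :
    (∃ x, IsVariable k W x) ↔ Nonempty (C ≃ₐ[B] Polynomial B) := by
  constructor
  · rintro ⟨x, hx⟩
    obtain ⟨e, -, hC⟩ := hx.exists_ringEquiv
    refine ⟨.ofRingEquiv (f := e.symm.trans (Polynomial.mapEquiv φ)) fun b ↦ ?_⟩
    obtain ⟨g, rfl⟩ := φ.surjective b
    rw [hφ, ← hC]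
    simp
  · rintro ⟨e⟩
    refine ⟨_, isVariable_of_ringEquiv ((Polynomial.mapEquiv φ).trans e.symm.toRingEquiv) rfl
      fun g ↦ ?_⟩
    rw [← hφ, ← e.symm.commutes]
    simp

theorem aeval_option_elim_surjective
    (e : C ≃ₐ[Algebra.adjoin k (Set.range W)] Polynomial (Algebra.adjoin k (Set.range W))) :
    Function.Surjective (MvPolynomial.aeval (R := k)
      fun o : Option σ ↦ o.elim (e.symm Polynomial.X) W) := by
  intro z
  obtain ⟨p, rfl⟩ := e.symm.surjective z
  rw [← AlgHom.mem_range]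
  induction p using Polynomial.induction_on' with
  | add p q hp hq => rw [map_add]; exact add_mem hp hq
  | monomial n b =>
    rw [← Polynomial.C_mul_X_pow_eq_monomial, map_mul, map_pow]
    have hadjoin : Algebra.adjoin k (Set.range W) ≤ (MvPolynomial.aeval (R := k)
        fun o : Option σ ↦ o.elim (e.symm Polynomial.X) W).range :=
      Algebra.adjoin_le (Set.range_subset_iff.mpr fun i ↦ ⟨MvPolynomial.X (some i), by simp⟩)
    refine mul_mem ?_ (pow_mem ((AlgHom.mem_range _).mpr ⟨MvPolynomial.X none, by simp⟩) n)
    rw [← Polynomial.algebraMap_eq, e.symm.commutes]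
    exact hadjoin b.2

theorem isVariable_of_surjective [IsNoetherianRing k] [Finite σ] {x : C}
    (hx : Function.Surjective (MvPolynomial.aeval (R := k) fun o : Option σ ↦ o.elim x W))
    (e : C ≃ₐ[k] MvPolynomial (Option σ) k) : IsVariable k W x :=
  ⟨.of_comp (f := e) (injective_of_surjective_ringEnd
    (e.toAlgHom.comp (MvPolynomial.aeval fun o : Option σ ↦ o.elim x W)).toRingHom
    (e.surjective.comp hx)), hx⟩

end AdjoinEquiv

section FibresOverAdjoin

variable {R A : Type*} [CommRing R] [CommRing A] [Algebra R A]

theorem IsVariable.nonempty_algEquiv {m : ℕ} {W : Fin m → A} {s : A} (h : IsVariable R W s) :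
    Nonempty (A ≃ₐ[R] MvPolynomial (Fin (m + 1)) R) :=
  ⟨(AlgEquiv.ofBijective _ h).symm.trans (MvPolynomial.renameEquiv R (finSuccEquiv m).symm)⟩

variable {σ : Type*} {W : σ → A}

/-- The polynomial ring `k[X_σ]` as the base change of `R[W]`, for `W` algebraically
independent. -/
noncomputable def adjoinBaseChangeEquiv (hW : AlgebraicIndependent R W) (k : Type*) [CommRing k]
    [Algebra R k] : MvPolynomial σ k ≃ₐ[k] k ⊗[R] Algebra.adjoin R (Set.range W) :=
  (MvPolynomial.algebraTensorAlgEquiv R k).symm.trans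
    (Algebra.TensorProduct.congr AlgEquiv.refl hW.aevalEquiv)

theorem map_adjoinBaseChangeEquiv (hW : AlgebraicIndependent R W) (k : Type*) [CommRing k]
    [Algebra R k] (g : MvPolynomial σ k) :
    Algebra.TensorProduct.map (AlgHom.id R k) (Algebra.adjoin R (Set.range W)).val
      (adjoinBaseChangeEquiv hW k g) = MvPolynomial.aeval (R := k) ((1 : k) ⊗ₜ[R] W ·) g := by
  have hcomp : (Algebra.TensorProduct.map (AlgHom.id k k)
      (Algebra.adjoin R (Set.range W)).val).comp (adjoinBaseChangeEquiv hW k).toAlgHom =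
      MvPolynomial.aeval (R := k) ((1 : k) ⊗ₜ[R] W ·) := by
    ext i
    simp [adjoinBaseChangeEquiv]
  exact DFunLike.congr_fun hcomp g

theorem fibersPolynomialOver_adjoin_one_iff (hW : AlgebraicIndependent R W) :
    FibersPolynomialOver R (Algebra.adjoin R (Set.range W)) A 1 ↔
      ∀ (P : Ideal R) [P.IsPrime], ∃ x : P.ResidueField ⊗[R] A,
        IsVariable P.ResidueField ((1 : P.ResidueField) ⊗ₜ[R] W ·) x := by
  refine forall₂_congr fun P _ ↦ ?_
  let _ : Algebra (P.ResidueField ⊗[R] Algebra.adjoin R (Set.range W)) (P.ResidueField ⊗[R] A) :=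
    (Algebra.TensorProduct.map (AlgHom.id R P.ResidueField)
      (IsScalarTower.toAlgHom R (Algebra.adjoin R (Set.range W)) A)).toRingHom.toAlgebra
  rw [exists_isVariable_iff_nonempty_algEquiv (adjoinBaseChangeEquiv hW P.ResidueField).toRingEquiv
    (map_adjoinBaseChangeEquiv hW P.ResidueField)]
  let u := MvPolynomial.uniqueAlgEquiv
    (P.ResidueField ⊗[R] Algebra.adjoin R (Set.range W)) (Fin 1)
  exact ⟨fun ⟨e⟩ ↦ ⟨e.trans u⟩, fun ⟨e⟩ ↦ ⟨e.trans u.symm⟩⟩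

theorem isResidualVariable_iff {m : ℕ} {W : Fin m → A} :
    IsResidualVariable R A (m + 1) m W ↔ AlgebraicIndependent R W ∧
      ∀ (P : Ideal R) [P.IsPrime], ∃ x : P.ResidueField ⊗[R] A,
        IsVariable P.ResidueField ((1 : P.ResidueField) ⊗ₜ[R] W ·) x := by
  rw [IsResidualVariable, Nat.add_sub_cancel_left]
  exact and_congr_right fibersPolynomialOver_adjoin_one_iff

end FibresOverAdjoin

end ResidualVariable

open ResidualVariable in
theorem residualVariable_iff_variable_general
    {R A : Type*} [CommRing R] [IsNoetherianRing R] [CommRing A] [Algebra R A] [Module.Flat R A]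
    (hR : Nonempty (ℚ →+* R) ∨
      IsDomain R ∧ ∀ b c : R, b ^ 3 = c ^ 2 → ∃ a : R, a ^ 2 = b ∧ a ^ 3 = c)
    (hΩ : IsStablyFree A (KaehlerDifferential R A)) {m : ℕ} (W : Fin m → A) :
    IsResidualVariable R A (m + 1) m W ↔
      (Nonempty (A ≃ₐ[↥(Algebra.adjoin R (Set.range W))]
          Polynomial ↥(Algebra.adjoin R (Set.range W))) ∧
        Nonempty (A ≃ₐ[R] MvPolynomial (Fin (m + 1)) R)) := by
  rw [isResidualVariable_iff]
  constructor
  · rintro ⟨hW, hfib⟩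
    obtain ⟨D, hD⟩ := exists_hasFibrewiseSlices hΩ hfib
    obtain ⟨s, hs⟩ : ∃ s, IsVariable R W s := by
      obtain ⟨⟨f⟩⟩ | ⟨_, hsn⟩ := hR
      · let _ : Algebra ℚ R := f.toAlgebra
        exact hD.exists_isVariable_of_rat
      · exact hD.exists_isVariable_of_seminormal hsn
    exact ⟨(exists_isVariable_iff_nonempty_algEquiv hW.aevalEquiv.toRingEquiv
      hW.algebraMap_aevalEquiv).mp ⟨s, hs⟩, hs.nonempty_algEquiv⟩
  · rintro ⟨⟨e⟩, ⟨e'⟩⟩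
    have hs := isVariable_of_surjective (aeval_option_elim_surjective e)
      (e'.trans (MvPolynomial.renameEquiv R (finSuccEquiv m)))
    exact ⟨hs.aeval_injective, fun P _ ↦ ⟨_, hs.one_tmul P.ResidueField⟩⟩

/-- Let `R` be a Noetherian domain which either contains `ℚ` or is seminormal, and let
`A` be an `𝔸^{m+1}`-fibration over `R` such that `Ω_R(A)` is a stably free `A`-module.
Then an `m`-tuple `W` of elements of `A` is an `m`-tuple residual variable of `A` over
`R` if and only if `A = R[W]^[1]` as an `R[W]`-algebra (and hence `A = R^[m+1]`). -/
theorem residualVariable_iff_variable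
    (R A : Type*) [CommRing R] [IsDomain R] [IsNoetherianRing R]
    [CommRing A] [Algebra R A]
    (hR : Nonempty (ℚ →+* R) ∨
      ∀ b c : R, b ^ 3 = c ^ 2 → ∃ a : R, a ^ 2 = b ∧ a ^ 3 = c)
    (m : ℕ) (hA : IsAffineFibration R A (m + 1))
    (hΩ : IsStablyFree A (KaehlerDifferential R A))
    (W : Fin m → A) :
    IsResidualVariable R A (m + 1) m W ↔
      (Nonempty (A ≃ₐ[↥(Algebra.adjoin R (Set.range W))]
          Polynomial ↥(Algebra.adjoin R (Set.range W))) ∧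
        Nonempty (A ≃ₐ[R] MvPolynomial (Fin (m + 1)) R)) := by
  have := hA.2.1
  exact residualVariable_iff_variable_general (hR.imp_right (.intro ‹_›)) hΩ W
end

section
/- Let R ⊆ B ⊆ A be Noetherian commutative rings such that A is an 𝔸ⁿ-fibration over R, B is an 𝔸ᵐ-fibration over R, and for every prime ideal P of R, A ⊗_R κ(P) is isomorphic, as a (B ⊗_R κ(P))-algebra, to a polynomial ring in n − m variables over B ⊗_R κ(P). Then Ω_R(A) is isomorphic as an A-module to Ω_B(A) ⊕ (Ω_R(B) ⊗_B A). -/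
open TensorProduct

/-!
Let `f : M → N` be a linear map over `A` with `M` finite and `N` projective. If `f` is injective on
the fibre at every maximal ideal `I`, then a retraction over `κ(I)` lifts to some `g : N → M`, so
`1 - g ∘ f` maps `M` into `I M` and the Cayley–Hamilton theorem turns `g` into a left inverse of `f`
up to a scalar congruent to `1` modulo `I`. Such scalars generate the unit ideal, so `f` splits.

This applies to the first map in `A ⊗[B] Ω[B⁄R] → Ω[A⁄R] → Ω[A⁄B] → 0`. For a prime `Q` of `A` over
`P` in `R`, the algebra `κ(P) ⊗[R] A` is formally smooth over `κ(P) ⊗[R] B`, so the corresponding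
map for these rings over `κ(P)` splits. Kähler differentials commute with base change, so the
original map splits after base change to `κ(P) ⊗[R] A` and is therefore injective over `κ(Q)`.
-/

section Splitting

variable {A M N : Type*} [CommRing A] [AddCommGroup M] [AddCommGroup N] [Module A M] [Module A N]

theorem eval_one_sub_one_mem_of_monic {I : Ideal A} {p : Polynomial A} (hp : p.Monic)
    (hI : ∀ k < p.natDegree, p.coeff k ∈ I) : p.eval 1 - 1 ∈ I := by
  rw [Polynomial.eval_eq_sum_range, Finset.sum_range_succ]
  simp only [one_pow, mul_one, hp.coeff_natDegree, add_sub_cancel_right]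
  exact I.sum_mem fun k hk => hI k (Finset.mem_range.1 hk)

theorem exists_mul_eq_smul_one_of_range_one_sub_le [Module.Finite A M] {I : Ideal A}
    {u : Module.End A M} (hu : (1 - u).range ≤ I • (⊤ : Submodule A M)) :
    ∃ r : A, r - 1 ∈ I ∧ ∃ v : Module.End A M, v * u = r • 1 := by
  obtain ⟨p, hp, -, hcoeff, hroot⟩ :=
    LinearMap.exists_monic_and_natDegree_eq_and_coeff_mem_pow_and_aeval_eq_zero A (1 - u) I hu
  refine ⟨p.eval 1, eval_one_sub_one_mem_of_monic hp fun k hk =>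
    Ideal.pow_le_self (Nat.sub_ne_zero_of_lt hk) (hcoeff k), ?_⟩
  -- Evaluating `p - p(1) = (X - 1) q` at `1 - u` gives `-p(1) = -u q(1 - u)`.
  obtain ⟨q, hq⟩ := Polynomial.X_sub_C_dvd_sub_C_eval (a := 1) (p := p)
  refine ⟨Polynomial.aeval (1 - u) q, ?_⟩
  have hfactor := congrArg (Polynomial.aeval (1 - u)) hq
  rw [mul_comm] at hfactor
  simpa [hroot, Algebra.algebraMap_eq_smul_one] using hfactor.symm

theorem exists_leftInverse_of_forall_isMaximal (f : M →ₗ[A] N)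
    (H : ∀ I : Ideal A, I.IsMaximal →
      ∃ r : A, r - 1 ∈ I ∧ ∃ g : N →ₗ[A] M, g ∘ₗ f = r • LinearMap.id) :
    ∃ g : N →ₗ[A] M, g ∘ₗ f = LinearMap.id := by
  let J : Ideal A := (LinearMap.range (LinearMap.lcomp A M f)).comap
    (LinearMap.toSpanSingleton A (M →ₗ[A] M) LinearMap.id)
  have hJ : J = ⊤ := by
    by_contra hne
    obtain ⟨I, hI, hJI⟩ := Ideal.exists_le_maximal J hne
    obtain ⟨r, hr, hrJ⟩ := H I hI
    exact hI.ne_top ((Ideal.eq_top_iff_one I).2 (by simpa using I.sub_mem (hJI hrJ) hr))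
  obtain ⟨g, hg⟩ := (Ideal.eq_top_iff_one J).1 hJ
  exact ⟨g, by simpa [LinearMap.lcomp_apply'] using hg⟩

theorem ker_mk_residueField (I : Ideal A) [I.IsMaximal] :
    LinearMap.ker (TensorProduct.mk A I.ResidueField M 1) = I • ⊤ := by
  let e : (A ⧸ I) ≃ₗ[A] I.ResidueField := .ofBijective
    (IsScalarTower.toAlgHom A (A ⧸ I) I.ResidueField).toLinearMap
    I.bijective_algebraMap_quotient_residueField
  have he : TensorProduct.mk A I.ResidueField M 1 =
      (e.rTensor M).toLinearMap ∘ₗ TensorProduct.mk A (A ⧸ I) M 1 := by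
    ext x
    exact congrArg (· ⊗ₜ[A] x) (map_one (algebraMap (A ⧸ I) I.ResidueField)).symm
  rw [he, LinearEquiv.ker_comp, LinearMap.ker_tensorProductMk]

theorem exists_leftInverse_of_lTensor_residueField_injective [Module.Finite A M]
    [Module.Projective A N] (f : M →ₗ[A] N)
    (hf : ∀ (I : Ideal A) [I.IsMaximal], Function.Injective (f.lTensor I.ResidueField)) :
    ∃ g : N →ₗ[A] M, g ∘ₗ f = LinearMap.id := by
  refine exists_leftInverse_of_forall_isMaximal f fun I _ => ?_
  obtain ⟨ρ, hρ⟩ := (f.baseChange I.ResidueField).exists_leftInverse_of_injective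
    (LinearMap.ker_eq_bot.2 (hf I))
  obtain ⟨g, hg⟩ := Module.projective_lifting_property (TensorProduct.mk A I.ResidueField M 1)
    (ρ.restrictScalars A ∘ₗ TensorProduct.mk A I.ResidueField N 1)
    (TensorProduct.mk_surjective A M _ I.algebraMap_residueField_surjective)
  have hgf : (1 - g ∘ₗ f).range ≤ I • (⊤ : Submodule A M) := by
    rintro _ ⟨x, rfl⟩
    have hx : (1 : I.ResidueField) ⊗ₜ[A] g (f x) = 1 ⊗ₜ x :=
      (LinearMap.congr_fun hg (f x)).trans (LinearMap.congr_fun hρ (1 ⊗ₜ x))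
    rw [← ker_mk_residueField, LinearMap.mem_ker]
    simp [TensorProduct.tmul_sub, hx]
  obtain ⟨r, hr, v, hv⟩ := exists_mul_eq_smul_one_of_range_one_sub_le hgf
  exact ⟨r, hr, v ∘ₗ g, hv⟩

theorem lTensor_injective_of_baseChange_leftInverse {A' K : Type*} [CommRing A'] [CommRing K]
    [Algebra A A'] [Algebra A K] [Algebra A' K] [IsScalarTower A A' K] (f : M →ₗ[A] N)
    {g : A' ⊗[A] N →ₗ[A'] A' ⊗[A] M} (hg : g ∘ₗ f.baseChange A' = LinearMap.id) :
    Function.Injective (f.lTensor K) := by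
  have hinj : Function.Injective ((f.baseChange A').lTensor K) :=
    Function.LeftInverse.injective (g := g.lTensor K) fun x => by
      rw [← LinearMap.comp_apply, ← LinearMap.lTensor_comp, hg, LinearMap.lTensor_id,
        LinearMap.id_apply]
  let eM := AlgebraTensorModule.cancelBaseChange A A' A' K M
  let eN := AlgebraTensorModule.cancelBaseChange A A' A' K N
  have hcomp : f.lTensor K = eN ∘ (f.baseChange A').lTensor K ∘ eM.symm := by
    ext x
    induction x with
    | zero => simp
    | add x y hx hy => simp_all
    | tmul a m => simp [eM, eN]
  rw [hcomp]
  exact eN.injective.comp (hinj.comp eM.symm.injective)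

end Splitting

section Kaehler

open KaehlerDifferential

theorem exists_leftInverse_mapBaseChange (R B A : Type*) [CommRing R] [CommRing B] [CommRing A]
    [Algebra R B] [Algebra R A] [Algebra B A] [IsScalarTower R B A] [Algebra.FormallySmooth B A] :
    ∃ l : Ω[A⁄R] →ₗ[A] A ⊗[B] Ω[B⁄R], l ∘ₗ mapBaseChange R B A = LinearMap.id := by
  have hinj : Function.Injective (mapBaseChange R B A) := by
    rw [injective_iff_map_eq_zero]
    intro x hx
    obtain ⟨y, rfl⟩ := (Algebra.H1Cotangent.exact_δ_mapBaseChange R B A x).mp hx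
    rw [Subsingleton.elim y 0, map_zero]
  have hsection : ∃ s : Ω[A⁄B] →ₗ[A] Ω[A⁄R], KaehlerDifferential.map R B A A ∘ₗ s = .id :=
    Module.projective_lifting_property _ _ (map_surjective R B A)
  exact (((exact_mapBaseChange_map R B A).split_tfae'.out 0 1 rfl rfl).mp ⟨hinj, hsection⟩).2

section BaseChange

variable (R B A R' B' A' : Type*) [CommRing R] [CommRing B] [CommRing A]
  [CommRing R'] [CommRing B'] [CommRing A']
  [Algebra R B] [Algebra R A] [Algebra B A] [IsScalarTower R B A]
  [Algebra R' B'] [Algebra R' A'] [Algebra B' A'] [IsScalarTower R' B' A']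
  [Algebra R R'] [Algebra R B'] [Algebra B B'] [Algebra R A'] [Algebra B A'] [Algebra A A']
  [IsScalarTower R R' B'] [IsScalarTower R B B'] [IsScalarTower R R' A'] [IsScalarTower R A A']
  [IsScalarTower B A A'] [IsScalarTower B B' A']

theorem map_comp_map_eq_map_comp_tensorKaehlerEquiv [Algebra.IsPushout R R' B B'] :
    (KaehlerDifferential.map R R' A A').restrictScalars B ∘ₗ KaehlerDifferential.map R R B A =
      (KaehlerDifferential.map R' R' B' A').restrictScalars B ∘ₗ
        (tensorKaehlerEquiv R R' B B').toLinearMap.restrictScalars B ∘ₗ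
          TensorProduct.mk B B' Ω[B⁄R] 1 :=
  LinearMap.ext_on_range (span_range_derivation R B) fun b => by
    simp [map_D, ← IsScalarTower.algebraMap_apply]

theorem exists_leftInverse_baseChange_mapBaseChange [Algebra.IsPushout R R' B B']
    [Algebra.FormallySmooth B' A'] :
    ∃ l : A' ⊗[A] Ω[A⁄R] →ₗ[A'] A' ⊗[A] (A ⊗[B] Ω[B⁄R]),
      l ∘ₗ (mapBaseChange R B A).baseChange A' = LinearMap.id := by
  obtain ⟨l, hl⟩ := exists_leftInverse_mapBaseChange R' B' A'
  let e : A' ⊗[A] (A ⊗[B] Ω[B⁄R]) ≃ₗ[A'] A' ⊗[B'] Ω[B'⁄R'] :=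
    AlgebraTensorModule.cancelBaseChange B A A' A' Ω[B⁄R] ≪≫ₗ
      (AlgebraTensorModule.cancelBaseChange B B' A' A' Ω[B⁄R]).symm ≪≫ₗ
      AlgebraTensorModule.congr (.refl A' A') (tensorKaehlerEquiv R R' B B')
  have he : (KaehlerDifferential.map R R' A A').liftBaseChange A' ∘ₗ
      (mapBaseChange R B A).baseChange A' = mapBaseChange R' B' A' ∘ₗ e.toLinearMap := by
    ext b
    simpa [e] using
      LinearMap.congr_fun (map_comp_map_eq_map_comp_tensorKaehlerEquiv R B A R' B' A') b
  refine ⟨e.symm.toLinearMap ∘ₗ l ∘ₗ (KaehlerDifferential.map R R' A A').liftBaseChange A', ?_⟩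
  rw [LinearMap.comp_assoc, LinearMap.comp_assoc, he, ← LinearMap.comp_assoc _ _ l, hl,
    LinearMap.id_comp, LinearEquiv.symm_comp]

end BaseChange

variable (R B A : Type*) [CommRing R] [CommRing B] [CommRing A]
  [Algebra R B] [Algebra R A] [Algebra B A] [IsScalarTower R B A]

attribute [local instance] Algebra.TensorProduct.rightAlgebra in
theorem lTensor_residueField_mapBaseChange_injective (P : Ideal R) [P.IsPrime] (Q : Ideal A)
    [Q.IsPrime] [Q.LiesOver P]
    (hfib : (Algebra.TensorProduct.map (AlgHom.id R P.ResidueField)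
      (IsScalarTower.toAlgHom R B A)).toRingHom.FormallySmooth) :
    Function.Injective ((mapBaseChange R B A).lTensor Q.ResidueField) := by
  let φ := Algebra.TensorProduct.map (AlgHom.id R P.ResidueField) (IsScalarTower.toAlgHom R B A)
  let : Algebra (P.Fiber B) (P.Fiber A) := φ.toRingHom.toAlgebra
  have : Algebra.FormallySmooth (P.Fiber B) (P.Fiber A) := hfib
  have : IsScalarTower P.ResidueField (P.Fiber B) (P.Fiber A) :=
    IsScalarTower.of_algebraMap_eq (R := P.ResidueField) (S := P.Fiber B) (A := P.Fiber A)
      fun x => by simp [RingHom.algebraMap_toAlgebra, φ]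
  let : Algebra B (P.Fiber A) := ((algebraMap A (P.Fiber A)).comp (algebraMap B A)).toAlgebra
  have : IsScalarTower B A (P.Fiber A) := .of_algebraMap_eq' rfl
  have : IsScalarTower B (P.Fiber B) (P.Fiber A) := .of_algebraMap_eq fun x => by
    simp [RingHom.algebraMap_toAlgebra, φ]
  let ψ : P.Fiber A →ₐ[R] Q.ResidueField := Algebra.TensorProduct.lift
    (Ideal.ResidueField.mapₐ P Q (Algebra.ofId R A) (Q.over_def P))
    (IsScalarTower.toAlgHom R A Q.ResidueField) fun _ _ => Commute.all _ _
  let : Algebra (P.Fiber A) Q.ResidueField := ψ.toRingHom.toAlgebra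
  have : IsScalarTower A (P.Fiber A) Q.ResidueField := .of_algebraMap_eq fun x => by
    simp [RingHom.algebraMap_toAlgebra, ψ]
  obtain ⟨l, hl⟩ :=
    exists_leftInverse_baseChange_mapBaseChange R B A P.ResidueField (P.Fiber B) (P.Fiber A)
  exact lTensor_injective_of_baseChange_leftInverse _ hl

theorem kaehler_decomposition_intermediate_general [Module.Finite B Ω[B⁄R]]
    [Module.Projective A Ω[A⁄R]]
    (hfib : ∀ (P : Ideal R) [P.IsPrime],
      (Algebra.TensorProduct.map (AlgHom.id R P.ResidueField)
        (IsScalarTower.toAlgHom R B A)).toRingHom.FormallySmooth) :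
    Nonempty (Ω[A⁄R] ≃ₗ[A] Ω[A⁄B] × (A ⊗[B] Ω[B⁄R])) := by
  obtain ⟨l, hl⟩ := exists_leftInverse_of_lTensor_residueField_injective (mapBaseChange R B A)
    fun Q _ => lTensor_residueField_mapBaseChange_injective R B A (Q.under R) Q (hfib _)
  exact ⟨((exact_mapBaseChange_map R B A).splitInjectiveEquiv (map_surjective R B A)
    ⟨l, hl⟩).1.trans (LinearEquiv.prodComm A _ _)⟩

end Kaehler

theorem FibersPolynomialOver.formallySmooth {R B A : Type*} [CommRing R] [CommRing B] [CommRing A]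
    [Algebra R B] [Algebra R A] [Algebra B A] [IsScalarTower R B A] {d : ℕ}
    (h : FibersPolynomialOver R B A d) (P : Ideal R) [hP : P.IsPrime] :
    (Algebra.TensorProduct.map (AlgHom.id R P.ResidueField)
      (IsScalarTower.toAlgHom R B A)).toRingHom.FormallySmooth := by
  obtain ⟨e⟩ := h P hP
  algebraize_only [(Algebra.TensorProduct.map (AlgHom.id R P.ResidueField)
    (IsScalarTower.toAlgHom R B A)).toRingHom]
  exact Algebra.FormallySmooth.of_equiv e.symm

theorem IsAffineFibration.smooth {R A : Type*} [CommRing R] [CommRing A] [IsNoetherianRing R]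
    [Algebra R A] {n : ℕ} (h : IsAffineFibration R A n) : Algebra.Smooth R A := by
  obtain ⟨hfinite, hflat, hpoly⟩ := h
  have : Algebra.FinitePresentation R A := Algebra.FinitePresentation.of_finiteType.1 hfinite
  refine Algebra.Smooth.of_formallySmooth_fiber fun P hP => ?_
  obtain ⟨e⟩ := hpoly P hP
  exact Algebra.FormallySmooth.of_equiv e.symm

/-- Let `R ⊆ B ⊆ A` be Noetherian rings such that `A` is an `𝔸ⁿ`-fibration over `R`,
`B` an `𝔸ᵐ`-fibration over `R`, and `A ⊗_R κ(P) = (B ⊗_R κ(P))^[n-m]` for every prime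
ideal `P` of `R`.  Then `Ω_R(A) ≅ Ω_B(A) ⊕ (Ω_R(B) ⊗_B A)` as `A`-modules. -/
theorem kaehler_decomposition_intermediate
    (R B A : Type*) [CommRing R] [CommRing B] [CommRing A]
    [IsNoetherianRing R] [IsNoetherianRing B] [IsNoetherianRing A]
    [Algebra R B] [Algebra R A] [Algebra B A] [IsScalarTower R B A]
    (hRB : Function.Injective (algebraMap R B))
    (hBA : Function.Injective (algebraMap B A))
    (n m : ℕ)
    (hA : IsAffineFibration R A n) (hB : IsAffineFibration R B m)
    (hfib : FibersPolynomialOver R B A (n - m)) :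
    Nonempty ((KaehlerDifferential R A) ≃ₗ[A]
      ((KaehlerDifferential B A) × (A ⊗[B] (KaehlerDifferential R B)))) := by
  have : Algebra.Smooth R A := hA.smooth
  have : Algebra.FiniteType R B := hB.1
  exact kaehler_decomposition_intermediate_general R B A fun P _ => hfib.formallySmooth P
end
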